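/- arXiv:2305.13730 — 3 statements merged into one kernel-verified Lean document; each statement's English description precedes it below -/
import Mathlib

section
/- Let r ≥ 4 be an integer. For every ε > 0 there exists a constant c = c(ε) > 0 such that for every odd prime power q and every subset E ⊆ (M_2(𝔽_q))^r with #E > c·q^{3r+3+ε}, one has Δ(E) = M_2(𝔽_q), i.e. every matrix of M_2(𝔽_q) occurs as a distance between two points of E. -/
open scoped BigOperators

/-!
Let `ψ` be a primitive additive character of `𝔽_q`. If `T` is not a distance of `E`, then
`∑ A, ψ (tr (A * (d(X, Y) - T))) = 0` for all `X, Y ∈ E`. Summing over `X` and `Y` and isolating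
`A = 0` gives `#E ^ 2 ≤ ∑ A ≠ 0, ‖S A‖`, where `S A = ∑ X Y ∈ E, ψ (Q_A (X - Y))` for the quadratic
form `Q_A X = tr (A * ‖X‖)`.

Cauchy–Schwarz and orthogonality give `‖S A‖ ^ 2 ≤ #E ^ 2 * q ^ (4 * r) * #(rad Q_A)`, and `rad Q_A`
consists of the tuples whose entries all anticommute with `A`. The polarised Cayley–Hamilton
identity shows that the matrices anticommuting with `A ≠ 0` form a space of dimension at most `1`
if `tr A ≠ 0`, and at most `2` for the fewer than `q ^ 3` nonzero `A` of trace zero. Hence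
`#E ≤ q ^ 3 * q ^ (3 * r) + q ^ 4 * q ^ (5 * r / 2)`.
-/

namespace Falconer

open Finset Matrix

section SecondMoment

theorem sq_norm_sum_sum_le {𝕜 α β : Type*} [RCLike 𝕜] [Fintype α] (K : α → β → 𝕜)
    (s : Finset α) (t : Finset β) :
    ‖∑ x ∈ s, ∑ y ∈ t, K x y‖ ^ 2 ≤
      #s * ∑ y ∈ t, ∑ z ∈ t, ‖∑ x, K x y * starRingEnd 𝕜 (K x z)‖ := by
  have expand : ((∑ x, ‖∑ y ∈ t, K x y‖ ^ 2 : ℝ) : 𝕜) =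
      ∑ y ∈ t, ∑ z ∈ t, ∑ x, K x y * starRingEnd 𝕜 (K x z) := by
    push_cast
    simp_rw [← RCLike.mul_conj, map_sum, sum_mul_sum]
    rw [sum_comm]
    exact sum_congr rfl fun y _ ↦ sum_comm
  calc ‖∑ x ∈ s, ∑ y ∈ t, K x y‖ ^ 2
      ≤ (∑ x ∈ s, ‖∑ y ∈ t, K x y‖) ^ 2 := by gcongr; exact norm_sum_le _ _
    _ ≤ #s * ∑ x ∈ s, ‖∑ y ∈ t, K x y‖ ^ 2 := sq_sum_le_card_mul_sum_sq
    _ ≤ #s * ∑ x, ‖∑ y ∈ t, K x y‖ ^ 2 := by gcongr; exact subset_univ s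
    _ = #s * ‖∑ y ∈ t, ∑ z ∈ t, ∑ x, K x y * starRingEnd 𝕜 (K x z)‖ := by
        rw [← expand, RCLike.norm_ofReal, abs_of_nonneg (by positivity)]
    _ ≤ #s * ∑ y ∈ t, ∑ z ∈ t, ‖∑ x, K x y * starRingEnd 𝕜 (K x z)‖ := by
        gcongr
        exact (norm_sum_le _ _).trans (sum_le_sum fun y _ ↦ norm_sum_le _ _)

open Classical in
theorem card_filter_sub_mem_le {G : Type*} [AddGroup G] [Finite G] (H : AddSubgroup G)
    (s : Finset G) (y : G) : #{z ∈ s | y - z ∈ H} ≤ Nat.card H := by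
  rw [← SetLike.coe_sort_coe, Nat.card_coe_set_eq, ← Set.ncard_coe_finset]
  exact Set.ncard_le_ncard_of_injOn (y - ·) (fun z hz ↦ by simpa using (mem_filter.1 hz).2)
    (sub_right_injective.injOn)

end SecondMoment

section QuadraticForm

variable {R V : Type*} [CommRing R] [AddCommGroup V] [Module R V] [Fintype V]

open Classical in
theorem sum_addChar_linearMap {ψ : AddChar R ℂ} (hψ : ψ.IsPrimitive) (f : V →ₗ[R] R) :
    ∑ x, ψ (f x) = if f = 0 then (Fintype.card V : ℂ) else 0 := by
  split_ifs with hf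
  · simp [hf]
  obtain ⟨x, hx⟩ := DFunLike.ne_iff.1 hf
  obtain ⟨t, ht⟩ := AddChar.ne_one_iff.1 (hψ hx)
  refine AddChar.sum_eq_zero_iff_ne_zero (ψ := ψ.compAddMonoidHom f.toAddMonoidHom) |>.2 ?_
  exact AddChar.ne_zero_iff.2 ⟨t • x, by simpa [mul_comm t] using ht⟩

variable [Finite R]

open Classical in
theorem norm_sum_addChar_quadraticForm_mul_conj {ψ : AddChar R ℂ} (hψ : ψ.IsPrimitive)
    (Q : QuadraticForm R V) (y z : V) :
    ‖∑ x, ψ (Q (x - y)) * starRingEnd ℂ (ψ (Q (x - z)))‖ =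
      if y - z ∈ LinearMap.ker Q.polarBilin then (Fintype.card V : ℝ) else 0 := by
  have phase (x : V) : ψ (Q (x - y)) * starRingEnd ℂ (ψ (Q (x - z))) =
      ψ (Q y - Q z) * ψ ((-Q.polarBilin (y - z)) x) := by
    rw [← AddChar.map_neg_eq_conj, ← AddChar.map_add_eq_mul, ← AddChar.map_add_eq_mul]
    congr 1
    have map_sub_eq (w : V) : Q (x - w) = Q x + Q w - QuadraticMap.polar Q w x := by
      rw [sub_eq_add_neg, QuadraticMap.map_add Q, QuadraticMap.map_neg,
        QuadraticMap.polar_neg_right, QuadraticMap.polar_comm, sub_eq_add_neg]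
    simp only [map_sub_eq, map_sub, LinearMap.neg_apply, LinearMap.sub_apply,
      QuadraticMap.polarBilin_apply_apply]
    ring
  simp_rw [phase, ← mul_sum, sum_addChar_linearMap hψ, norm_mul, AddChar.norm_apply, one_mul,
    neg_eq_zero, LinearMap.mem_ker]
  split_ifs <;> simp

theorem sq_norm_sum_addChar_quadraticForm_sub_le {ψ : AddChar R ℂ} (hψ : ψ.IsPrimitive)
    (Q : QuadraticForm R V) (E : Finset V) :
    ‖∑ x ∈ E, ∑ y ∈ E, ψ (Q (x - y))‖ ^ 2 ≤
      (#E : ℝ) ^ 2 * (Fintype.card V * Nat.card (LinearMap.ker Q.polarBilin)) := by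
  classical
  calc ‖∑ x ∈ E, ∑ y ∈ E, ψ (Q (x - y))‖ ^ 2
      ≤ #E * ∑ y ∈ E, ∑ z ∈ E, ‖∑ x, ψ (Q (x - y)) * starRingEnd ℂ (ψ (Q (x - z)))‖ :=
        sq_norm_sum_sum_le _ E E
    _ = #E * ∑ y ∈ E, #{z ∈ E | y - z ∈ LinearMap.ker Q.polarBilin} * (Fintype.card V : ℝ) := by
        simp_rw [norm_sum_addChar_quadraticForm_mul_conj hψ, ← sum_filter, sum_const, nsmul_eq_mul]
    _ ≤ #E * ∑ _y ∈ E, Nat.card (LinearMap.ker Q.polarBilin) * (Fintype.card V : ℝ) := by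
        gcongr
        exact card_filter_sub_mem_le (LinearMap.ker Q.polarBilin).toAddSubgroup E _
    _ = (#E : ℝ) ^ 2 * (Fintype.card V * Nat.card (LinearMap.ker Q.polarBilin)) := by
        rw [sum_const, nsmul_eq_mul]
        ring

end QuadraticForm

theorem natCard_ker_polarBilin_pi {R ι P : Type*} {M : ι → Type*} [CommRing R] [Fintype ι]
    [∀ i, AddCommGroup (M i)] [∀ i, Module R (M i)] [AddCommGroup P] [Module R P]
    (Q : ∀ i, QuadraticMap R (M i) P) :
    Nat.card (LinearMap.ker (QuadraticMap.pi Q).polarBilin) =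
      ∏ i, Nat.card (LinearMap.ker (Q i).polarBilin) := by
  classical
  have mem_iff (x : ∀ i, M i) : x ∈ LinearMap.ker (QuadraticMap.pi Q).polarBilin ↔
      ∀ i, x i ∈ LinearMap.ker (Q i).polarBilin := by
    simp only [LinearMap.mem_ker, LinearMap.ext_iff, QuadraticMap.polarBilin_apply_apply,
      QuadraticMap.Ring.polar_pi, LinearMap.zero_apply]
    refine ⟨fun h i y ↦ ?_, fun h y ↦ sum_eq_zero fun i _ ↦ h i (y i)⟩
    rw [← h (Pi.single i y), sum_eq_single i (fun j _ hj ↦ by simp [hj]) (by simp),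
      Pi.single_eq_same]
  rw [← Nat.card_pi]
  exact Nat.card_congr ((Equiv.subtypeEquivRight mem_iff).trans Equiv.subtypePiEquivPi)

section MatrixForms

variable {R n : Type*} [CommRing R] [Fintype n]

/-- The submodule of the elements `X` of an algebra with `A * X + X * A = 0`. -/
def anticommutant (R : Type*) {S : Type*} [CommRing R] [Ring S] [Algebra R S] (A : S) :
    Submodule R S :=
  LinearMap.ker (LinearMap.mulLeft R A + LinearMap.mulRight R A)

theorem mem_anticommutant {S : Type*} [Ring S] [Algebra R S] {A X : S} :
    X ∈ anticommutant R A ↔ A * X + X * A = 0 := Iff.rfl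

variable [DecidableEq n]

/-- The quadratic form `X ↦ tr (A * X ^ 2)` on square matrices. -/
def traceSqForm (A : Matrix n n R) : QuadraticForm R (Matrix n n R) :=
  LinearMap.BilinMap.toQuadraticMap
    ((LinearMap.mul R (Matrix n n R)).compr₂ (traceLinearMap n R R ∘ₗ LinearMap.mulLeft R A))

@[simp]
theorem traceSqForm_apply (A X : Matrix n n R) : traceSqForm A X = trace (A * X ^ 2) := by
  simp [traceSqForm, pow_two]

theorem polar_traceSqForm (A X Y : Matrix n n R) :
    QuadraticMap.polar (traceSqForm A) X Y = trace ((A * X + X * A) * Y) := by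
  calc QuadraticMap.polar (traceSqForm A) X Y = trace (A * (X * Y)) + trace (A * (Y * X)) :=
        LinearMap.BilinMap.polar_toQuadraticMap ..
    _ = trace ((A * X + X * A) * Y) := by
        rw [← mul_assoc A Y, trace_mul_cycle A Y X, ← mul_assoc, add_mul, trace_add]

theorem ker_polarBilin_traceSqForm (A : Matrix n n R) :
    LinearMap.ker (traceSqForm A).polarBilin = anticommutant R A := by
  ext X
  simp [LinearMap.mem_ker, mem_anticommutant, LinearMap.ext_iff, polar_traceSqForm,
    ext_iff_trace_mul_right (A := A * X + X * A)]

/-- The quadratic form `X ↦ tr (A * ‖X‖)` on tuples of square matrices, where `‖X‖` is the sum of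
the squares of the entries of `X`. -/
def distForm (ι : Type*) [Fintype ι] (A : Matrix n n R) : QuadraticForm R (ι → Matrix n n R) :=
  QuadraticMap.pi fun _ ↦ traceSqForm A

theorem distForm_apply {ι : Type*} [Fintype ι] (A : Matrix n n R) (X : ι → Matrix n n R) :
    distForm ι A X = trace (A * ∑ i, X i ^ 2) := by
  simp [distForm, mul_sum, trace_sum]

theorem natCard_ker_polarBilin_distForm (ι : Type*) [Fintype ι] (A : Matrix n n R) :
    Nat.card (LinearMap.ker (distForm ι A).polarBilin) =
      Nat.card (anticommutant R A) ^ Fintype.card ι := by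
  rw [distForm, natCard_ker_polarBilin_pi, ker_polarBilin_traceSqForm, prod_const, card_univ]

end MatrixForms

section DistanceSets

variable {R n : Type*} [CommRing R] [Fintype R] [Fintype n] [DecidableEq n]
  {ψ : AddChar R ℂ}

theorem sum_addChar_trace_mul_eq_zero (hψ : ψ.IsPrimitive) {B : Matrix n n R} (hB : B ≠ 0) :
    ∑ A, ψ (trace (A * B)) = 0 := by
  have hf : traceLinearMap n R R ∘ₗ LinearMap.mulRight R B ≠ 0 := fun h ↦
    hB <| ext_iff_trace_mul_left.2 fun A ↦ by simpa using LinearMap.congr_fun h A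
  simpa [hf] using sum_addChar_linearMap hψ (traceLinearMap n R R ∘ₗ LinearMap.mulRight R B)

theorem card_le_sum_norm_of_forall_ne [DecidableEq R] {α : Type*} (hψ : ψ.IsPrimitive)
    {s : Finset α} {f : α → Matrix n n R} {T : Matrix n n R} (hT : ∀ x ∈ s, f x ≠ T) :
    (#s : ℝ) ≤ ∑ A ∈ univ.erase 0, ‖∑ x ∈ s, ψ (trace (A * f x))‖ := by
  have vanish : ∑ A, ∑ x ∈ s, ψ (trace (A * (f x - T))) = 0 := by
    rw [sum_comm]
    exact sum_eq_zero fun x hx ↦ sum_addChar_trace_mul_eq_zero hψ (sub_ne_zero.2 (hT x hx))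
  have norm_eq (A : Matrix n n R) :
      ‖∑ x ∈ s, ψ (trace (A * (f x - T)))‖ = ‖∑ x ∈ s, ψ (trace (A * f x))‖ := by
    simp_rw [mul_sub, trace_sub, sub_eq_add_neg, AddChar.map_add_eq_mul, ← sum_mul, norm_mul,
      AddChar.norm_apply, mul_one]
  rw [← add_sum_erase _ _ (mem_univ 0)] at vanish
  calc (#s : ℝ) = ‖∑ x ∈ s, ψ (trace (0 * (f x - T)))‖ := by simp
    _ = ‖∑ A ∈ univ.erase 0, ∑ x ∈ s, ψ (trace (A * (f x - T)))‖ := by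
        rw [eq_neg_of_add_eq_zero_left vanish, norm_neg]
    _ ≤ ∑ A ∈ univ.erase 0, ‖∑ x ∈ s, ψ (trace (A * f x))‖ := by
        simp_rw [← norm_eq]
        exact norm_sum_le _ _

theorem norm_sum_addChar_dist_le {ι : Type*} [Fintype ι] (hψ : ψ.IsPrimitive) (A : Matrix n n R)
    (E : Finset (ι → Matrix n n R)) :
    ‖∑ X ∈ E, ∑ Y ∈ E, ψ (trace (A * ∑ i, (X i - Y i) ^ 2))‖ ≤
      #E * √((Fintype.card (Matrix n n R) * Nat.card (anticommutant R A)) ^ Fintype.card ι) := by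
  classical
  have second_moment := sq_norm_sum_addChar_quadraticForm_sub_le hψ (distForm ι A) E
  simp only [distForm_apply, Pi.sub_apply, natCard_ker_polarBilin_distForm, Fintype.card_fun,
    Nat.cast_pow, ← mul_pow] at second_moment
  rw [← Real.sqrt_sq (Nat.cast_nonneg #E), ← Real.sqrt_mul (sq_nonneg _)]
  exact Real.le_sqrt_of_sq_le second_moment

theorem card_le_sum_sqrt_of_forall_dist_ne [DecidableEq R] {ι : Type*} [Fintype ι]
    (hψ : ψ.IsPrimitive) {E : Finset (ι → Matrix n n R)} {T : Matrix n n R}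
    (hT : ∀ X ∈ E, ∀ Y ∈ E, ∑ i, (X i - Y i) ^ 2 ≠ T) :
    (#E : ℝ) ≤ ∑ A ∈ univ.erase (0 : Matrix n n R),
      √((Fintype.card (Matrix n n R) * Nat.card (anticommutant R A)) ^ Fintype.card ι) := by
  obtain rfl | hE := E.eq_empty_or_nonempty
  · exact Nat.cast_zero.trans_le (sum_nonneg fun _ _ ↦ Real.sqrt_nonneg _)
  have hpairs := card_le_sum_norm_of_forall_ne hψ (s := E ×ˢ E)
    (f := fun p ↦ ∑ i, (p.1 i - p.2 i) ^ 2) fun p hp ↦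
      hT _ (mem_product.1 hp).1 _ (mem_product.1 hp).2
  simp only [card_product, Nat.cast_mul, sum_product] at hpairs
  refine le_of_mul_le_mul_left (hpairs.trans ?_) (Nat.cast_pos.2 hE.card_pos)
  rw [mul_sum]
  exact sum_le_sum fun A _ ↦ norm_sum_addChar_dist_le hψ A E

end DistanceSets

section TwoByTwo

theorem mul_add_mul_fin_two {R : Type*} [CommRing R] (A X : Matrix (Fin 2) (Fin 2) R) :
    A * X + X * A =
      trace A • X + trace X • A + (trace (A * X) - trace A * trace X) • (1 : Matrix _ _ R) := by
  ext i j
  fin_cases i <;> fin_cases j <;>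
    simp [mul_apply, trace_fin_two] <;> ring

theorem trace_mul_eq_zero_of_mem_anticommutant {R n : Type*} [CommRing R] [NoZeroDivisors R]
    [Fintype n] [DecidableEq n] (h2 : (2 : R) ≠ 0) {A X : Matrix n n R}
    (hX : X ∈ anticommutant R A) : trace (A * X) = 0 := by
  have htr := congrArg trace (mem_anticommutant.1 hX)
  rw [trace_add, trace_mul_comm X, ← two_mul, trace_zero] at htr
  exact (mul_eq_zero.1 htr).resolve_left h2

theorem trace_smul_of_mem_anticommutant {R : Type*} [CommRing R] [NoZeroDivisors R]
    (h2 : (2 : R) ≠ 0) {A X : Matrix (Fin 2) (Fin 2) R} (hX : X ∈ anticommutant R A) :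
    trace A • X = trace X • (trace A • 1 - A) := by
  have hCH := mul_add_mul_fin_two A X
  rw [mem_anticommutant.1 hX, trace_mul_eq_zero_of_mem_anticommutant h2 hX] at hCH
  linear_combination (norm := module) -hCH

variable {F : Type*} [Field F] {A : Matrix (Fin 2) (Fin 2) F}

theorem finrank_anticommutant_le_one (h2 : (2 : F) ≠ 0) (hA : trace A ≠ 0) :
    Module.finrank F (anticommutant F A) ≤ 1 := by
  have hle : anticommutant F A ≤ F ∙ (trace A • 1 - A) := fun X hX ↦
    Submodule.mem_span_singleton.2 ⟨(trace A)⁻¹ * trace X, by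
      rw [mul_smul, ← trace_smul_of_mem_anticommutant h2 hX, inv_smul_smul₀ hA]⟩
  simpa using (Submodule.finrank_mono hle).trans (finrank_span_le_card _)

theorem finrank_ker_trace_fin_two :
    Module.finrank F (LinearMap.ker (traceLinearMap (Fin 2) F F)) = 3 := by
  have hne : traceLinearMap (Fin 2) F F ≠ 0 := fun h ↦ by
    simpa using LinearMap.congr_fun h (single 0 0 1)
  have := Module.Dual.finrank_ker_add_one_of_ne_zero hne
  rw [Module.finrank_matrix] at this
  simpa using this

theorem finrank_anticommutant_le_two (h2 : (2 : F) ≠ 0) (htr : trace A = 0) (hA : A ≠ 0) :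
    Module.finrank F (anticommutant F A) ≤ 2 := by
  have hle : anticommutant F A ≤ LinearMap.ker (traceLinearMap (Fin 2) F F) := fun X hX ↦ by
    have hsmul := trace_smul_of_mem_anticommutant h2 hX
    simpa [htr, hA] using hsmul
  have hne : anticommutant F A ≠ LinearMap.ker (traceLinearMap (Fin 2) F F) := fun heq ↦ hA <| by
    refine ext_iff_trace_mul_right.2 fun Y ↦ ?_
    -- `A` is trace-orthogonal to scalar matrices, and `2 • Y` is scalar up to trace zero.
    have hmem : (2 : F) • Y - trace Y • (1 : Matrix (Fin 2) (Fin 2) F) ∈ anticommutant F A := by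
      rw [heq]
      simp [mul_comm]
    have := trace_mul_eq_zero_of_mem_anticommutant h2 hmem
    simpa [mul_sub, htr, h2] using this
  have hlt := Submodule.finrank_lt_finrank_of_lt (lt_of_le_of_ne hle hne)
  rw [finrank_ker_trace_fin_two] at hlt
  omega

theorem card_filter_trace_eq_zero_fin_two [Fintype F] [DecidableEq F] :
    #{A : Matrix (Fin 2) (Fin 2) F | trace A = 0} = Fintype.card F ^ 3 := by
  calc #{A : Matrix (Fin 2) (Fin 2) F | trace A = 0}
      = Nat.card (LinearMap.ker (traceLinearMap (Fin 2) F F)) := by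
        rw [← Fintype.card_subtype, ← Nat.card_eq_fintype_card]
        rfl
    _ = Fintype.card F ^ 3 := by
        rw [Module.natCard_eq_pow_finrank (K := F), finrank_ker_trace_fin_two,
          Nat.card_eq_fintype_card]

theorem card_matrix_fin_two [Fintype F] :
    Fintype.card (Matrix (Fin 2) (Fin 2) F) = Fintype.card F ^ 4 := by
  rw [Module.card_eq_pow_finrank (K := F), Module.finrank_matrix]
  simp

theorem sqrt_card_mul_natCard_anticommutant_le [Fintype F] {k : ℕ}
    (hk : Module.finrank F (anticommutant F A) ≤ k) (r : ℕ) :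
    √((Fintype.card (Matrix (Fin 2) (Fin 2) F) * Nat.card (anticommutant F A)) ^ r) ≤
      (Fintype.card F : ℝ) ^ ((4 + k : ℝ) / 2 * r) := by
  have hq : (1 : ℝ) ≤ Fintype.card F := Nat.one_le_cast.2 Fintype.card_pos
  have hcard : (Nat.card (anticommutant F A) : ℝ) ≤ (Fintype.card F : ℝ) ^ k := by
    rw [Module.natCard_eq_pow_finrank (K := F), Nat.card_eq_fintype_card, Nat.cast_pow]
    exact pow_le_pow_right₀ hq hk
  calc √((Fintype.card (Matrix (Fin 2) (Fin 2) F) * Nat.card (anticommutant F A)) ^ r)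
      ≤ √(((Fintype.card F : ℝ) ^ 4 * (Fintype.card F : ℝ) ^ k) ^ r) := by
        rw [card_matrix_fin_two, Nat.cast_pow]
        gcongr
    _ = (Fintype.card F : ℝ) ^ ((4 + k : ℝ) / 2 * r) := by
        rw [← pow_add, ← pow_mul, Real.sqrt_eq_rpow, ← Real.rpow_natCast,
          ← Real.rpow_mul (Nat.cast_nonneg _)]
        push_cast
        ring_nf

theorem sqrt_card_mul_natCard_anticommutant_le_ite [Fintype F] [DecidableEq F]
    (h2 : (2 : F) ≠ 0) (hA : A ≠ 0) (r : ℕ) :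
    √((Fintype.card (Matrix (Fin 2) (Fin 2) F) * Nat.card (anticommutant F A)) ^ r) ≤
      if trace A = 0 then (Fintype.card F : ℝ) ^ (3 * r : ℝ)
      else (Fintype.card F : ℝ) ^ (5 / 2 * r : ℝ) := by
  split_ifs with htr
  · refine (sqrt_card_mul_natCard_anticommutant_le
      (finrank_anticommutant_le_two h2 htr hA) r).trans_eq ?_
    norm_num
  · refine (sqrt_card_mul_natCard_anticommutant_le
      (finrank_anticommutant_le_one h2 htr) r).trans_eq ?_
    norm_num

theorem card_le_of_forall_dist_ne_fin_two [Fintype F] (h2 : (2 : F) ≠ 0) {ι : Type*} [Fintype ι]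
    {E : Finset (ι → Matrix (Fin 2) (Fin 2) F)} {T : Matrix (Fin 2) (Fin 2) F}
    (hT : ∀ X ∈ E, ∀ Y ∈ E, ∑ i, (X i - Y i) ^ 2 ≠ T) :
    (#E : ℝ) ≤ (Fintype.card F : ℝ) ^ (3 * (Fintype.card ι : ℝ) + 3) +
      (Fintype.card F : ℝ) ^ (5 / 2 * (Fintype.card ι : ℝ) + 4) := by
  let := Classical.decEq F
  set q : ℝ := (Fintype.card F : ℝ) with hq
  set r := Fintype.card ι
  have hq0 : 0 < q := Nat.cast_pos.2 Fintype.card_pos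
  have card_trace_ne_zero : #{A : Matrix (Fin 2) (Fin 2) F | trace A ≠ 0} ≤ q ^ 4 := by
    rw [hq, ← Nat.cast_pow, ← card_matrix_fin_two]
    exact Nat.cast_le.2 (card_le_univ _)
  calc (#E : ℝ)
      ≤ ∑ A ∈ univ.erase (0 : Matrix (Fin 2) (Fin 2) F),
          √((Fintype.card (Matrix (Fin 2) (Fin 2) F) * Nat.card (anticommutant F A)) ^ r) :=
        card_le_sum_sqrt_of_forall_dist_ne
          (AddChar.FiniteField.primitiveChar_to_Complex_isPrimitive F) hT
    _ ≤ ∑ A ∈ univ.erase (0 : Matrix (Fin 2) (Fin 2) F),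
          if trace A = 0 then q ^ (3 * r : ℝ) else q ^ (5 / 2 * r : ℝ) :=
        sum_le_sum fun A hA ↦
          sqrt_card_mul_natCard_anticommutant_le_ite h2 (ne_of_mem_erase hA) r
    _ ≤ ∑ A : Matrix (Fin 2) (Fin 2) F,
          if trace A = 0 then q ^ (3 * r : ℝ) else q ^ (5 / 2 * r : ℝ) :=
        sum_le_sum_of_subset_of_nonneg (erase_subset _ _) fun _ _ _ ↦ by positivity
    _ = q ^ 3 * q ^ (3 * r : ℝ) +
          #{A : Matrix (Fin 2) (Fin 2) F | trace A ≠ 0} * q ^ (5 / 2 * r : ℝ) := by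
        rw [sum_ite, sum_const, sum_const, nsmul_eq_mul, nsmul_eq_mul,
          card_filter_trace_eq_zero_fin_two, Nat.cast_pow]
    _ ≤ q ^ 3 * q ^ (3 * r : ℝ) + q ^ 4 * q ^ (5 / 2 * r : ℝ) := by gcongr
    _ = q ^ (3 * r + 3 : ℝ) + q ^ (5 / 2 * r + 4 : ℝ) := by
        rw [Real.rpow_add hq0, Real.rpow_add hq0]
        norm_cast
        ring

end TwoByTwo

theorem two_ne_zero_of_odd_card {F : Type*} [Field F] [Fintype F] (hF : Odd (Fintype.card F)) :
    (2 : F) ≠ 0 :=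
  Ring.two_ne_zero fun hchar ↦
    Nat.not_even_iff_odd.2 hF (Nat.even_iff.2 (FiniteField.even_card_of_char_two hchar))

theorem rpow_add_rpow_le_two_mul_rpow {x a b c : ℝ} (hx : 1 ≤ x) (ha : a ≤ c) (hb : b ≤ c) :
    x ^ a + x ^ b ≤ 2 * x ^ c := by
  rw [two_mul]
  gcongr

end Falconer

theorem falconer_rank_two_general {F ι : Type*} [Field F] [Fintype F] [Fintype ι]
    (h2 : (2 : F) ≠ 0) (E : Finset (ι → Matrix (Fin 2) (Fin 2) F))
    (hE : (Fintype.card F : ℝ) ^ (3 * (Fintype.card ι : ℝ) + 3) +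
      (Fintype.card F : ℝ) ^ (5 / 2 * (Fintype.card ι : ℝ) + 4) < (E.card : ℝ)) :
    {T : Matrix (Fin 2) (Fin 2) F |
      ∃ X ∈ E, ∃ Y ∈ E, ∑ i, (X i - Y i) ^ 2 = T} = Set.univ := by
  refine Set.eq_univ_of_forall fun T ↦ ?_
  by_contra hT
  refine hE.not_ge (Falconer.card_le_of_forall_dist_ne_fin_two h2 (T := T) fun X hX Y hY hXY ↦ ?_)
  exact hT ⟨X, hX, Y, hY, hXY⟩

/-- Theorem 1.4 (rank 2 Falconer): if `E ⊆ M_2(F_q)^r`, `r ≥ 4`, and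
`#E > c q^{3r+3+ε}`, then every matrix arises as a distance of `E`. -/
theorem falconer_rank_two (r : ℕ) (hr : 4 ≤ r) (ε : ℝ) (hε : 0 < ε) :
    ∃ c : ℝ, 0 < c ∧
      ∀ (F : Type) [Field F] [Fintype F],
        Odd (Fintype.card F) →
        ∀ E : Finset (Fin r → Matrix (Fin 2) (Fin 2) F),
          c * (Fintype.card F : ℝ) ^ ((3 * (r : ℝ) + 3) + ε) < (E.card : ℝ) →
          {T : Matrix (Fin 2) (Fin 2) F |
              ∃ X ∈ E, ∃ Y ∈ E, ∑ i, (X i - Y i) ^ 2 = T} = Set.univ := by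
  refine ⟨2, two_pos, fun F _ _ hodd E hE ↦
    falconer_rank_two_general (Falconer.two_ne_zero_of_odd_card hodd) E (lt_of_le_of_lt ?_ hE)⟩
  have hr' : (4 : ℝ) ≤ r := Nat.ofNat_le_cast.2 hr
  rw [Fintype.card_fin]
  exact Falconer.rpow_add_rpow_le_two_mul_rpow (Nat.one_le_cast.2 Fintype.card_pos)
    (by linarith) (by linarith)
end

section
/- Let n ≥ 3 and r ≥ 3 be integers. For every ε > 0 there exists a constant c = c(ε) > 0 such that for every odd prime power q and every subset E ⊆ (M_n(𝔽_q))^r with #E > c·q^{rn² − (r−2)(n−1) + ε}, one has Δ(E) = M_n(𝔽_q). -/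
open scoped BigOperators

/-!
If `T` is not a distance of `E`, orthogonality of additive characters and the Cauchy–Schwarz
inequality bound `|E|` by `∑_{A ≠ 0} √q ^ (r (n² + d(A)))`, where `d(A)` is the dimension of the
space of matrices anticommuting with `A`: the frequency `A` contributes `ψ (tr (A d(X, Y)))`, and
the difference of two such phases is the linear functional of `X` defined by the matrices
`A (Zᵢ - Yᵢ) + (Zᵢ - Yᵢ) A`. Since `d(A) ≤ n² - 2n + 2` for `A ≠ 0`, everything reduces to the
case `r = 3`, that is, to bounding `∑_{A ≠ 0} √q ^ (3 d(A))` by a multiple of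
`√q ^ (3n² - 2(n - 1))`.

A matrix of rank `s` factors as `P Q` through dimension `s`, and `d(P Q) ≤ (n - s)² + d(Q P)`, so
the singular matrices are handled by induction on the size. For invertible `A`, the centralizer of
`A²` is the direct sum of the centralizer and the anticommutant of `A`. If `A²` is not scalar, its
centralizer has dimension at most `n² - 2n + 2`, while that of `A` has dimension at least `n`, so
`d(A)` is small; this is played against the first moment `∑ q ^ d(A)`, which counts conjugacy
classes of matrices conjugate to their negatives. If `A²` is scalar, then `2 d(A) ≤ n²`, and there
are few such conjugacy classes, each of which is small in proportion to the centralizer.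
-/

namespace MatrixDistance

open Module

section TwistedCentralizer

variable {K R : Type*} [Field K] [Ring R] [Algebra K R]

/-- The `s`-twisted centralizer of `a`: all `x` with `a * x = s • (x * a)`. It treats the commutant
(`s = 1`) and the anticommutant (`s = -1`) uniformly. -/
def twistedCentralizer (s : K) (a : R) : Submodule K R :=
  LinearMap.ker (LinearMap.mulLeft K a - s • LinearMap.mulRight K a)

theorem mem_twistedCentralizer {s : K} {a x : R} :
    x ∈ twistedCentralizer s a ↔ a * x = s • (x * a) := by
  simp [twistedCentralizer, sub_eq_zero]

theorem mem_twistedCentralizer_one {a x : R} :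
    x ∈ twistedCentralizer (1 : K) a ↔ a * x = x * a := by
  rw [mem_twistedCentralizer, one_smul]

theorem mem_twistedCentralizer_neg_one {a x : R} :
    x ∈ twistedCentralizer (-1 : K) a ↔ a * x = -(x * a) := by
  rw [mem_twistedCentralizer, neg_one_smul]

variable (K) in
/-- The dimension of the space of elements anticommuting with `a`, which is the exponent governing
the exponential sum attached to the frequency `a`. -/
noncomputable def anticommRank (a : R) : ℕ :=
  finrank K (twistedCentralizer (-1 : K) a)

theorem disjoint_twistedCentralizer_neg_one_one (h2 : (2 : K) ≠ 0) {a : R} (ha : IsUnit a) :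
    Disjoint (twistedCentralizer (-1 : K) a) (twistedCentralizer 1 a) := by
  rw [Submodule.disjoint_def]
  intro x hanti hcomm
  rw [mem_twistedCentralizer_neg_one, ← mem_twistedCentralizer_one.1 hcomm, eq_neg_iff_add_eq_zero,
    ← two_smul K, smul_eq_zero_iff_right h2, ha.mul_right_eq_zero] at hanti
  exact hanti

theorem twistedCentralizer_neg_one_sup_one (h2 : (2 : K) ≠ 0) {a : R} (ha : IsUnit a) :
    twistedCentralizer (-1 : K) a ⊔ twistedCentralizer 1 a = twistedCentralizer 1 (a * a) := by
  refine le_antisymm (sup_le (fun x hx => ?_) fun x hx => ?_) fun x hx => ?_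
  · rw [mem_twistedCentralizer_neg_one] at hx
    rw [mem_twistedCentralizer_one, mul_assoc, hx, mul_neg, ← mul_assoc, hx, neg_mul, neg_neg,
      mul_assoc]
  · rw [mem_twistedCentralizer_one] at hx ⊢
    rw [mul_assoc, hx, ← mul_assoc, hx, mul_assoc]
  · obtain ⟨u, rfl⟩ := ha
    rw [mem_twistedCentralizer_one] at hx
    -- Conjugation by `u` is an involution on the centralizer of `u ^ 2`; split `x` accordingly.
    set y : R := ↑u⁻¹ * x * u with hy
    have huy : u * y = x * u := by rw [hy, mul_assoc, Units.mul_inv_cancel_left]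
    have hyu : y * u = u * x := by
      rw [hy, mul_assoc, mul_assoc, ← hx, mul_assoc, Units.inv_mul_cancel_left]
    refine Submodule.mem_sup.2 ⟨(2⁻¹ : K) • (x - y), Submodule.smul_mem _ _ ?_,
      (2⁻¹ : K) • (x + y), Submodule.smul_mem _ _ ?_, ?_⟩
    · rw [mem_twistedCentralizer_neg_one, mul_sub, sub_mul, huy, hyu, neg_sub]
    · rw [mem_twistedCentralizer_one, mul_add, add_mul, huy, hyu, add_comm]
    · rw [← smul_add, sub_add_add_cancel, ← two_smul K, inv_smul_smul₀ h2]

theorem anticommRank_add_finrank_twistedCentralizer_one [FiniteDimensional K R] (h2 : (2 : K) ≠ 0)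
    {a : R} (ha : IsUnit a) :
    anticommRank K a + finrank K (twistedCentralizer (1 : K) a) =
      finrank K (twistedCentralizer (1 : K) (a * a)) := by
  rw [anticommRank, ← Submodule.finrank_sup_add_finrank_inf_eq,
    (disjoint_twistedCentralizer_neg_one_one h2 ha).eq_bot, finrank_bot, add_zero,
    twistedCentralizer_neg_one_sup_one h2 ha]

theorem anticommRank_smul_one (h2 : (2 : K) ≠ 0) {c : K} (hc : c ≠ 0) :
    anticommRank K (c • (1 : R)) = 0 := by
  have : twistedCentralizer (-1 : K) (c • (1 : R)) = ⊥ := by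
    rw [eq_bot_iff]
    intro x hx
    rw [mem_twistedCentralizer_neg_one, smul_one_mul, mul_smul_one, eq_neg_iff_add_eq_zero,
      ← two_smul K, smul_eq_zero_iff_right h2, smul_eq_zero_iff_right hc] at hx
    exact hx
  rw [anticommRank, this, finrank_bot]

theorem anticommRank_add_finrank_twistedCentralizer_one_of_mul_self_eq_smul_one
    [FiniteDimensional K R] (h2 : (2 : K) ≠ 0) {σ : K} (hσ : σ ≠ 0) {a : R} (ha : a * a = σ • 1) :
    anticommRank K a + finrank K (twistedCentralizer (1 : K) a) = finrank K R := by
  have hunit : IsUnit a := ⟨⟨a, σ⁻¹ • a, by rw [mul_smul_comm, ha, inv_smul_smul₀ hσ],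
    by rw [smul_mul_assoc, ha, inv_smul_smul₀ hσ]⟩, rfl⟩
  have htop : twistedCentralizer (1 : K) (σ • (1 : R)) = ⊤ :=
    eq_top_iff.2 fun x _ => by rw [mem_twistedCentralizer_one, smul_one_mul, mul_smul_one]
  rw [anticommRank_add_finrank_twistedCentralizer_one h2 hunit, ha, htop, finrank_top]

end TwistedCentralizer

section NonscalarMatrix

variable {F m : Type*} [Field F] [Fintype m] [DecidableEq m]

theorem exists_linearIndependent_pair_mulVec {A : Matrix m m F}
    (hA : ∀ c : F, A ≠ c • (1 : Matrix m m F)) :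
    ∃ v, LinearIndependent F ![v, A.mulVec v] := by
  by_contra! h
  obtain ⟨c, hc⟩ := LinearMap.exists_eq_smul_id_of_forall_notLinearIndependent
    (f := Matrix.toLinAlgEquiv' A) h
  exact hA c (Matrix.toLinAlgEquiv'.injective (by rw [hc, map_smul, map_one]))

theorem eq_zero_of_vecMulVec_add_mem_twistedCentralizer {s : F} (hs : s ≠ 0) {A : Matrix m m F}
    {v y φ ψ : m → F} (hφ : φ ⬝ᵥ v = 0) (hφA : φ ⬝ᵥ A.mulVec v = 1) (hψ : ψ ⬝ᵥ v = 0)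
    (hψA : ψ ⬝ᵥ A.mulVec v = 0)
    (h : Matrix.vecMulVec y φ + Matrix.vecMulVec v ψ ∈ twistedCentralizer s A) :
    y = 0 ∧ ψ = 0 := by
  rw [mem_twistedCentralizer] at h
  have hy : y = 0 := by
    have := congrArg (Matrix.mulVec · v) h
    simp only [Matrix.add_mulVec, Matrix.smul_mulVec, ← Matrix.mulVec_mulVec,
      Matrix.vecMulVec_mulVec, hφ, hφA, hψ, hψA, Matrix.mulVec_add, Matrix.mulVec_smul] at this
    simpa [hs] using this.symm
  subst hy
  have hψ0 := congrArg (Matrix.vecMul φ) h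
  simp only [Matrix.zero_vecMulVec, zero_add, Matrix.vecMul_smul, Matrix.mul_vecMulVec,
    Matrix.vecMulVec_mul, Matrix.vecMul_vecMulVec, hφ, hφA] at hψ0
  exact ⟨rfl, by simpa using hψ0⟩

theorem finrank_twistedCentralizer_add_le {s : F} (hs : s ≠ 0) {A : Matrix m m F}
    (hA : ∀ c : F, A ≠ c • (1 : Matrix m m F)) :
    finrank F (twistedCentralizer s A) + 2 * Fintype.card m ≤ Fintype.card m ^ 2 + 2 := by
  obtain ⟨v, hv⟩ := exists_linearIndependent_pair_mulVec hA
  let g := (Matrix.of ![v, A.mulVec v]).mulVecLin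
  have hrank : finrank F (LinearMap.range g) = 2 := LinearIndependent.rank_matrix hv
  have hker : finrank F (LinearMap.ker g) + 2 = Fintype.card m := by
    rw [add_comm, ← hrank, LinearMap.finrank_range_add_finrank_ker, finrank_fintype_fun_eq_card]
  have hsurj : LinearMap.range g = ⊤ :=
    Submodule.eq_top_of_finrank_eq (by rw [hrank, finrank_fin_fun])
  have hg {ψ : m → F} {x : Fin 2 → F} (h : g ψ = x) : ψ ⬝ᵥ v = x 0 ∧ ψ ⬝ᵥ A.mulVec v = x 1 :=
    ⟨by rw [← h, dotProduct_comm]; rfl, by rw [← h, dotProduct_comm]; rfl⟩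
  obtain ⟨φ, hφ⟩ := LinearMap.range_eq_top.1 hsurj ![0, 1]
  -- A complement to the twisted centralizer, of dimension `n + (n - 2)`.
  let L : (m → F) × LinearMap.ker g →ₗ[F] Matrix m m F :=
    (vecMulVecBilin F F).flip φ ∘ₗ LinearMap.fst F _ _ +
      vecMulVecBilin F F v ∘ₗ (LinearMap.ker g).subtype ∘ₗ LinearMap.snd F _ _
  have hL (z) (hz : L z ∈ twistedCentralizer s A) : z = 0 := by
    obtain ⟨y, ψ, hψ⟩ := z
    have ⟨hy, hψ0⟩ := eq_zero_of_vecMulVec_add_mem_twistedCentralizer hs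
      (hg hφ).1 (hg hφ).2 (hg hψ).1 (hg hψ).2 hz
    exact Prod.ext hy (Subtype.ext hψ0)
  have hinj : Function.Injective L :=
    (injective_iff_map_eq_zero L).2 fun z hz => hL z (hz ▸ Submodule.zero_mem _)
  have hdisj : Disjoint (twistedCentralizer s A) (LinearMap.range L) := by
    rw [Submodule.disjoint_def]
    rintro _ hx ⟨z, rfl⟩
    rw [hL z hx, map_zero]
  have hle := Submodule.finrank_add_finrank_le_of_disjoint hdisj
  rw [LinearMap.finrank_range_of_inj hinj, finrank_prod, finrank_fintype_fun_eq_card,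
    finrank_matrix, finrank_self] at hle
  linarith

theorem anticommRank_add_le_of_ne_zero (h2 : (2 : F) ≠ 0) (hm : 2 ≤ Fintype.card m)
    {A : Matrix m m F} (hA : A ≠ 0) :
    anticommRank F A + 2 * Fintype.card m ≤ Fintype.card m ^ 2 + 2 := by
  by_cases h : ∀ c : F, A ≠ c • (1 : Matrix m m F)
  · exact finrank_twistedCentralizer_add_le (neg_ne_zero.2 one_ne_zero) h
  · push Not at h
    obtain ⟨c, rfl⟩ := h
    rw [anticommRank_smul_one h2 (by rintro rfl; simp at hA)]
    nlinarith

end NonscalarMatrix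

section ScalarSquare

variable {K : Type*} [Field K]

theorem anticommRank_algEquiv {R S : Type*} [Ring R] [Algebra K R] [Ring S] [Algebra K S]
    (e : R ≃ₐ[K] S) (a : R) : anticommRank K (e a) = anticommRank K a := by
  have : (twistedCentralizer (-1 : K) (e a)).comap e.toLinearMap = twistedCentralizer (-1) a := by
    ext x
    simp only [Submodule.mem_comap, mem_twistedCentralizer_neg_one, AlgEquiv.toLinearMap_apply,
      ← map_mul, ← map_neg, e.injective.eq_iff]
  rw [anticommRank, anticommRank, ← this]
  exact ((e.toLinearEquiv.ofSubmodule' _).finrank_eq).symm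

variable {V : Type*} [AddCommGroup V] [Module K V] {f : End K V} {s : K}

theorem isCompl_eigenspace_neg (h2 : (2 : K) ≠ 0) (hs : s ≠ 0) (hf : f * f = (s * s) • 1) :
    IsCompl (f.eigenspace s) (f.eigenspace (-s)) := by
  have hne : s ≠ -s := fun h => mul_ne_zero h2 hs (by linear_combination h)
  refine ⟨End.disjoint_genEigenspace f hne 1 1, codisjoint_iff.2 (eq_top_iff.2 fun v _ => ?_)⟩
  have hff : f (f v) = (s * s) • v := LinearMap.congr_fun hf v
  refine Submodule.mem_sup.2 ⟨(2 * s)⁻¹ • (s • v + f v), Submodule.smul_mem _ _ ?_,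
    (2 * s)⁻¹ • (s • v - f v), Submodule.smul_mem _ _ ?_, ?_⟩
  · rw [End.mem_eigenspace_iff, map_add, map_smul, hff, smul_add, smul_smul, add_comm]
  · rw [End.mem_eigenspace_iff, map_sub, map_smul, hff, smul_sub, smul_smul, neg_mul, neg_smul,
      neg_smul]
    abel
  · rw [← smul_add, add_add_sub_cancel, ← two_smul K, ← mul_smul 2 s,
      inv_smul_smul₀ (mul_ne_zero h2 hs)]

theorem mapsTo_eigenspace_neg {x : End K V} (hx : x ∈ twistedCentralizer (-1 : K) f) (s : K) :
    ∀ v ∈ f.eigenspace s, x v ∈ f.eigenspace (-s) := by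
  intro v hv
  rw [End.mem_eigenspace_iff] at hv ⊢
  rw [mem_twistedCentralizer_neg_one] at hx
  rw [← End.mul_apply, hx, LinearMap.neg_apply, End.mul_apply, hv, map_smul, neg_smul]

theorem anticommRank_le_two_mul_finrank_eigenspace [FiniteDimensional K V] (h2 : (2 : K) ≠ 0)
    (hs : s ≠ 0) (hf : f * f = (s * s) • 1) :
    anticommRank K f ≤ 2 * (finrank K (f.eigenspace s) * finrank K (f.eigenspace (-s))) := by
  -- An endomorphism anticommuting with `f` exchanges the two eigenspaces.
  let Φ : twistedCentralizer (-1 : K) f →ₗ[K]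
      (f.eigenspace s →ₗ[K] f.eigenspace (-s)) × (f.eigenspace (-s) →ₗ[K] f.eigenspace (- -s)) :=
    { toFun x := (x.1.restrict (mapsTo_eigenspace_neg x.2 s),
        x.1.restrict (mapsTo_eigenspace_neg x.2 (-s)))
      map_add' _ _ := rfl
      map_smul' _ _ := rfl }
  have hΦ : Function.Injective Φ := fun x y hxy => Subtype.ext <|
    LinearMap.ext_on_codisjoint (isCompl_eigenspace_neg h2 hs hf).codisjoint
      (fun v hv => congrArg Subtype.val (LinearMap.congr_fun (congrArg Prod.fst hxy) ⟨v, hv⟩))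
      (fun v hv => congrArg Subtype.val (LinearMap.congr_fun (congrArg Prod.snd hxy) ⟨v, hv⟩))
  have hle := LinearMap.finrank_le_finrank_of_injective hΦ
  rw [finrank_prod, finrank_linearMap, finrank_linearMap, neg_neg] at hle
  rw [anticommRank]
  linarith

theorem two_mul_anticommRank_le_of_mul_self_eq_sq [FiniteDimensional K V] (h2 : (2 : K) ≠ 0)
    (hs : s ≠ 0) (hf : f * f = (s * s) • 1) : 2 * anticommRank K f ≤ finrank K V ^ 2 := by
  have hle := anticommRank_le_two_mul_finrank_eigenspace h2 hs hf
  rw [← Submodule.finrank_add_eq_of_isCompl (isCompl_eigenspace_neg h2 hs hf)]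
  linarith [four_mul_le_sq_add (finrank K (f.eigenspace s)) (finrank K (f.eigenspace (-s)))]

variable {m : Type*} [Fintype m] [DecidableEq m]

theorem anticommRank_le_anticommRank_map (L : Type*) [Field L] [Algebra K L] (A : Matrix m m K) :
    anticommRank K A ≤ anticommRank L (A.map (algebraMap K L)) := by
  let b := finBasis K (twistedCentralizer (-1 : K) A)
  have hK : LinearIndependent K fun i => (LinearEquiv.curry K K m m).symm (b i : Matrix m m K) :=
    (b.linearIndependent.map' _ (Submodule.ker_subtype _)).map' _ (LinearEquiv.ker _)
  have hL := (linearIndependent_algebraMap_comp_iff (S := L).2 hK).map'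
    (LinearEquiv.curry L L m m).toLinearMap (LinearEquiv.ker _)
  have hmem (i) : (b i : Matrix m m K).map (algebraMap K L) ∈
      twistedCentralizer (-1 : L) (A.map (algebraMap K L)) := by
    have := mem_twistedCentralizer_neg_one.1 (b i).2
    rw [mem_twistedCentralizer_neg_one, ← Matrix.map_mul, this, Matrix.map_neg _ (map_neg _),
      Matrix.map_mul]
  have hT : LinearIndependent L fun i => (⟨_, hmem i⟩ :
      twistedCentralizer (-1 : L) (A.map (algebraMap K L))) :=
    LinearIndependent.of_comp (Submodule.subtype _) hL
  simpa [anticommRank] using hT.fintype_card_le_finrank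

theorem two_mul_anticommRank_le_of_mul_self_eq_smul_one (h2 : (2 : K) ≠ 0) {σ : K} (hσ : σ ≠ 0)
    {A : Matrix m m K} (hA : A * A = σ • 1) :
    2 * anticommRank K A ≤ Fintype.card m ^ 2 := by
  -- Over the algebraic closure `σ` is a square.
  let L := AlgebraicClosure K
  let ι := algebraMap K L
  obtain ⟨s, hs⟩ := IsAlgClosed.exists_pow_nat_eq (ι σ) zero_lt_two
  have hs0 : s ≠ 0 := by
    rintro rfl
    exact hσ (ι.injective (by rw [← hs, map_zero, zero_pow two_ne_zero]))
  have hsq : Matrix.toLinAlgEquiv' (A.map ι) * Matrix.toLinAlgEquiv' (A.map ι) = (s * s) • 1 := by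
    rw [← map_mul, ← Matrix.map_mul, hA, ← sq, hs, Matrix.map_smul' _ _ _ (map_mul ι),
      Matrix.map_one _ (map_zero ι) (map_one ι), map_smul, map_one]
  have h2L : (2 : L) ≠ 0 := by rw [← map_ofNat ι]; exact (map_ne_zero ι).2 h2
  calc 2 * anticommRank K A
      ≤ 2 * anticommRank L (A.map ι) := by gcongr; exact anticommRank_le_anticommRank_map L A
    _ = 2 * anticommRank L (Matrix.toLinAlgEquiv' (A.map ι)) := by rw [anticommRank_algEquiv]
    _ ≤ finrank L (m → L) ^ 2 := two_mul_anticommRank_le_of_mul_self_eq_sq h2L hs0 hsq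
    _ = Fintype.card m ^ 2 := by rw [finrank_fintype_fun_eq_card]

end ScalarSquare

section ElementaryIdeals

open Polynomial

theorem exists_linearEquiv_pi_quotient {R M ι : Type*} [CommRing R] [IsDomain R]
    [IsPrincipalIdealRing R] [AddCommGroup M] [Module R M] [Finite ι] (hM : IsTorsion R M)
    (v : ι → M) (hv : Submodule.span R (Set.range v) = ⊤) :
    ∃ a : ι → Ideal R, Nonempty (M ≃ₗ[R] ∀ i, R ⧸ a i) := by
  have := Fintype.ofFinite ι
  let g : (ι → R) →ₗ[R] M := Fintype.linearCombination R v
  have hg : Function.Surjective g :=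
    LinearMap.range_eq_top.1 ((Fintype.range_linearCombination R v).trans hv)
  let e : ((ι → R) ⧸ LinearMap.ker g) ≃ₗ[R] M := g.quotKerEquivOfSurjective hg
  have : Module.Finite R M := .of_surjective g hg
  have hrank : finrank R (LinearMap.ker g) = finrank R (ι → R) := by
    rw [← Submodule.finrank_quotient_add_finrank (LinearMap.ker g), e.finrank_eq,
      finrank_eq_zero_iff_isTorsion.2 hM, zero_add]
  exact ⟨_, ⟨e.symm.trans (Submodule.quotientEquivPiSpan _ (Pi.basisFun R ι) hrank)⟩⟩

variable {F m : Type*} [Field F] [Fintype m] [DecidableEq m]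

theorem exists_aeval_linearEquiv_pi_quotient (A : Matrix m m F) :
    ∃ a : m → Ideal F[X], Nonempty (AEval' (Matrix.toLin' A) ≃ₗ[F[X]] ∀ i, F[X] ⧸ a i) := by
  refine exists_linearEquiv_pi_quotient (AEval.isTorsion_of_finiteDimensional _ _ _)
    (fun i => AEval'.of (Matrix.toLin' A) (Pi.basisFun F m i)) ?_
  have hspan : Submodule.span F (Set.range fun i =>
      AEval'.of (Matrix.toLin' A) (Pi.basisFun F m i)) = ⊤ :=
    ((Pi.basisFun F m).map (AEval'.of (Matrix.toLin' A))).span_eq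
  rw [eq_top_iff]
  exact fun x _ => Submodule.span_le_restrictScalars F F[X] _ (hspan ▸ Submodule.mem_top)

/-- Ideals `a i`, one for each row index, such that `A` acts on `m → F` as multiplication by `X`
acts on `∏ i, F[X] ⧸ a i`. They are an arbitrary choice, hence not an invariant of the conjugacy
class, but they determine it. -/
noncomputable def elementaryIdeals (A : Matrix m m F) : m → Ideal F[X] :=
  (exists_aeval_linearEquiv_pi_quotient A).choose

/-- A decomposition of `m → F` into cyclic modules for the action of `A`. -/
noncomputable def elementaryEquiv (A : Matrix m m F) :
    AEval' (Matrix.toLin' A) ≃ₗ[F[X]] ∀ i, F[X] ⧸ elementaryIdeals A i :=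
  (exists_aeval_linearEquiv_pi_quotient A).choose_spec.some

theorem mem_elementaryIdeals {A : Matrix m m F} {f : F[X]} (hf : aeval A f = 0) (i : m) :
    f ∈ elementaryIdeals A i := by
  have hann : f ∈ annihilator F[X] (AEval' (Matrix.toLin' A)) := by
    rw [AEval.annihilator_eq_ker_aeval, RingHom.mem_ker]
    exact (aeval_algHom_apply Matrix.toLinAlgEquiv' A f).trans (by rw [hf, map_zero])
  rw [(elementaryEquiv A).annihilator_eq, annihilator_pi, Submodule.mem_iInf] at hann
  simpa only [Ideal.annihilator_quotient] using hann i

theorem isConj_of_aeval_linearEquiv {A B : Matrix m m F}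
    (e : AEval' (Matrix.toLin' A) ≃ₗ[F[X]] AEval' (Matrix.toLin' B)) : IsConj A B := by
  let E : (m → F) ≃ₗ[F] (m → F) := (AEval'.of (Matrix.toLin' A)).trans
    ((e.restrictScalars F).trans (AEval'.of (Matrix.toLin' B)).symm)
  have hE (v : m → F) : E (A.mulVec v) = B.mulVec (E v) := by
    apply (AEval'.of (Matrix.toLin' B)).injective
    simp only [E, LinearEquiv.trans_apply, LinearEquiv.apply_symm_apply,
      LinearEquiv.restrictScalars_apply]
    rw [← Matrix.toLin'_apply A, ← AEval'.X_smul_of, map_smul, ← Matrix.toLin'_apply B,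
      ← AEval'.X_smul_of, LinearEquiv.apply_symm_apply]
  let g : (Matrix m m F)ˣ := ⟨LinearMap.toMatrix' E.toLinearMap,
    LinearMap.toMatrix' E.symm.toLinearMap,
    by rw [← LinearMap.toMatrix'_comp]; simp, by rw [← LinearMap.toMatrix'_comp]; simp⟩
  refine ⟨g, Matrix.toLin'.injective (LinearMap.ext fun v => ?_)⟩
  simpa [g] using hE v

theorem isConj_of_elementaryIdeals_eq {A B : Matrix m m F}
    (h : elementaryIdeals A = elementaryIdeals B) : IsConj A B :=
  isConj_of_aeval_linearEquiv ((elementaryEquiv A).trans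
    ((LinearEquiv.piCongrRight fun i => Submodule.quotEquivOfEq _ _ (congrFun h i)).trans
      (elementaryEquiv B).symm))

theorem card_le_finrank_twistedCentralizer_one (A : Matrix m m F) :
    Fintype.card m ≤ finrank F (twistedCentralizer (1 : F) A) := by
  let e : (m → F) ≃ₗ[F] ∀ i, F[X] ⧸ elementaryIdeals A i :=
    (AEval'.of (Matrix.toLin' A)).trans ((elementaryEquiv A).restrictScalars F)
  have he (v : m → F) : e (A.mulVec v) = (X : F[X]) • e v := by
    simp only [e, LinearEquiv.trans_apply, LinearEquiv.restrictScalars_apply]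
    rw [← Matrix.toLin'_apply A, ← AEval'.X_smul_of, map_smul]
  -- Multiplication by any element of `∏ i, F[X] ⧸ a i` commutes with multiplication by `X`.
  let Φ : (∀ i, F[X] ⧸ elementaryIdeals A i) →ₗ[F] Matrix m m F :=
    LinearMap.toMatrix'.toLinearMap ∘ₗ e.symm.conj.toLinearMap ∘ₗ LinearMap.mul F _
  have hΦ (x) : Φ x ∈ twistedCentralizer (1 : F) A := by
    rw [mem_twistedCentralizer_one]
    refine Matrix.toLin'.injective (LinearMap.ext fun v => e.injective ?_)
    simp only [Φ, Matrix.toLin'_mul, LinearMap.comp_apply, Matrix.toLin'_apply, he,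
      LinearEquiv.coe_coe, LinearMap.toMatrix'_mulVec]
    simp [he, LinearEquiv.conj_apply_apply, mul_smul_comm]
  have hinj : Function.Injective Φ :=
    LinearMap.toMatrix'.injective.comp (e.symm.conj.injective.comp fun x y hxy => by
      simpa only [LinearMap.mul_apply', mul_one] using LinearMap.congr_fun hxy 1)
  have hle := LinearMap.finrank_le_finrank_of_injective (f := Φ.codRestrict _ hΦ)
    (fun x y hxy => hinj (congrArg Subtype.val hxy))
  rwa [← e.finrank_eq, finrank_fintype_fun_eq_card] at hle

end ElementaryIdeals

section RankFactorization

variable {F m k : Type*} [Field F] [Fintype m] [Fintype k] [DecidableEq k]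

theorem exists_mul_eq_of_rank_eq_card {A : Matrix m m F} (hA : A.rank = Fintype.card k) :
    ∃ (P : Matrix m k F) (Q : Matrix k m F) (P' : Matrix k m F) (Q' : Matrix m k F),
      P * Q = A ∧ P' * P = 1 ∧ Q * Q' = 1 := by
  classical
  let f := Matrix.toLin' A
  have hf : finrank F (LinearMap.range f) = Fintype.card k := hA
  let e : LinearMap.range f ≃ₗ[F] (k → F) := .ofFinrankEq _ _ (by simp [hf])
  let p : (k → F) →ₗ[F] (m → F) := (LinearMap.range f).subtype ∘ₗ e.symm.toLinearMap
  let q : (m → F) →ₗ[F] (k → F) := e.toLinearMap ∘ₗ f.rangeRestrict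
  have hpq : p ∘ₗ q = f := by
    ext v
    simp [p, q]
  obtain ⟨p', hp'⟩ := p.exists_leftInverse_of_injective
    (LinearMap.ker_eq_bot.2 ((Submodule.subtype_injective _).comp e.symm.injective))
  obtain ⟨q', hq'⟩ := q.exists_rightInverse_of_surjective
    (LinearMap.range_eq_top.2 (e.surjective.comp f.surjective_rangeRestrict))
  refine ⟨p.toMatrix', q.toMatrix', p'.toMatrix', q'.toMatrix', ?_, ?_, ?_⟩
  · rw [← LinearMap.toMatrix'_comp, hpq, LinearMap.toMatrix'_toLin']
  · rw [← LinearMap.toMatrix'_comp, hp', LinearMap.toMatrix'_id]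
  · rw [← LinearMap.toMatrix'_comp, hq', LinearMap.toMatrix'_id]

variable {P : Matrix m k F} {Q P' : Matrix k m F} {Q' : Matrix m k F}

theorem finrank_ker_mulRight_inf_ker_mulLeft_add_le (hP : P' * P = 1) (hQ : Q * Q' = 1) :
    finrank F ↥(LinearMap.ker (mulRightLinearMap m F P) ⊓ LinearMap.ker (mulLeftLinearMap m F Q)) +
      2 * (Fintype.card m * Fintype.card k) ≤ Fintype.card m ^ 2 + Fintype.card k ^ 2 := by
  set W := LinearMap.ker (mulRightLinearMap m F P) ⊓ LinearMap.ker (mulLeftLinearMap m F Q)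
  let Z := LinearMap.ker (mulRightLinearMap k F P)
  have hZ : Fintype.card k * Fintype.card m ≤ finrank F Z + Fintype.card k ^ 2 := by
    have hrange := LinearMap.finrank_range_add_finrank_ker (mulRightLinearMap k F P)
    have hle := (LinearMap.range (mulRightLinearMap k F P)).finrank_le
    rw [finrank_matrix, finrank_self] at hrange hle
    linarith
  let L : Matrix m k F × Z →ₗ[F] Matrix m m F :=
    mulRightLinearMap m F P' ∘ₗ LinearMap.fst F _ _ +
      mulLeftLinearMap m F Q' ∘ₗ Z.subtype ∘ₗ LinearMap.snd F _ _
  have hL (z) (hz : L z ∈ W) : z = 0 := by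
    obtain ⟨Y, V, hV⟩ := z
    obtain ⟨hzP, hzQ⟩ : (Y * P' + Q' * V) * P = 0 ∧ Q * (Y * P' + Q' * V) = 0 := hz
    have hVP : V * P = 0 := hV
    have hY : Y = 0 := by
      rwa [Matrix.add_mul, Matrix.mul_assoc, hP, Matrix.mul_one, Matrix.mul_assoc, hVP,
        Matrix.mul_zero, add_zero] at hzP
    subst hY
    have hV0 : V = 0 := by
      rwa [Matrix.zero_mul, zero_add, ← Matrix.mul_assoc, hQ, Matrix.one_mul] at hzQ
    exact Prod.ext rfl (Subtype.ext hV0)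
  have hinj : Function.Injective L :=
    (injective_iff_map_eq_zero L).2 fun z hz => hL z (hz ▸ Submodule.zero_mem _)
  have hdisj : Disjoint W (LinearMap.range L) := by
    rw [Submodule.disjoint_def]
    rintro _ hx ⟨z, rfl⟩
    rw [hL z hx, map_zero]
  have hle := Submodule.finrank_add_finrank_le_of_disjoint hdisj
  rw [LinearMap.finrank_range_of_inj hinj, finrank_prod, finrank_matrix, finrank_matrix,
    finrank_self] at hle
  linarith

theorem finrank_eq_finrank_map_add_finrank_inf_ker {V W : Type*} [AddCommGroup V] [Module F V]
    [FiniteDimensional F V] [AddCommGroup W] [Module F W] (T : Submodule F V) (g : V →ₗ[F] W) :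
    finrank F T = finrank F (T.map g) + finrank F ↥(T ⊓ LinearMap.ker g) := by
  rw [← LinearMap.finrank_range_add_finrank_ker (g.domRestrict T), LinearMap.range_domRestrict,
    LinearMap.ker_domRestrict, ← Submodule.finrank_map_subtype_eq, Submodule.map_comap_subtype]

variable [DecidableEq m]

theorem mul_compression_mul_of_mem (hP : P' * P = 1) (hQ : Q * Q' = 1) {X : Matrix m m F}
    (hX : X ∈ twistedCentralizer (-1 : F) (P * Q)) :
    P * (P' * X * P) = X * P ∧ Q * X = -(P' * X * P * Q) := by
  rw [mem_twistedCentralizer_neg_one] at hX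
  constructor
  · have hXP : X * P = P * -(Q * X * Q') := calc
      X * P = X * (P * Q) * Q' := by
        rw [Matrix.mul_assoc, Matrix.mul_assoc, hQ, Matrix.mul_one]
      _ = P * -(Q * X * Q') := by
        rw [← neg_eq_iff_eq_neg.2 hX]
        simp only [Matrix.neg_mul, Matrix.mul_neg, Matrix.mul_assoc]
    rw [Matrix.mul_assoc, hXP, ← Matrix.mul_assoc P', hP, Matrix.one_mul]
  · calc Q * X = P' * (P * Q * X) := by
          rw [Matrix.mul_assoc P, ← Matrix.mul_assoc P', hP, Matrix.one_mul]
      _ = -(P' * X * P * Q) := by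
          rw [hX]
          simp only [Matrix.mul_neg, Matrix.mul_assoc]

theorem anticommRank_mul_add_le (hP : P' * P = 1) (hQ : Q * Q' = 1) :
    anticommRank F (P * Q) + 2 * (Fintype.card m * Fintype.card k) ≤
      Fintype.card m ^ 2 + Fintype.card k ^ 2 + anticommRank F (Q * P) := by
  let g : Matrix m m F →ₗ[F] Matrix k k F := mulRightLinearMap k F P ∘ₗ mulLeftLinearMap m F P'
  have hmap : (twistedCentralizer (-1 : F) (P * Q)).map g ≤ twistedCentralizer (-1) (Q * P) := by
    rintro _ ⟨X, hX, rfl⟩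
    obtain ⟨hXP, hQX⟩ := mul_compression_mul_of_mem hP hQ hX
    change P' * X * P ∈ _
    rw [mem_twistedCentralizer_neg_one, Matrix.mul_assoc Q, hXP, ← Matrix.mul_assoc, hQX,
      Matrix.neg_mul, Matrix.mul_assoc _ Q]
  have hker : twistedCentralizer (-1 : F) (P * Q) ⊓ LinearMap.ker g ≤
      LinearMap.ker (mulRightLinearMap m F P) ⊓ LinearMap.ker (mulLeftLinearMap m F Q) := by
    rintro X ⟨hX, hgX : P' * X * P = 0⟩
    obtain ⟨hXP, hQX⟩ := mul_compression_mul_of_mem hP hQ hX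
    rw [hgX] at hXP hQX
    exact ⟨by simpa using hXP.symm, by simpa using hQX⟩
  have hrank := finrank_eq_finrank_map_add_finrank_inf_ker
    (twistedCentralizer (-1 : F) (P * Q)) g
  have hker_le := finrank_ker_mulRight_inf_ker_mulLeft_add_le hP hQ
  have hmap_le := Submodule.finrank_mono hmap
  have := Submodule.finrank_mono hker
  rw [anticommRank, anticommRank]
  omega

end RankFactorization

theorem card_matrix {F m k : Type*} [Field F] [Fintype F] [Fintype m] [Fintype k]
    [Fintype (Matrix m k F)] :
    Fintype.card (Matrix m k F) = Fintype.card F ^ (Fintype.card m * Fintype.card k) := by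
  rw [Module.card_eq_pow_finrank (K := F), finrank_matrix, finrank_self, mul_one]

section ExponentialSum

variable {F V : Type*} [Field F] [AddCommGroup V] [Module F V] [Fintype V]
  {ψ : AddChar F ℂ}

theorem sum_addChar_linearMap (hψ : ψ ≠ 0) (L : V →ₗ[F] F) [Decidable (L = 0)] :
    ∑ v, ψ (L v) = if L = 0 then (Fintype.card V : ℂ) else 0 := by
  split_ifs with hL
  · simp [hL]
  · obtain ⟨a, ha⟩ := AddChar.ne_zero_iff.1 hψ
    obtain ⟨v, hv⟩ := (LinearMap.surjective_iff_ne_zero.2 hL) a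
    let χ : AddChar V ℂ := ψ.compAddMonoidHom L.toAddMonoidHom
    exact AddChar.sum_eq_zero_iff_ne_zero.2 (AddChar.ne_zero_iff.2 ⟨v, by simpa [χ, hv]⟩ : χ ≠ 0)

variable [Finite F] [DecidableEq (V →ₗ[F] F)] {φ c : V → V → F} {L : V → V → V →ₗ[F] F}

theorem sum_norm_sum_addChar_sq (hψ : ψ ≠ 0)
    (hφ : ∀ x y z, φ x y - φ x z = c y z + L y z x) (E : Finset V) :
    ((∑ x, ‖∑ y ∈ E, ψ (φ x y)‖ ^ 2 : ℝ) : ℂ) =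
      ∑ y ∈ E, ∑ z ∈ E with L y z = 0, ψ (c y z) * Fintype.card V := by
  have hexpand (x : V) : (‖∑ y ∈ E, ψ (φ x y)‖ : ℂ) ^ 2 =
      ∑ y ∈ E, ∑ z ∈ E, ψ (c y z) * ψ (L y z x) := by
    rw [← Complex.mul_conj', map_sum, Finset.sum_mul_sum]
    simp only [← AddChar.map_neg_eq_conj, ← AddChar.map_add_eq_mul, ← sub_eq_add_neg, hφ]
  push_cast
  simp_rw [hexpand, Finset.sum_filter]
  rw [Finset.sum_comm]
  refine Finset.sum_congr rfl fun y _ => ?_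
  rw [Finset.sum_comm]
  refine Finset.sum_congr rfl fun z _ => ?_
  rw [← Finset.mul_sum, sum_addChar_linearMap hψ, mul_ite, mul_zero]

theorem sum_norm_sum_addChar_sq_le (hψ : ψ ≠ 0)
    (hφ : ∀ x y z, φ x y - φ x z = c y z + L y z x) {E : Finset V} {N : ℕ}
    (hN : ∀ y ∈ E, {z ∈ E | L y z = 0}.card ≤ N) :
    ∑ x, ‖∑ y ∈ E, ψ (φ x y)‖ ^ 2 ≤ E.card * (N * Fintype.card V : ℝ) := by
  have hnonneg : 0 ≤ ∑ x, ‖∑ y ∈ E, ψ (φ x y)‖ ^ 2 := by positivity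
  rw [← Real.norm_of_nonneg hnonneg, ← Complex.norm_real, sum_norm_sum_addChar_sq hψ hφ,
    ← nsmul_eq_mul]
  refine (norm_sum_le _ _).trans (Finset.sum_le_card_nsmul _ _ _ fun y hy => ?_)
  refine (norm_sum_le _ _).trans ?_
  simp only [norm_mul, AddChar.norm_apply, Complex.norm_natCast, one_mul, Finset.sum_const,
    nsmul_eq_mul]
  gcongr
  exact hN y hy

theorem norm_sum_sum_addChar_sq_le (hψ : ψ ≠ 0)
    (hφ : ∀ x y z, φ x y - φ x z = c y z + L y z x) {E : Finset V} {N : ℕ}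
    (hN : ∀ y ∈ E, {z ∈ E | L y z = 0}.card ≤ N) :
    ‖∑ x ∈ E, ∑ y ∈ E, ψ (φ x y)‖ ^ 2 ≤ E.card ^ 2 * (N * Fintype.card V : ℝ) := calc
  ‖∑ x ∈ E, ∑ y ∈ E, ψ (φ x y)‖ ^ 2
    ≤ (∑ x ∈ E, ‖∑ y ∈ E, ψ (φ x y)‖) ^ 2 := by
      gcongr
      exact norm_sum_le _ _
  _ ≤ E.card * ∑ x ∈ E, ‖∑ y ∈ E, ψ (φ x y)‖ ^ 2 := sq_sum_le_card_mul_sum_sq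
  _ ≤ E.card * ∑ x, ‖∑ y ∈ E, ψ (φ x y)‖ ^ 2 := by
      gcongr
      exact E.subset_univ
  _ ≤ E.card * (E.card * (N * Fintype.card V : ℝ)) := by
      gcongr
      exact sum_norm_sum_addChar_sq_le hψ hφ hN
  _ = E.card ^ 2 * (N * Fintype.card V : ℝ) := by ring

end ExponentialSum

section Distance

variable {F m ι : Type*} [Field F] [Fintype m] [DecidableEq m] [Fintype ι]

/-- The matrix-valued distance `d(X, Y) = ‖X - Y‖ = ∑ i, (X i - Y i) ^ 2`, for families in any
ring. -/
def sqDist {R : Type*} [Ring R] (x y : ι → R) : R :=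
  ∑ i, (x i - y i) ^ 2

/-- The linear functional `X ↦ ∑ i, trace (X i * M i)`. Differences of the phases
`trace (A * sqDist X Y)` are of this form in `X`, up to a constant. -/
def tracePairing (M : ι → Matrix m m F) : (ι → Matrix m m F) →ₗ[F] F :=
  ∑ i, Matrix.traceLinearMap m F F ∘ₗ LinearMap.mulRight F (M i) ∘ₗ LinearMap.proj i

theorem tracePairing_apply (M X : ι → Matrix m m F) :
    tracePairing M X = ∑ i, (X i * M i).trace := by
  simp [tracePairing]

theorem tracePairing_eq_zero_iff {M : ι → Matrix m m F} : tracePairing M = 0 ↔ M = 0 := by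
  classical
  refine ⟨fun hM => funext fun i => ?_, by rintro rfl; ext; simp [tracePairing_apply]⟩
  rw [Pi.zero_apply, Matrix.ext_iff_trace_mul_left]
  intro A
  have hA := LinearMap.congr_fun hM (Pi.single i A)
  rw [tracePairing_apply, Finset.sum_eq_single i] at hA
  · simpa using hA
  · intro j _ hj
    simp [Pi.single_eq_of_ne hj]
  · simp

theorem trace_mul_sqDist_sub (A : Matrix m m F) (X Y Z : ι → Matrix m m F) :
    (A * sqDist X Y).trace - (A * sqDist X Z).trace =
      (A * ∑ i, (Y i ^ 2 - Z i ^ 2)).trace +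
        tracePairing (fun i => A * (Z i - Y i) + (Z i - Y i) * A) X := by
  rw [tracePairing_apply, ← Matrix.trace_sub, ← mul_sub, sqDist, sqDist,
    ← Finset.sum_sub_distrib, Finset.mul_sum, Finset.mul_sum, Matrix.trace_sum, Matrix.trace_sum,
    ← Finset.sum_add_distrib]
  refine Finset.sum_congr rfl fun i _ => ?_
  have hcycle := Matrix.trace_mul_comm (A * (Z i - Y i)) (X i)
  have hexpand : A * ((X i - Y i) ^ 2 - (X i - Z i) ^ 2) =
      A * (Y i ^ 2 - Z i ^ 2) + (A * X i * (Z i - Y i) + A * (Z i - Y i) * X i) := by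
    noncomm_ring
  rw [hexpand, Matrix.trace_add, Matrix.trace_add, hcycle, mul_add, Matrix.trace_add,
    Matrix.mul_assoc A (X i), Matrix.trace_mul_comm A (X i * _), Matrix.mul_assoc (X i)]
  ring

variable [Fintype F]

theorem card_filter_forall_sub_mem_le {V : Type*} [AddCommGroup V] [Module F V]
    [FiniteDimensional F V] (T : Submodule F V) [DecidablePred (· ∈ T)] (E : Finset (ι → V))
    (y : ι → V) :
    {z ∈ E | ∀ i, z i - y i ∈ T}.card ≤ Fintype.card F ^ (finrank F T * Fintype.card ι) := by
  classical
  have : Finite V := Module.finite_of_finite F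
  have : Fintype T := Fintype.ofFinite T
  calc {z ∈ E | ∀ i, z i - y i ∈ T}.card
      ≤ (Finset.univ.image fun (t : ι → T) i => y i + t i).card :=
        Finset.card_le_card fun z hz => Finset.mem_image.2
          ⟨fun i => ⟨z i - y i, (Finset.mem_filter.1 hz).2 i⟩, Finset.mem_univ _, by simp⟩
    _ ≤ Fintype.card (ι → T) := Finset.card_image_le
    _ = Fintype.card F ^ (finrank F T * Fintype.card ι) := by
        rw [Fintype.card_fun, Module.card_eq_pow_finrank (K := F), ← pow_mul]

theorem norm_sum_sum_addChar_trace_mul_sqDist_le {ψ : AddChar F ℂ} (hψ : ψ ≠ 0)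
    (A : Matrix m m F) (E : Finset (ι → Matrix m m F)) :
    ‖∑ X ∈ E, ∑ Y ∈ E, ψ (A * sqDist X Y).trace‖ ≤
      E.card * √(Fintype.card F) ^ (Fintype.card ι * (Fintype.card m ^ 2 + anticommRank F A)) := by
  classical
  have hcount (Y) (_ : Y ∈ E) :
      {Z ∈ E | tracePairing (fun i => A * (Z i - Y i) + (Z i - Y i) * A) = 0}.card ≤
        Fintype.card F ^ (anticommRank F A * Fintype.card ι) := by
    refine (congrArg Finset.card (Finset.filter_congr fun Z _ => ?_)).trans_le
      (card_filter_forall_sub_mem_le (twistedCentralizer (-1 : F) A) E Y)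
    simp only [tracePairing_eq_zero_iff, funext_iff, Pi.zero_apply,
      mem_twistedCentralizer_neg_one, eq_neg_iff_add_eq_zero]
  have hsq := norm_sum_sum_addChar_sq_le hψ (trace_mul_sqDist_sub A) hcount
  refine le_of_sq_le_sq (hsq.trans_eq ?_) (by positivity)
  rw [mul_pow, ← pow_mul, mul_comm _ 2, pow_mul _ 2, Real.sq_sqrt (by positivity),
    Fintype.card_fun, card_matrix]
  push_cast
  ring

theorem sum_addChar_trace_mul_sub {ψ : AddChar F ℂ} (hψ : ψ ≠ 0) {M N : Matrix m m F}
    (hMN : M ≠ N) : ∑ A : Matrix m m F, ψ (-(A * N).trace) * ψ (A * M).trace = 0 := by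
  classical
  let L : Matrix m m F →ₗ[F] F := Matrix.traceLinearMap m F F ∘ₗ LinearMap.mulRight F (M - N)
  have hL : L ≠ 0 := fun hL => hMN <| sub_eq_zero.1 <| Matrix.ext_iff_trace_mul_left.2 fun A => by
    simpa [L] using LinearMap.congr_fun hL A
  refine (Finset.sum_congr rfl fun A _ => ?_).trans
    ((sum_addChar_linearMap hψ L).trans (if_neg hL))
  rw [← AddChar.map_add_eq_mul, neg_add_eq_sub, ← Matrix.trace_sub, ← mul_sub]
  rfl

theorem card_le_sum_of_forall_sqDist_ne [DecidableEq F] (E : Finset (ι → Matrix m m F))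
    (T : Matrix m m F) (hT : ∀ X ∈ E, ∀ Y ∈ E, sqDist X Y ≠ T) :
    (E.card : ℝ) ≤ ∑ A : Matrix m m F with A ≠ 0,
      √(Fintype.card F) ^ (Fintype.card ι * (Fintype.card m ^ 2 + anticommRank F A)) := by
  obtain ⟨ψ, hψ1⟩ := (AddChar.exists_apply_ne_zero (a := (1 : F))).2 one_ne_zero
  have hψ : ψ ≠ 0 := AddChar.ne_zero_iff.2 ⟨1, hψ1⟩
  let S (A : Matrix m m F) : ℂ :=
    ψ (-(A * T).trace) * ∑ X ∈ E, ∑ Y ∈ E, ψ (A * sqDist X Y).trace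
  have hsum : ∑ A, S A = 0 := by
    simp_rw [S, Finset.mul_sum]
    rw [Finset.sum_comm]
    refine Finset.sum_eq_zero fun X hX => ?_
    rw [Finset.sum_comm]
    exact Finset.sum_eq_zero fun Y hY => sum_addChar_trace_mul_sub hψ (hT X hX Y hY)
  have hS0 : S 0 = E.card * E.card := by simp [S]
  have hsplit : (E.card : ℂ) * E.card = -∑ A with A ≠ 0, S A := by
    rw [← hS0, eq_neg_iff_add_eq_zero, ← hsum, Finset.filter_ne',
      Finset.add_sum_erase _ _ (Finset.mem_univ 0)]
  have hmul : (E.card : ℝ) * E.card ≤ E.card * ∑ A : Matrix m m F with A ≠ 0,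
      √(Fintype.card F) ^ (Fintype.card ι * (Fintype.card m ^ 2 + anticommRank F A)) := by
    have hnorm := congrArg norm hsplit
    rw [norm_mul, Complex.norm_natCast, norm_neg] at hnorm
    rw [hnorm, Finset.mul_sum]
    refine (norm_sum_le _ _).trans (Finset.sum_le_sum fun A _ => ?_)
    rw [norm_mul, AddChar.norm_apply, one_mul]
    exact norm_sum_sum_addChar_trace_mul_sqDist_le hψ A E
  rcases E.card.eq_zero_or_pos with hE | hE
  · rw [hE, Nat.cast_zero]
    positivity
  · exact le_of_mul_le_mul_left hmul (by exact_mod_cast hE)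

end Distance

section OrbitCounting

variable {G α β : Type*} [Group G] [Finite G] [MulAction G α]

theorem card_smul_eq_le_card_stabilizer (a b : α) :
    Nat.card {g : G // g • a = b} ≤ Nat.card (MulAction.stabilizer G a) := by
  rcases isEmpty_or_nonempty {g : G // g • a = b} with h | ⟨g₀, hg₀⟩
  · simp
  · refine Nat.card_le_card_of_injective (fun g => ⟨g₀⁻¹ * g, ?_⟩) fun g g' hgg' => ?_
    · rw [MulAction.mem_stabilizer_iff, mul_smul, g.2, ← hg₀, inv_smul_smul]
    · exact Subtype.ext (mul_left_cancel (congrArg Subtype.val hgg'))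

theorem sum_card_stabilizer_le_of_subset_orbit {s : Finset α} {a : α}
    (hs : ↑s ⊆ MulAction.orbit G a) :
    ∑ b ∈ s, Nat.card (MulAction.stabilizer G b) ≤ Nat.card G := by
  have hfin : (MulAction.orbit G a).Finite := Set.finite_range _
  have hstab (b) (hb : b ∈ s) : Nat.card (MulAction.stabilizer G b) =
      Nat.card (MulAction.stabilizer G a) := by
    obtain ⟨g, rfl⟩ := hs hb
    exact Nat.card_congr (MulAction.stabilizerEquivStabilizer rfl).toEquiv.symm
  calc ∑ b ∈ s, Nat.card (MulAction.stabilizer G b)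
      = s.card * Nat.card (MulAction.stabilizer G a) := Finset.sum_const_nat hstab
    _ ≤ Nat.card (MulAction.orbit G a) * Nat.card (MulAction.stabilizer G a) := by
        gcongr
        rw [Nat.card_coe_set_eq, ← Set.ncard_coe_finset]
        exact Set.ncard_le_ncard hs hfin
    _ = Nat.card G := by
        rw [← Nat.card_prod]
        exact Nat.card_congr (MulAction.orbitProdStabilizerEquivGroup G a)

theorem sum_card_stabilizer_le_card_image_mul [DecidableEq β] (s : Finset α) (τ : α → β)
    (hτ : ∀ a b, τ a = τ b → b ∈ MulAction.orbit G a) :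
    ∑ a ∈ s, Nat.card (MulAction.stabilizer G a) ≤ (s.image τ).card * Nat.card G := by
  rw [← Finset.sum_fiberwise_of_maps_to fun a => Finset.mem_image_of_mem τ, ← smul_eq_mul]
  refine Finset.sum_le_card_nsmul _ _ _ fun t ht => ?_
  obtain ⟨a, -, rfl⟩ := Finset.mem_image.1 ht
  exact sum_card_stabilizer_le_of_subset_orbit fun b hb =>
    hτ a b (Finset.mem_filter.1 hb).2.symm

end OrbitCounting

section Conjugation

variable {R : Type*} [Ring R]

theorem mem_orbit_conjAct_of_isConj {a b : R} (h : IsConj a b) :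
    b ∈ MulAction.orbit (ConjAct Rˣ) a := by
  obtain ⟨u, hu⟩ := h
  refine ⟨ConjAct.toConjAct u, ?_⟩
  simp [ConjAct.units_smul_def, hu.eq]

theorem toConjAct_smul_eq_iff {u : Rˣ} {a b : R} : ConjAct.toConjAct u • a = b ↔ u * a = b * u := by
  rw [ConjAct.units_smul_def, ConjAct.ofConjAct_toConjAct, Units.mul_inv_eq_iff_eq_mul]

theorem sum_pow_anticommRank_units_le (K : Type*) [Field K] [Fintype K] [Algebra K R] [Fintype R]
    [Fintype Rˣ] [DecidablePred fun a : R => IsConj a (-a)] :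
    ∑ u : Rˣ, Fintype.card K ^ anticommRank K (u : R) ≤
      ∑ a : R with IsConj a (-a), Nat.card (MulAction.stabilizer (ConjAct Rˣ) a) := by
  classical
  have hpow (u : Rˣ) : Fintype.card K ^ anticommRank K (u : R) =
      (Finset.univ.bipartiteAbove (fun (u : Rˣ) (a : R) => u * a = -a * u) u).card := by
    rw [anticommRank, ← Nat.card_eq_fintype_card, ← Module.natCard_eq_pow_finrank (K := K),
      Finset.bipartiteAbove, ← Fintype.card_subtype, ← Nat.card_eq_fintype_card]
    exact Nat.card_congr (Equiv.subtypeEquivRight fun a => by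
      rw [mem_twistedCentralizer_neg_one, neg_mul])
  simp_rw [hpow]
  rw [Finset.sum_card_bipartiteAbove_eq_sum_card_bipartiteBelow, Finset.sum_filter]
  refine Finset.sum_le_sum fun a _ => ?_
  split_ifs with ha
  · refine le_trans ?_ (card_smul_eq_le_card_stabilizer (G := ConjAct Rˣ) a (-a))
    rw [Finset.bipartiteBelow, ← Fintype.card_subtype, ← Nat.card_eq_fintype_card]
    exact (Nat.card_congr (ConjAct.toConjAct.toEquiv.subtypeEquiv fun u =>
      toConjAct_smul_eq_iff.symm)).le
  · rw [Nat.le_zero, Finset.card_eq_zero, Finset.bipartiteBelow, Finset.filter_eq_empty_iff]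
    exact fun u _ hu => ha ⟨u, hu⟩

end Conjugation

section ConjugacyClasses

open Polynomial UniqueFactorizationMonoid

theorem card_normalizedFactors_le_natDegree {F : Type*} [Field F] [DecidableEq F] {f : F[X]}
    (hf : f ≠ 0) : (normalizedFactors f).card ≤ f.natDegree := by
  have hdeg : (normalizedFactors f).prod.natDegree = f.natDegree :=
    natDegree_eq_of_degree_eq (degree_eq_degree_of_associated (prod_normalizedFactors hf))
  rw [← hdeg, natDegree_multiset_prod _ (zero_notMem_normalizedFactors f),
    ← Multiset.card_map natDegree, ← mul_one (Multiset.card _), ← smul_eq_mul]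
  refine Multiset.card_nsmul_le_sum fun d hd => ?_
  obtain ⟨p, hp, rfl⟩ := Multiset.mem_map.1 hd
  exact (irreducible_of_normalized_factor p hp).natDegree_pos

theorem exists_finset_of_mem_ideal {R : Type*} [CommRing R] [IsDomain R] [IsPrincipalIdealRing R]
    [NormalizationMonoid R] {f : R} (hf : f ≠ 0) :
    ∃ D : Finset (Ideal R), D.card ≤ 2 ^ (normalizedFactors f).card ∧ ∀ I, f ∈ I → I ∈ D := by
  classical
  refine ⟨(normalizedFactors f).powerset.toFinset.image fun s => Ideal.span {s.prod}, ?_,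
    fun I hI => ?_⟩
  · rw [← Multiset.card_powerset]
    exact Finset.card_image_le.trans (Multiset.toFinset_card_le _)
  · obtain ⟨g, rfl⟩ := (IsPrincipalIdealRing.principal I).principal
    have hgf : g ∣ f := Ideal.mem_span_singleton.1 hI
    have hg : g ≠ 0 := ne_zero_of_dvd_ne_zero hf hgf
    refine Finset.mem_image.2 ⟨normalizedFactors g, ?_,
      Ideal.span_singleton_eq_span_singleton.2 (prod_normalizedFactors hg)⟩
    rw [Multiset.mem_toFinset, Multiset.mem_powerset]
    exact (dvd_iff_normalizedFactors_le_normalizedFactors hg hf).1 hgf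

variable {F m : Type*} [Field F] [Fintype m] [DecidableEq m]

open Classical in
theorem card_image_elementaryIdeals_le (Ω : Finset (Matrix m m F)) (Φ : Finset F[X]) (d : ℕ)
    (hΦ : ∀ f ∈ Φ, f ≠ 0 ∧ f.natDegree ≤ d) (hΩ : ∀ A ∈ Ω, ∃ f ∈ Φ, aeval A f = 0) :
    (Ω.image elementaryIdeals).card ≤ Φ.card * (2 ^ d) ^ Fintype.card m := by
  choose! D hDcard hD using fun (f : F[X]) (hf : f ≠ 0) => exists_finset_of_mem_ideal hf
  calc (Ω.image elementaryIdeals).card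
      ≤ (Φ.biUnion fun f => Fintype.piFinset fun _ : m => D f).card := by
        refine Finset.card_le_card (Finset.image_subset_iff.2 fun A hA => ?_)
        obtain ⟨f, hf, hfA⟩ := hΩ A hA
        exact Finset.mem_biUnion.2 ⟨f, hf, Fintype.mem_piFinset.2 fun i =>
          hD f (hΦ f hf).1 _ (mem_elementaryIdeals hfA i)⟩
    _ ≤ Φ.card * (2 ^ d) ^ Fintype.card m := by
        refine Finset.card_biUnion_le_card_mul _ _ _ fun f hf => ?_
        obtain ⟨hf0, hfd⟩ := hΦ f hf
        rw [Fintype.card_piFinset, Finset.prod_const, Finset.card_univ]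
        gcongr
        refine (hDcard f hf0).trans ?_
        gcongr
        exacts [one_le_two, (card_normalizedFactors_le_natDegree hf0).trans hfd]

theorem sum_card_stabilizer_le_of_aeval_eq_zero [Finite F] (Ω : Finset (Matrix m m F))
    (Φ : Finset F[X]) (d : ℕ) (hΦ : ∀ f ∈ Φ, f ≠ 0 ∧ f.natDegree ≤ d)
    (hΩ : ∀ A ∈ Ω, ∃ f ∈ Φ, aeval A f = 0) :
    ∑ A ∈ Ω, Nat.card (MulAction.stabilizer (ConjAct (Matrix m m F)ˣ) A) ≤
      Φ.card * (2 ^ d) ^ Fintype.card m * Nat.card (Matrix m m F)ˣ := by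
  classical
  have : Finite (ConjAct (Matrix m m F)ˣ) := inferInstanceAs (Finite (Matrix m m F)ˣ)
  calc _ ≤ (Ω.image elementaryIdeals).card * Nat.card (ConjAct (Matrix m m F)ˣ) :=
        sum_card_stabilizer_le_card_image_mul _ _ fun A B hAB =>
          mem_orbit_conjAct_of_isConj (isConj_of_elementaryIdeals_eq hAB)
    _ ≤ Φ.card * (2 ^ d) ^ Fintype.card m * Nat.card (Matrix m m F)ˣ :=
        Nat.mul_le_mul_right _ (card_image_elementaryIdeals_le Ω Φ d hΦ hΩ)

end ConjugacyClasses

section ConjugateToNegative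

open Polynomial

theorem charpoly_neg {R m : Type*} [CommRing R] [Fintype m] [DecidableEq m] (A : Matrix m m R) :
    (-A).charpoly = (-1) ^ Fintype.card m * A.charpoly.comp (-X) := by
  have hmap : (compRingHom (-X : R[X])).mapMatrix A.charmatrix = -(-A).charmatrix := by
    ext1 i j
    by_cases hij : i = j
    · subst hij
      simp [Matrix.charmatrix_apply_eq, neg_add_eq_sub]
    · simp [Matrix.charmatrix_apply_ne _ _ _ hij]
  rw [← coe_compRingHom_apply, Matrix.charpoly, Matrix.charpoly, RingHom.map_det, hmap,
    Matrix.det_neg, ← mul_assoc, ← mul_pow, neg_one_mul, neg_neg, one_pow, one_mul]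

variable {F m : Type*} [Field F] [Fintype m] [DecidableEq m]

theorem coeff_charpoly_eq_zero_of_isConj_neg (h2 : (2 : F) ≠ 0) {A : Matrix m m F}
    (hA : IsConj A (-A)) {i : ℕ} (hi : Odd (Fintype.card m + i)) : A.charpoly.coeff i = 0 := by
  obtain ⟨u, hu⟩ := hA
  have hneg : (-A).charpoly = A.charpoly := by
    rw [← Matrix.charpoly_units_conj u A, hu.eq, ← Matrix.coe_units_inv, Units.mul_inv_cancel_right]
  have hcoeff : A.charpoly.coeff i = -A.charpoly.coeff i := by
    conv_lhs => rw [← hneg, charpoly_neg]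
    rw [← C_1, ← C_neg, ← C_pow, coeff_C_mul, ← neg_one_mul (X : F[X]), ← C_1, ← C_neg,
      comp_C_mul_X_coeff, mul_comm (coeff _ _), ← mul_assoc, ← pow_add, hi.neg_one_pow, neg_one_mul]
  exact (mul_eq_zero.1 (by linear_combination hcoeff : 2 * A.charpoly.coeff i = 0)).resolve_left h2

theorem card_monic_le_of_coeff_eq_zero [Fintype F] (n : ℕ) (Φ : Finset F[X])
    (hΦ : ∀ f ∈ Φ, f.Monic ∧ f.natDegree = n ∧ ∀ i, Odd (n + i) → f.coeff i = 0) :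
    Φ.card ≤ Fintype.card F ^ (n / 2) := by
  classical
  have hcard : (Finset.univ : Finset (Fin (n / 2) → F)).card = Fintype.card F ^ (n / 2) := by
    simp
  rw [← hcard]
  refine Finset.card_le_card_of_injOn (fun f k => f.coeff (n - 2 * (k + 1)))
    (fun _ _ => Finset.mem_coe.2 (Finset.mem_univ _)) fun f hf g hg hfg => ?_
  obtain ⟨hf_monic, hf_deg, hf_odd⟩ := hΦ f hf
  obtain ⟨hg_monic, hg_deg, hg_odd⟩ := hΦ g hg
  ext i
  rcases lt_trichotomy i n with hi | rfl | hi
  · rcases Nat.even_or_odd (n + i) with heven | hodd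
    · obtain ⟨k, hk⟩ := heven
      have hindex : n - 2 * (n - k - 1 + 1) = i := by omega
      simpa only [hindex] using congrFun hfg ⟨n - k - 1, by omega⟩
    · rw [hf_odd i hodd, hg_odd i hodd]
  · rw [← hf_deg, hf_monic.coeff_natDegree, hf_deg, ← hg_deg, hg_monic.coeff_natDegree]
  · rw [coeff_eq_zero_of_natDegree_lt (hf_deg.trans_lt hi),
      coeff_eq_zero_of_natDegree_lt (hg_deg.trans_lt hi)]

theorem card_units_matrix_le [Fintype F] :
    Nat.card (Matrix m m F)ˣ ≤ Fintype.card F ^ Fintype.card m ^ 2 := by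
  classical
  rw [pow_two, ← card_matrix, ← Nat.card_eq_fintype_card]
  exact Nat.card_le_card_of_injective _ Units.val_injective

theorem sum_pow_anticommRank_units_matrix_le [Fintype F] [Fintype (Matrix m m F)ˣ]
    (h2 : (2 : F) ≠ 0) :
    ∑ u : (Matrix m m F)ˣ, Fintype.card F ^ anticommRank F (u : Matrix m m F) ≤
      Fintype.card F ^ (Fintype.card m / 2) * (2 ^ Fintype.card m) ^ Fintype.card m *
        Fintype.card F ^ Fintype.card m ^ 2 := by
  classical
  set Ω : Finset (Matrix m m F) := {A | IsConj A (-A)}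
  have hΦ : ∀ f ∈ Ω.image Matrix.charpoly, f.Monic ∧ f.natDegree = Fintype.card m ∧
      ∀ i, Odd (Fintype.card m + i) → f.coeff i = 0 := by
    rw [Finset.forall_mem_image]
    exact fun A hA => ⟨A.charpoly_monic, A.charpoly_natDegree_eq_dim, fun i =>
      coeff_charpoly_eq_zero_of_isConj_neg h2 (Finset.mem_filter.1 hA).2⟩
  calc _ ≤ ∑ A ∈ Ω, Nat.card (MulAction.stabilizer (ConjAct (Matrix m m F)ˣ) A) :=
        sum_pow_anticommRank_units_le F
    _ ≤ (Ω.image Matrix.charpoly).card * (2 ^ Fintype.card m) ^ Fintype.card m *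
          Nat.card (Matrix m m F)ˣ :=
        sum_card_stabilizer_le_of_aeval_eq_zero _ _ _
          (fun f hf => ⟨(hΦ f hf).1.ne_zero, (hΦ f hf).2.1.le⟩)
          fun A hA => ⟨_, Finset.mem_image_of_mem _ hA, A.aeval_self_charpoly⟩
    _ ≤ _ := by
        gcongr
        exacts [card_monic_le_of_coeff_eq_zero _ _ hΦ, card_units_matrix_le]

end ConjugateToNegative

section Centralizers

open Polynomial

variable {F m : Type*} [Field F] [Fintype m] [DecidableEq m]

theorem card_filter_det_add_smul_one_eq_zero_le [Fintype F] [DecidableEq F]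
    (A : Matrix m m F) :
    (Finset.univ.filter fun t : F => (A + t • (1 : Matrix m m F)).det = 0).card ≤
      Fintype.card m := by
  have hroots : (Finset.univ.filter fun t : F => (A + t • (1 : Matrix m m F)).det = 0) ⊆
      (-A).charpoly.roots.toFinset := fun t ht => by
    rw [Multiset.mem_toFinset, mem_roots (Matrix.charpoly_monic _).ne_zero, IsRoot,
      Matrix.eval_charpoly, sub_neg_eq_add, add_comm, Matrix.scalar_apply,
      ← Matrix.smul_one_eq_diagonal]
    exact (Finset.mem_filter.1 ht).2
  calc _ ≤ (-A).charpoly.roots.toFinset.card := Finset.card_le_card hroots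
    _ ≤ (-A).charpoly.roots.card := Multiset.toFinset_card_le _
    _ ≤ (-A).charpoly.natDegree := card_roots' _
    _ = Fintype.card m := (-A).charpoly_natDegree_eq_dim

theorem card_mul_card_det_eq_zero_le [Fintype F] (T : Submodule F (Matrix m m F))
    (hT : 1 ∈ T) :
    Fintype.card F * Nat.card {Y : T // Y.1.det = 0} ≤ Nat.card T * Fintype.card m := by
  classical
  have hshift (t : F) : (Finset.univ.filter fun Y : T => Y.1.det = 0).card =
      (Finset.univ.filter fun Y : T => (Y.1 + t • (1 : Matrix m m F)).det = 0).card :=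
    Finset.card_equiv (Equiv.subRight ⟨t • 1, T.smul_mem t hT⟩) fun Y => by simp
  calc Fintype.card F * Nat.card {Y : T // Y.1.det = 0}
      = ∑ t : F, (Finset.univ.filter fun Y : T => (Y.1 + t • (1 : Matrix m m F)).det = 0).card := by
        simp_rw [← hshift]
        rw [Finset.sum_const, smul_eq_mul, Finset.card_univ, Nat.card_eq_fintype_card,
          Fintype.card_subtype]
    _ = ∑ Y : T, (Finset.univ.filter fun t : F => (Y.1 + t • (1 : Matrix m m F)).det = 0).card :=
        Finset.sum_card_bipartiteAbove_eq_sum_card_bipartiteBelow _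
    _ ≤ ∑ _Y : T, Fintype.card m :=
        Finset.sum_le_sum fun Y _ => card_filter_det_add_smul_one_eq_zero_le Y.1
    _ = Nat.card T * Fintype.card m := by
        rw [Finset.sum_const, smul_eq_mul, Finset.card_univ, Nat.card_eq_fintype_card]

theorem card_twistedCentralizer_one_le [Finite F] (A : Matrix m m F) :
    Nat.card (twistedCentralizer (1 : F) A) ≤
      Nat.card (MulAction.stabilizer (ConjAct (Matrix m m F)ˣ) A) +
        Nat.card {Y : twistedCentralizer (1 : F) A // Y.1.det = 0} := by
  classical
  let toStabilizer (Y : {Y : twistedCentralizer (1 : F) A // Y.1.det ≠ 0}) :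
      MulAction.stabilizer (ConjAct (Matrix m m F)ˣ) A :=
    ⟨ConjAct.toConjAct (Matrix.GeneralLinearGroup.mkOfDetNeZero Y.1.1 Y.2),
      toConjAct_smul_eq_iff.2 (mem_twistedCentralizer_one.1 Y.1.2).symm⟩
  have hinj : Function.Injective toStabilizer := fun Y Z hYZ =>
    Subtype.ext (Subtype.ext (congrArg (fun g => (ConjAct.ofConjAct g.1).1) hYZ))
  have : Finite (ConjAct (Matrix m m F)ˣ) := inferInstanceAs (Finite (Matrix m m F)ˣ)
  rw [← Nat.card_congr (Equiv.sumCompl fun Y : twistedCentralizer (1 : F) A => Y.1.det = 0),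
    Nat.card_sum, add_comm]
  exact Nat.add_le_add_right (Nat.card_le_card_of_injective _ hinj) _

theorem card_pow_finrank_twistedCentralizer_one_le [Fintype F] [Nonempty m] (A : Matrix m m F) :
    Fintype.card F ^ finrank F (twistedCentralizer (1 : F) A) ≤
      (2 * Fintype.card m) ^ Fintype.card m ^ 2 *
        Nat.card (MulAction.stabilizer (ConjAct (Matrix m m F)ˣ) A) := by
  have : Finite (ConjAct (Matrix m m F)ˣ) := inferInstanceAs (Finite (Matrix m m F)ˣ)
  have hm : 0 < Fintype.card m := Fintype.card_pos
  have hstab : 0 < Nat.card (MulAction.stabilizer (ConjAct (Matrix m m F)ˣ) A) := Nat.card_pos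
  rcases le_or_gt (2 * Fintype.card m) (Fintype.card F) with hq | hq
  · have hone : (1 : Matrix m m F) ∈ twistedCentralizer (1 : F) A :=
      mem_twistedCentralizer_one.2 (by rw [mul_one, one_mul])
    have hsing := card_mul_card_det_eq_zero_le _ hone
    have hhalf : 2 * Nat.card {Y : twistedCentralizer (1 : F) A // Y.1.det = 0} ≤
        Nat.card (twistedCentralizer (1 : F) A) := by
      refine Nat.le_of_mul_le_mul_right ((le_of_eq ?_).trans
        ((Nat.mul_le_mul_right _ hq).trans hsing)) hm
      ring
    have htwo : Nat.card (twistedCentralizer (1 : F) A) ≤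
        2 * Nat.card (MulAction.stabilizer (ConjAct (Matrix m m F)ˣ) A) := by
      have := card_twistedCentralizer_one_le A
      omega
    rw [← Nat.card_eq_fintype_card, ← Module.natCard_eq_pow_finrank (K := F)]
    refine htwo.trans (Nat.mul_le_mul_right _ ?_)
    calc 2 ≤ 2 * Fintype.card m := by omega
      _ ≤ (2 * Fintype.card m) ^ Fintype.card m ^ 2 := Nat.le_self_pow (by positivity) _
  · have hfinrank : finrank F (twistedCentralizer (1 : F) A) ≤ Fintype.card m ^ 2 :=
      (Submodule.finrank_le _).trans (by simp [Module.finrank_matrix, pow_two])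
    calc Fintype.card F ^ finrank F (twistedCentralizer (1 : F) A)
        ≤ Fintype.card F ^ Fintype.card m ^ 2 := Nat.pow_le_pow_right Fintype.card_pos hfinrank
      _ ≤ (2 * Fintype.card m) ^ Fintype.card m ^ 2 := Nat.pow_le_pow_left hq.le _
      _ ≤ _ := Nat.le_mul_of_pos_right _ hstab

end Centralizers

section RankFibers

/-- The pairs `(P, Q)` of an injective `m × k` matrix and a surjective `k × m` matrix; the product
`P * Q` then ranges over the `m × m` matrices of rank `Fintype.card k`. Injectivity and surjectivity
are encoded by one-sided inverses. -/
def fullRankPairs (F m k : Type*) [Field F] [Fintype m] [Fintype k] [DecidableEq k] :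
    Set (Matrix m k F × Matrix k m F) :=
  {x | (∃ P' : Matrix k m F, P' * x.1 = 1) ∧ ∃ Q' : Matrix m k F, x.2 * Q' = 1}

variable {F m k : Type*} [Field F] [Fintype m] [Fintype k] [DecidableEq k]

theorem card_units_le_card_fullRankPairs [Finite F] {A : Matrix m m F}
    (hA : A.rank = Fintype.card k) :
    Nat.card (Matrix k k F)ˣ ≤ Nat.card {x // x ∈ fullRankPairs F m k ∧ x.1 * x.2 = A} := by
  obtain ⟨P, Q, P', Q', rfl, hP, hQ⟩ := exists_mul_eq_of_rank_eq_card (k := k) hA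
  refine Nat.card_le_card_of_injective (fun u => ⟨(P * u.1, u⁻¹.1 * Q),
    ⟨⟨u⁻¹.1 * P', ?_⟩, ⟨Q' * u.1, ?_⟩⟩, ?_⟩) fun u v huv => Units.ext ?_
  · rw [Matrix.mul_assoc, ← Matrix.mul_assoc P', hP, Matrix.one_mul, Units.inv_mul]
  · rw [Matrix.mul_assoc, ← Matrix.mul_assoc Q, hQ, Matrix.one_mul, Units.inv_mul]
  · rw [Matrix.mul_assoc, ← Matrix.mul_assoc u.1, Units.mul_inv, Matrix.one_mul]
  · have hPu : P * u.1 = P * v.1 := congrArg (fun x => x.1.1) huv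
    simpa only [← Matrix.mul_assoc, hP, Matrix.one_mul] using congrArg (P' * ·) hPu

open Classical in
theorem card_units_mul_sum_rank_eq_le [DecidableEq m] [Fintype F] (h : Matrix m m F → ℝ)
    (hh : ∀ A, 0 ≤ h A) :
    (Nat.card (Matrix k k F)ˣ : ℝ) * ∑ A : Matrix m m F with A.rank = Fintype.card k, h A ≤
      ∑ x with x ∈ fullRankPairs F m k, h (x.1 * x.2) := by
  rw [← Finset.sum_fiberwise _ fun x : Matrix m k F × Matrix k m F => x.1 * x.2, Finset.mul_sum]
  refine le_trans (Finset.sum_le_sum fun A hA => ?_) (Finset.sum_le_univ_sum_of_nonneg fun A =>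
    Finset.sum_nonneg fun _ _ => hh _)
  rw [Finset.sum_congr rfl fun x hx => congrArg h (Finset.mem_filter.1 hx).2, Finset.sum_const,
    nsmul_eq_mul, Finset.filter_filter, ← Fintype.card_subtype, ← Nat.card_eq_fintype_card]
  gcongr
  exacts [hh A, card_units_le_card_fullRankPairs (Finset.mem_filter.1 hA).2]

theorem card_mul_sum_comp_addMonoidHom {G H : Type*} [AddGroup G] [AddGroup H] [Fintype G]
    [Fintype H] (φ : G →+ H) (hφ : Function.Surjective φ) (h : H → ℝ) :
    (Fintype.card H : ℝ) * ∑ g, h (φ g) = Fintype.card G * ∑ b, h b := by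
  have hshift (b : H) : ∑ g, h (φ g) = ∑ g, h (φ g + b) := by
    obtain ⟨g₀, rfl⟩ := hφ b
    simpa only [Equiv.coe_addRight, map_add] using
      (Equiv.sum_comp (Equiv.addRight g₀) fun g => h (φ g)).symm
  calc (Fintype.card H : ℝ) * ∑ g, h (φ g) = ∑ _b : H, ∑ g, h (φ g) := by
        rw [Finset.sum_const, Finset.card_univ, nsmul_eq_mul]
    _ = ∑ g, ∑ b, h (φ g + b) := by
        rw [Finset.sum_comm (s := Finset.univ (α := G))]
        exact Finset.sum_congr rfl fun b _ => hshift b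
    _ = ∑ _g : G, ∑ b, h b :=
        Finset.sum_congr rfl fun g _ => Equiv.sum_comp (Equiv.addLeft (φ g)) h
    _ = Fintype.card G * ∑ b, h b := by rw [Finset.sum_const, Finset.card_univ, nsmul_eq_mul]

end RankFibers

section MomentsByRank

theorem card_pow_le_two_pow_mul_card_units (F : Type*) [Field F] [Fintype F] (s : ℕ) :
    Fintype.card F ^ s ^ 2 ≤ 2 ^ s * Nat.card (Matrix (Fin s) (Fin s) F)ˣ := by
  have hfactor (i : Fin s) : Fintype.card F ^ s ≤
      2 * (Fintype.card F ^ s - Fintype.card F ^ (i : ℕ)) := by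
    have : 2 * Fintype.card F ^ (i : ℕ) ≤ Fintype.card F ^ s := calc
      2 * Fintype.card F ^ (i : ℕ) ≤ Fintype.card F * Fintype.card F ^ (i : ℕ) := by
        gcongr
        exact Fintype.one_lt_card
      _ = Fintype.card F ^ (i + 1 : ℕ) := (pow_succ' _ _).symm
      _ ≤ Fintype.card F ^ s := Nat.pow_le_pow_right Fintype.card_pos i.2
    omega
  calc Fintype.card F ^ s ^ 2 = ∏ _i : Fin s, Fintype.card F ^ s := by
        rw [Finset.prod_const, Finset.card_univ, Fintype.card_fin, ← pow_mul, pow_two]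
    _ ≤ ∏ i : Fin s, 2 * (Fintype.card F ^ s - Fintype.card F ^ (i : ℕ)) :=
        Finset.prod_le_prod' fun i _ => hfactor i
    _ = 2 ^ s * Nat.card (Matrix (Fin s) (Fin s) F)ˣ := by
        rw [Finset.prod_mul_distrib, Finset.prod_const, Finset.card_univ, Fintype.card_fin,
          ← Matrix.card_GL_field]

variable {F m k : Type*} [Field F] [Fintype m] [Fintype k] [DecidableEq m] [DecidableEq k]

theorem anticommRank_mul_le_of_mem_fullRankPairs {j : ℕ} (hj : Fintype.card m = Fintype.card k + j)
    {x : Matrix m k F × Matrix k m F} (hx : x ∈ fullRankPairs F m k) :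
    anticommRank F (x.1 * x.2) ≤ j ^ 2 + anticommRank F (x.2 * x.1) := by
  obtain ⟨⟨P', hP⟩, Q', hQ⟩ := hx
  have := anticommRank_mul_add_le hP hQ
  rw [hj] at this
  nlinarith

variable [Fintype F]

theorem card_pow_mul_sum_mul_right {P : Matrix m k F} {P' : Matrix k m F} (hP : P' * P = 1)
    (h : Matrix k k F → ℝ) :
    (Fintype.card F : ℝ) ^ Fintype.card k ^ 2 * ∑ Q : Matrix k m F, h (Q * P) =
      (Fintype.card F : ℝ) ^ (Fintype.card k * Fintype.card m) * ∑ B, h B := by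
  have hsurj : Function.Surjective (mulRightLinearMap k F P) := fun B =>
    ⟨B * P', by rw [mulRightLinearMap_apply, Matrix.mul_assoc, hP, Matrix.mul_one]⟩
  simpa only [card_matrix, Nat.cast_pow, pow_two, LinearMap.toAddMonoidHom_coe,
    mulRightLinearMap_apply] using
    card_mul_sum_comp_addMonoidHom (mulRightLinearMap k F P).toAddMonoidHom hsurj h

open Classical in
theorem card_pow_mul_sum_fullRankPairs_le {j : ℕ} (hj : Fintype.card m = Fintype.card k + j)
    {y : ℝ} (hy : 1 ≤ y) :
    (Fintype.card F : ℝ) ^ Fintype.card k ^ 2 *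
        ∑ x with x ∈ fullRankPairs F m k, y ^ anticommRank F (x.1 * x.2) ≤
      (Fintype.card F : ℝ) ^ (2 * (Fintype.card k * Fintype.card m)) * y ^ j ^ 2 *
        ∑ B : Matrix k k F, y ^ anticommRank F B := by
  set L : Finset (Matrix m k F) := {P | ∃ P' : Matrix k m F, P' * P = 1}
  have hL : (L.card : ℝ) ≤ (Fintype.card F : ℝ) ^ (Fintype.card k * Fintype.card m) := by
    rw [mul_comm]
    exact_mod_cast (Finset.card_le_univ L).trans_eq card_matrix
  set q := (Fintype.card F : ℝ)
  have hsum : ∑ x with x ∈ fullRankPairs F m k, y ^ anticommRank F (x.1 * x.2) ≤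
      ∑ P ∈ L, ∑ Q : Matrix k m F, y ^ (j ^ 2) * y ^ anticommRank F (Q * P) := by
    rw [← Finset.sum_product']
    refine (Finset.sum_le_sum fun x hx => ?_).trans (Finset.sum_le_sum_of_subset_of_nonneg
      (fun x hx => ?_) fun _ _ _ => by positivity)
    · rw [← pow_add]
      exact pow_le_pow_right₀ hy
        (anticommRank_mul_le_of_mem_fullRankPairs hj (Finset.mem_filter.1 hx).2)
    · exact Finset.mem_product.2 ⟨Finset.mem_filter.2
        ⟨Finset.mem_univ _, (Finset.mem_filter.1 hx).2.1⟩, Finset.mem_univ _⟩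
  calc _ ≤ q ^ Fintype.card k ^ 2 *
          ∑ P ∈ L, ∑ Q : Matrix k m F, y ^ (j ^ 2) * y ^ anticommRank F (Q * P) := by gcongr
    _ = ∑ P ∈ L, y ^ (j ^ 2) *
          (q ^ Fintype.card k ^ 2 * ∑ Q : Matrix k m F, y ^ anticommRank F (Q * P)) := by
        simp_rw [← Finset.mul_sum]
        ring
    _ = L.card * (y ^ (j ^ 2) * (q ^ (Fintype.card k * Fintype.card m) *
          ∑ B : Matrix k k F, y ^ anticommRank F B)) := by
        rw [← nsmul_eq_mul, ← Finset.sum_const]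
        refine Finset.sum_congr rfl fun P hP => ?_
        obtain ⟨P', hP'⟩ := (Finset.mem_filter.1 hP).2
        rw [card_pow_mul_sum_mul_right hP' fun B => y ^ anticommRank F B]
    _ ≤ q ^ (Fintype.card k * Fintype.card m) * (y ^ (j ^ 2) *
          (q ^ (Fintype.card k * Fintype.card m) *
            ∑ B : Matrix k k F, y ^ anticommRank F B)) := by gcongr
    _ = _ := by ring

theorem sum_pow_anticommRank_rank_eq_le {s j : ℕ} (hj : Fintype.card m = s + j) {y : ℝ}
    (hy : 1 ≤ y) :
    ∑ A : Matrix m m F with A.rank = s, y ^ anticommRank F A ≤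
      2 ^ s * (Fintype.card F : ℝ) ^ (2 * (s * j)) * y ^ j ^ 2 *
        ∑ B : Matrix (Fin s) (Fin s) F, y ^ anticommRank F B := by
  classical
  have hunits : (Fintype.card F : ℝ) ^ s ^ 2 ≤
      2 ^ s * (Nat.card (Matrix (Fin s) (Fin s) F)ˣ : ℝ) := by
    exact_mod_cast card_pow_le_two_pow_mul_card_units F s
  have hrank := card_units_mul_sum_rank_eq_le (k := Fin s)
    (fun A : Matrix m m F => y ^ anticommRank F A) fun A => by positivity
  have hpairs := card_pow_mul_sum_fullRankPairs_le (F := F) (m := m) (k := Fin s) (j := j)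
    (by rw [Fintype.card_fin, hj]) hy
  rw [Fintype.card_fin] at hrank hpairs
  set q := (Fintype.card F : ℝ)
  set M := ∑ B : Matrix (Fin s) (Fin s) F, y ^ anticommRank F B
  set N := ∑ A : Matrix m m F with A.rank = s, y ^ anticommRank F A
  set g := (Nat.card (Matrix (Fin s) (Fin s) F)ˣ : ℝ)
  have hq : 0 < q ^ s ^ 2 := pow_pos (Nat.cast_pos.2 Fintype.card_pos) _
  refine le_of_mul_le_mul_left ?_ (mul_pos hq hq)
  calc q ^ s ^ 2 * q ^ s ^ 2 * N ≤ q ^ s ^ 2 * (2 ^ s * g) * N := by gcongr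
    _ = 2 ^ s * (q ^ s ^ 2 * (g * N)) := by ring
    _ ≤ 2 ^ s * (q ^ s ^ 2 *
          ∑ x with x ∈ fullRankPairs F m (Fin s), y ^ anticommRank F (x.1 * x.2)) := by gcongr
    _ ≤ 2 ^ s * (q ^ (2 * (s * Fintype.card m)) * y ^ j ^ 2 * M) := by gcongr
    _ = q ^ s ^ 2 * q ^ s ^ 2 * (2 ^ s * q ^ (2 * (s * j)) * y ^ j ^ 2 * M) := by
        rw [hj]
        ring

end MomentsByRank

section UnitMoments

open Polynomial in
theorem sum_pow_finrank_twistedCentralizer_one_le_of_mul_self_eq_smul_one {F m : Type*} [Field F]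
    [Fintype F] [Fintype m] [DecidableEq m] [Nonempty m] (Ω : Finset (Matrix m m F))
    (hΩ : ∀ A ∈ Ω, ∃ σ : F, A * A = σ • 1) :
    ∑ A ∈ Ω, Fintype.card F ^ finrank F (twistedCentralizer (1 : F) A) ≤
      (2 * Fintype.card m) ^ Fintype.card m ^ 2 *
        (Fintype.card F * 4 ^ Fintype.card m * Fintype.card F ^ Fintype.card m ^ 2) := by
  classical
  let Φ : Finset F[X] := Finset.univ.image fun σ : F => X ^ 2 - C σ
  have hΦcard : Φ.card ≤ Fintype.card F := Finset.card_image_le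
  have hΦ : ∀ f ∈ Φ, f ≠ 0 ∧ f.natDegree ≤ 2 := fun f hf => by
    obtain ⟨σ, -, rfl⟩ := Finset.mem_image.1 hf
    exact ⟨X_pow_sub_C_ne_zero two_pos σ, natDegree_X_pow_sub_C.le⟩
  have hroot : ∀ A ∈ Ω, ∃ f ∈ Φ, aeval A f = 0 := fun A hA => by
    obtain ⟨σ, hσ⟩ := hΩ A hA
    refine ⟨X ^ 2 - C σ, Finset.mem_image_of_mem _ (Finset.mem_univ σ), ?_⟩
    rw [map_sub, map_pow, aeval_X, aeval_C, pow_two, hσ, Algebra.algebraMap_eq_smul_one, sub_self]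
  calc ∑ A ∈ Ω, Fintype.card F ^ finrank F (twistedCentralizer (1 : F) A)
      ≤ ∑ A ∈ Ω, (2 * Fintype.card m) ^ Fintype.card m ^ 2 *
          Nat.card (MulAction.stabilizer (ConjAct (Matrix m m F)ˣ) A) :=
        Finset.sum_le_sum fun A _ => card_pow_finrank_twistedCentralizer_one_le A
    _ = (2 * Fintype.card m) ^ Fintype.card m ^ 2 *
          ∑ A ∈ Ω, Nat.card (MulAction.stabilizer (ConjAct (Matrix m m F)ˣ) A) :=
        (Finset.mul_sum _ _ _).symm
    _ ≤ (2 * Fintype.card m) ^ Fintype.card m ^ 2 *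
          (Φ.card * (2 ^ 2) ^ Fintype.card m * Nat.card (Matrix m m F)ˣ) := by
        gcongr
        exact sum_card_stabilizer_le_of_aeval_eq_zero Ω Φ 2 hΦ hroot
    _ ≤ _ := by
        gcongr
        exacts [by norm_num, card_units_matrix_le]

variable {F m : Type*} [Field F] [Fintype F] [Fintype m] [DecidableEq m]

theorem one_le_sqrt_card (F : Type*) [Field F] [Fintype F] : 1 ≤ √(Fintype.card F : ℝ) :=
  Real.one_le_sqrt.2 (Nat.one_le_cast.2 Fintype.card_pos)

theorem card_pow_eq_sqrt_card_pow (F : Type*) [Fintype F] (k : ℕ) :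
    (Fintype.card F : ℝ) ^ k = √(Fintype.card F : ℝ) ^ (2 * k) := by
  rw [pow_mul, Real.sq_sqrt (Nat.cast_nonneg _)]

theorem sum_sqrt_pow_anticommRank_le_of_mul_self_eq_smul_one (h2 : (2 : F) ≠ 0)
    (hm : 3 ≤ Fintype.card m) (Ω : Finset (Matrix m m F))
    (hΩ : ∀ A ∈ Ω, ∃ σ : F, σ ≠ 0 ∧ A * A = σ • 1) :
    ∑ A ∈ Ω, √(Fintype.card F : ℝ) ^ (3 * anticommRank F A) ≤
      (2 * Fintype.card m) ^ Fintype.card m ^ 2 * 4 ^ Fintype.card m *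
        √(Fintype.card F : ℝ) ^ (3 * Fintype.card m ^ 2 - 2 * (Fintype.card m - 1)) := by
  have : Nonempty m := Fintype.card_pos_iff.1 (by omega)
  have hsum : (∑ A ∈ Ω, (Fintype.card F : ℝ) ^ finrank F (twistedCentralizer (1 : F) A)) ≤
      (2 * Fintype.card m) ^ Fintype.card m ^ 2 *
        (Fintype.card F * 4 ^ Fintype.card m * (Fintype.card F : ℝ) ^ Fintype.card m ^ 2) := by
    exact_mod_cast sum_pow_finrank_twistedCentralizer_one_le_of_mul_self_eq_smul_one Ω
      fun A hA => (hΩ A hA).imp fun _ hσ => hσ.2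
  have hexp {A : Matrix m m F} (hA : A ∈ Ω) : 3 * anticommRank F A ≤
      Fintype.card m ^ 2 - 2 * Fintype.card m +
        2 * finrank F (twistedCentralizer (1 : F) A) := by
    obtain ⟨σ, hσ, hAσ⟩ := hΩ A hA
    have hd := two_mul_anticommRank_le_of_mul_self_eq_smul_one h2 hσ hAσ
    have hdc := anticommRank_add_finrank_twistedCentralizer_one_of_mul_self_eq_smul_one h2 hσ hAσ
    rw [finrank_matrix, finrank_self, mul_one, ← pow_two] at hdc
    obtain h | h := hm.eq_or_lt
    · rw [← h] at hd hdc ⊢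
      omega
    · have : 4 * Fintype.card m ≤ Fintype.card m ^ 2 := by nlinarith
      omega
  have hm2 : 2 * Fintype.card m ≤ Fintype.card m ^ 2 := by nlinarith
  set t := √(Fintype.card F : ℝ)
  set n := Fintype.card m
  calc ∑ A ∈ Ω, t ^ (3 * anticommRank F A)
      ≤ ∑ A ∈ Ω, t ^ (n ^ 2 - 2 * n) *
          (Fintype.card F : ℝ) ^ finrank F (twistedCentralizer (1 : F) A) := by
        refine Finset.sum_le_sum fun A hA => ?_
        rw [card_pow_eq_sqrt_card_pow, ← pow_add]
        exact pow_le_pow_right₀ (one_le_sqrt_card F) (hexp hA)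
    _ ≤ t ^ (n ^ 2 - 2 * n) * ((2 * n) ^ n ^ 2 *
          (Fintype.card F * 4 ^ n * (Fintype.card F : ℝ) ^ n ^ 2)) := by
        rw [← Finset.mul_sum]
        gcongr
    _ = (2 * n) ^ n ^ 2 * 4 ^ n *
          (t ^ (n ^ 2 - 2 * n) * (Fintype.card F : ℝ) ^ (n ^ 2 + 1)) := by ring
    _ = _ := by
        rw [card_pow_eq_sqrt_card_pow, ← pow_add]
        congr 2
        omega

theorem sum_sqrt_pow_anticommRank_le_of_isUnit (h2 : (2 : F) ≠ 0) {Ω : Finset (Matrix m m F)}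
    {M : ℕ} (hunit : ∀ A ∈ Ω, IsUnit A) (hM : ∀ A ∈ Ω, anticommRank F A ≤ M) :
    ∑ A ∈ Ω, √(Fintype.card F : ℝ) ^ (3 * anticommRank F A) ≤
      (2 ^ Fintype.card m) ^ Fintype.card m *
        √(Fintype.card F : ℝ) ^ (M + Fintype.card m + 2 * Fintype.card m ^ 2) := by
  classical
  have hsum : (∑ u : (Matrix m m F)ˣ, (Fintype.card F : ℝ) ^ anticommRank F (u : Matrix m m F)) ≤
      (Fintype.card F : ℝ) ^ (Fintype.card m / 2) * (2 ^ Fintype.card m) ^ Fintype.card m *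
        (Fintype.card F : ℝ) ^ Fintype.card m ^ 2 := by
    exact_mod_cast sum_pow_anticommRank_units_matrix_le h2
  have hΩ : Ω ⊆ Finset.univ.image ((↑) : (Matrix m m F)ˣ → Matrix m m F) := fun A hA =>
    Finset.mem_image.2 ⟨(hunit A hA).unit, Finset.mem_univ _, rfl⟩
  set t := √(Fintype.card F : ℝ)
  set n := Fintype.card m
  calc ∑ A ∈ Ω, t ^ (3 * anticommRank F A)
      ≤ ∑ A ∈ Ω, t ^ M * (Fintype.card F : ℝ) ^ anticommRank F A := by
        refine Finset.sum_le_sum fun A hA => ?_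
        rw [card_pow_eq_sqrt_card_pow, ← pow_add]
        have := hM A hA
        exact pow_le_pow_right₀ (one_le_sqrt_card F) (by omega)
    _ ≤ t ^ M *
          ∑ u : (Matrix m m F)ˣ, (Fintype.card F : ℝ) ^ anticommRank F (u : Matrix m m F) := by
        rw [← Finset.mul_sum, ← Finset.sum_image
          (f := fun A : Matrix m m F => (Fintype.card F : ℝ) ^ anticommRank F A)
          fun _ _ _ _ h => Units.ext h]
        gcongr
    _ ≤ t ^ M * ((Fintype.card F : ℝ) ^ (n / 2) * (2 ^ n) ^ n *
          (Fintype.card F : ℝ) ^ n ^ 2) := by gcongr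
    _ = (2 ^ n) ^ n * t ^ (M + 2 * (n / 2) + 2 * n ^ 2) := by
        rw [card_pow_eq_sqrt_card_pow, card_pow_eq_sqrt_card_pow, pow_add, pow_add]
        ring
    _ ≤ (2 ^ n) ^ n * t ^ (M + n + 2 * n ^ 2) := by
        gcongr
        exacts [one_le_sqrt_card F, Nat.mul_div_le n 2]

theorem anticommRank_add_card_le_of_isUnit {F : Type*} [Field F] (h2 : (2 : F) ≠ 0)
    {A : Matrix m m F} (hA : IsUnit A) :
    anticommRank F A + Fintype.card m ≤ Fintype.card m ^ 2 := by
  calc anticommRank F A + Fintype.card m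
      ≤ anticommRank F A + finrank F (twistedCentralizer (1 : F) A) := by
        gcongr
        exact card_le_finrank_twistedCentralizer_one A
    _ = finrank F (twistedCentralizer (1 : F) (A * A)) :=
        anticommRank_add_finrank_twistedCentralizer_one h2 hA
    _ ≤ finrank F (Matrix m m F) := Submodule.finrank_le _
    _ = Fintype.card m ^ 2 := by rw [finrank_matrix, finrank_self, mul_one, pow_two]

theorem anticommRank_add_three_mul_card_le {F : Type*} [Field F] (h2 : (2 : F) ≠ 0)
    {A : Matrix m m F} (hA : IsUnit A) (hsq : ∀ c : F, A * A ≠ c • 1) :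
    anticommRank F A + 3 * Fintype.card m ≤ Fintype.card m ^ 2 + 2 := by
  have hc := card_le_finrank_twistedCentralizer_one A
  have hdc := anticommRank_add_finrank_twistedCentralizer_one h2 hA
  have hcsq := finrank_twistedCentralizer_add_le one_ne_zero hsq
  omega

theorem sum_sqrt_pow_anticommRank_isUnit_le (h2 : (2 : F) ≠ 0) {Ω : Finset (Matrix m m F)}
    (hΩ : ∀ A ∈ Ω, IsUnit A) :
    ∑ A ∈ Ω, √(Fintype.card F : ℝ) ^ (3 * anticommRank F A) ≤
      2 ^ Fintype.card m ^ 2 * √(Fintype.card F : ℝ) ^ (3 * Fintype.card m ^ 2) := by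
  have hm : Fintype.card m ≤ Fintype.card m ^ 2 := Nat.le_self_pow two_ne_zero _
  have hd : ∀ A ∈ Ω, anticommRank F A ≤ Fintype.card m ^ 2 - Fintype.card m := fun A hA =>
    Nat.le_sub_of_add_le (anticommRank_add_card_le_of_isUnit h2 (hΩ A hA))
  refine (sum_sqrt_pow_anticommRank_le_of_isUnit h2 hΩ hd).trans_eq ?_
  rw [← pow_mul, ← pow_two, Nat.sub_add_cancel hm]
  congr 2
  ring

theorem sum_sqrt_pow_anticommRank_isUnit_le_of_three_le (h2 : (2 : F) ≠ 0) (hm : 3 ≤ Fintype.card m)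
    {Ω : Finset (Matrix m m F)} (hΩ : ∀ A ∈ Ω, IsUnit A) :
    ∑ A ∈ Ω, √(Fintype.card F : ℝ) ^ (3 * anticommRank F A) ≤
      (2 ^ Fintype.card m ^ 2 + (2 * Fintype.card m) ^ Fintype.card m ^ 2 * 4 ^ Fintype.card m) *
        √(Fintype.card F : ℝ) ^ (3 * Fintype.card m ^ 2 - 2 * (Fintype.card m - 1)) := by
  classical
  have : Nonempty m := Fintype.card_pos_iff.1 (by omega)
  have h3 : 3 * Fintype.card m ≤ Fintype.card m ^ 2 := by nlinarith
  have hnonscalar := sum_sqrt_pow_anticommRank_le_of_isUnit h2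
    (Ω := Ω.filter fun A => ∀ c : F, A * A ≠ c • 1)
    (M := Fintype.card m ^ 2 + 2 - 3 * Fintype.card m)
    (fun A hA => hΩ A (Finset.mem_filter.1 hA).1) fun A hA => Nat.le_sub_of_add_le <|
      anticommRank_add_three_mul_card_le h2 (hΩ A (Finset.mem_filter.1 hA).1)
        (Finset.mem_filter.1 hA).2
  rw [← pow_mul, ← pow_two, show Fintype.card m ^ 2 + 2 - 3 * Fintype.card m + Fintype.card m +
    2 * Fintype.card m ^ 2 = 3 * Fintype.card m ^ 2 - 2 * (Fintype.card m - 1) by omega]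
    at hnonscalar
  have hscalar := sum_sqrt_pow_anticommRank_le_of_mul_self_eq_smul_one h2 hm
    (Ω.filter fun A => ¬∀ c : F, A * A ≠ c • 1) fun A hA => by
      obtain ⟨hAΩ, hA⟩ := Finset.mem_filter.1 hA
      push Not at hA
      obtain ⟨σ, hσ⟩ := hA
      refine ⟨σ, ?_, hσ⟩
      rintro rfl
      exact ((hΩ A hAΩ).mul (hΩ A hAΩ)).ne_zero (by rw [hσ, zero_smul])
  rw [← Finset.sum_filter_add_sum_filter_not Ω fun A => ∀ c : F, A * A ≠ c • 1, add_mul]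
  exact add_le_add hnonscalar hscalar

end UnitMoments

section MatrixMoments

theorem two_ne_zero_of_odd_card {F : Type*} [Field F] [Fintype F] (hF : Odd (Fintype.card F)) :
    (2 : F) ≠ 0 :=
  Ring.two_ne_zero fun h => by
    have := FiniteField.even_card_iff_char_two.1 h
    rw [Nat.odd_iff] at hF
    omega

theorem eq_zero_of_rank_eq_zero {F m : Type*} [Field F] [Fintype m] {A : Matrix m m F}
    (hA : A.rank = 0) : A = 0 := by
  classical
  rw [Matrix.rank, Submodule.finrank_eq_zero, LinearMap.range_eq_bot] at hA
  exact Matrix.toLin'.injective (hA.trans (map_zero _).symm)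

theorem isUnit_of_rank_eq_card {F m : Type*} [Field F] [Fintype m] [DecidableEq m]
    {A : Matrix m m F} (hA : A.rank = Fintype.card m) : IsUnit A := by
  obtain ⟨P, Q, P', Q', rfl, hP, hQ⟩ := exists_mul_eq_of_rank_eq_card (k := m) hA
  exact (IsUnit.of_mul_eq_one_right P' hP).mul (IsUnit.of_mul_eq_one Q' hQ)

theorem sum_two_pow_add_two_pow_le (n : ℕ) :
    ∑ s ∈ Finset.range n, (2 : ℝ) ^ s * 2 ^ (s ^ 2 + s) + 2 ^ n ^ 2 ≤ 2 ^ (n ^ 2 + n) := by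
  induction n with
  | zero => norm_num
  | succ n ih =>
    have hmono : (2 : ℝ) ^ (n ^ 2 + n) ≤ 2 ^ (n ^ 2 + 2 * n) :=
      pow_le_pow_right₀ one_le_two (by omega)
    have hpos : (0 : ℝ) < 2 ^ n ^ 2 := by positivity
    rw [Finset.sum_range_succ]
    calc ∑ s ∈ Finset.range n, (2 : ℝ) ^ s * 2 ^ (s ^ 2 + s) + 2 ^ n * 2 ^ (n ^ 2 + n) +
          2 ^ (n + 1) ^ 2
        ≤ 2 ^ (n ^ 2 + 2 * n) + 2 ^ (n ^ 2 + 2 * n) + 2 * 2 ^ (n ^ 2 + 2 * n) := by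
          gcongr
          · linarith
          · exact le_of_eq (by ring)
          · exact le_of_eq (by ring)
      _ = 2 ^ (n ^ 2 + 2 * n + 2) := by ring
      _ ≤ 2 ^ ((n + 1) ^ 2 + (n + 1)) := pow_le_pow_right₀ one_le_two (by nlinarith)

variable {F m : Type*} [Field F] [Fintype F] [Fintype m] [DecidableEq m]

theorem sum_sqrt_pow_anticommRank_rank_eq_le {s : ℕ} (hs : s ≤ Fintype.card m) {C : ℝ}
    (hC : ∑ B : Matrix (Fin s) (Fin s) F, √(Fintype.card F : ℝ) ^ (3 * anticommRank F B) ≤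
      C * √(Fintype.card F : ℝ) ^ (3 * s ^ 2)) :
    ∑ A : Matrix m m F with A.rank = s, √(Fintype.card F : ℝ) ^ (3 * anticommRank F A) ≤
      2 ^ s * C *
        √(Fintype.card F : ℝ) ^ (3 * Fintype.card m ^ 2 - 2 * (s * (Fintype.card m - s))) := by
  obtain ⟨j, hj⟩ := Nat.exists_eq_add_of_le hs
  have hrank := sum_pow_anticommRank_rank_eq_le (F := F) hj
    (one_le_pow₀ (one_le_sqrt_card F) : 1 ≤ √(Fintype.card F : ℝ) ^ 3)
  simp only [card_pow_eq_sqrt_card_pow, ← pow_mul] at hrank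
  refine hrank.trans ?_
  have hexp : 3 * (s + j) ^ 2 - 2 * (s * j) = 2 * (2 * (s * j)) + 3 * j ^ 2 + 3 * s ^ 2 :=
    Nat.sub_eq_of_eq_add (by ring)
  rw [hj, Nat.add_sub_cancel_left, hexp]
  calc _ ≤ 2 ^ s * √(Fintype.card F : ℝ) ^ (2 * (2 * (s * j))) *
          √(Fintype.card F : ℝ) ^ (3 * j ^ 2) * (C * √(Fintype.card F : ℝ) ^ (3 * s ^ 2)) := by
        gcongr
    _ = _ := by ring

theorem sum_sqrt_pow_anticommRank_le (h2 : (2 : F) ≠ 0) (n : ℕ) :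
    ∑ A : Matrix (Fin n) (Fin n) F, √(Fintype.card F : ℝ) ^ (3 * anticommRank F A) ≤
      2 ^ (n ^ 2 + n) * √(Fintype.card F : ℝ) ^ (3 * n ^ 2) := by
  induction n using Nat.strong_induction_on with
  | _ n ih =>
  have hrank : ∀ A ∈ (Finset.univ : Finset (Matrix (Fin n) (Fin n) F)),
      A.rank ∈ Finset.range (n + 1) := fun A _ =>
    Finset.mem_range_succ_iff.2 A.rank_le_height
  rw [← Finset.sum_fiberwise_of_maps_to hrank, Finset.sum_range_succ]
  have hlow : ∀ s ∈ Finset.range n,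
      ∑ A : Matrix (Fin n) (Fin n) F with A.rank = s,
          √(Fintype.card F : ℝ) ^ (3 * anticommRank F A) ≤
        2 ^ s * 2 ^ (s ^ 2 + s) * √(Fintype.card F : ℝ) ^ (3 * n ^ 2) := fun s hs => by
    have hs := Finset.mem_range.1 hs
    refine (sum_sqrt_pow_anticommRank_rank_eq_le (by rw [Fintype.card_fin]; exact hs.le)
      (ih s hs)).trans ?_
    rw [Fintype.card_fin]
    gcongr
    exacts [one_le_sqrt_card F, Nat.sub_le _ _]
  have htop := sum_sqrt_pow_anticommRank_isUnit_le h2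
    (Ω := {A : Matrix (Fin n) (Fin n) F | A.rank = n}) fun A hA =>
      isUnit_of_rank_eq_card ((Finset.mem_filter.1 hA).2.trans (Fintype.card_fin n).symm)
  rw [Fintype.card_fin] at htop
  refine (add_le_add (Finset.sum_le_sum hlow) htop).trans ?_
  rw [← Finset.sum_mul, ← add_mul]
  gcongr
  exact sum_two_pow_add_two_pow_le n

theorem sum_sqrt_pow_anticommRank_rank_eq_le_of_mem_Ico (h2 : (2 : F) ≠ 0) {s : ℕ}
    (hs : s ∈ Finset.Ico 1 (Fintype.card m)) :
    ∑ A : Matrix m m F with A.rank = s, √(Fintype.card F : ℝ) ^ (3 * anticommRank F A) ≤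
      2 ^ s * 2 ^ (s ^ 2 + s) *
        √(Fintype.card F : ℝ) ^ (3 * Fintype.card m ^ 2 - 2 * (Fintype.card m - 1)) := by
  obtain ⟨hs1, hs⟩ := Finset.mem_Ico.1 hs
  have hexp : Fintype.card m - 1 ≤ s * (Fintype.card m - s) := by
    obtain ⟨j, hj⟩ := Nat.exists_eq_add_of_lt hs
    rw [hj, Nat.sub_le_iff_le_add, show s + j + 1 - s = j + 1 by omega]
    nlinarith
  refine (sum_sqrt_pow_anticommRank_rank_eq_le hs.le (sum_sqrt_pow_anticommRank_le h2 s)).trans ?_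
  gcongr
  exact one_le_sqrt_card F

theorem sum_ne_zero_le_sum_rank_eq [DecidableEq F] {h : Matrix m m F → ℝ} (hh : ∀ A, 0 ≤ h A)
    (hm : 1 ≤ Fintype.card m) :
    ∑ A : Matrix m m F with A ≠ 0, h A ≤
      ∑ s ∈ Finset.Ico 1 (Fintype.card m), ∑ A : Matrix m m F with A.rank = s, h A +
        ∑ A : Matrix m m F with A.rank = Fintype.card m, h A := by
  have hrank : ∀ A ∈ (Finset.univ.filter fun A : Matrix m m F => A ≠ 0),
      A.rank ∈ Finset.Ico 1 (Fintype.card m + 1) := fun A hA => Finset.mem_Ico.2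
    ⟨Nat.one_le_iff_ne_zero.2 (mt eq_zero_of_rank_eq_zero (Finset.mem_filter.1 hA).2),
      Nat.lt_succ_of_le A.rank_le_card_height⟩
  rw [← Finset.sum_fiberwise_of_maps_to hrank, ← Finset.sum_Ico_succ_top hm]
  refine Finset.sum_le_sum fun s _ => Finset.sum_le_sum_of_subset_of_nonneg ?_ fun _ _ _ => hh _
  exact Finset.filter_subset_filter _ (Finset.subset_univ _)

/-- The implied constant of the distance theorem for `n × n` matrices. The first summand comes from
the matrices of each rank, the second from the invertible matrices whose square is scalar. -/
noncomputable def distanceConstant (n : ℕ) : ℝ :=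
  2 ^ (n ^ 2 + n) + (2 * n) ^ n ^ 2 * 4 ^ n

theorem distanceConstant_pos (n : ℕ) : 0 < distanceConstant n := by
  unfold distanceConstant
  positivity

theorem sum_sqrt_pow_anticommRank_ne_zero_le [DecidableEq F] (h2 : (2 : F) ≠ 0)
    (hm : 3 ≤ Fintype.card m) :
    ∑ A : Matrix m m F with A ≠ 0, √(Fintype.card F : ℝ) ^ (3 * anticommRank F A) ≤
      distanceConstant (Fintype.card m) *
        √(Fintype.card F : ℝ) ^ (3 * Fintype.card m ^ 2 - 2 * (Fintype.card m - 1)) := by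
  have hunits := sum_sqrt_pow_anticommRank_isUnit_le_of_three_le h2 hm
    (Ω := {A : Matrix m m F | A.rank = Fintype.card m}) fun A hA =>
      isUnit_of_rank_eq_card (Finset.mem_filter.1 hA).2
  have hconst : ∑ s ∈ Finset.Ico 1 (Fintype.card m), (2 : ℝ) ^ s * 2 ^ (s ^ 2 + s) +
      2 ^ Fintype.card m ^ 2 ≤ 2 ^ (Fintype.card m ^ 2 + Fintype.card m) := by
    refine le_trans ?_ (sum_two_pow_add_two_pow_le (Fintype.card m))
    gcongr
    exact fun s hs => Finset.mem_range.2 (Finset.mem_Ico.1 hs).2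
  refine (sum_ne_zero_le_sum_rank_eq (fun A => by positivity) (by omega)).trans <|
    (add_le_add (Finset.sum_le_sum fun s hs =>
      sum_sqrt_pow_anticommRank_rank_eq_le_of_mem_Ico h2 hs) hunits).trans ?_
  rw [distanceConstant, ← Finset.sum_mul, ← add_mul, ← add_assoc]
  gcongr

end MatrixMoments

section DistanceSets

variable {F m ι : Type*} [Field F] [Fintype F] [Fintype m] [DecidableEq m] [Fintype ι]

theorem sum_sqrt_pow_mul_add_anticommRank_ne_zero_le [DecidableEq F] (h2 : (2 : F) ≠ 0)
    (hm : 3 ≤ Fintype.card m) {r : ℕ} (hr : 3 ≤ r) :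
    ∑ A : Matrix m m F with A ≠ 0,
        √(Fintype.card F : ℝ) ^ (r * (Fintype.card m ^ 2 + anticommRank F A)) ≤
      distanceConstant (Fintype.card m) *
        (Fintype.card F : ℝ) ^ (r * Fintype.card m ^ 2 - (r - 2) * (Fintype.card m - 1)) := by
  obtain ⟨k, rfl⟩ := Nat.exists_eq_add_of_le hr
  have hmoment := sum_sqrt_pow_anticommRank_ne_zero_le h2 hm
  have hd {A : Matrix m m F} (hA : A ≠ 0) := anticommRank_add_le_of_ne_zero h2 (by omega) hA
  obtain ⟨l, hl⟩ := Nat.exists_eq_add_of_le' (show 1 ≤ Fintype.card m by omega)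
  rw [hl] at hmoment hd ⊢
  have hexp : (3 + k) * (l + 1) ^ 2 - (3 + k - 2) * (l + 1 - 1) =
      k * (l ^ 2 + l + 1) + (3 * l ^ 2 + 5 * l + 3) := by
    rw [show 3 + k - 2 = k + 1 by omega, Nat.add_sub_cancel]
    exact Nat.sub_eq_of_eq_add (by ring)
  have hexp₃ : 3 * (l + 1) ^ 2 - 2 * (l + 1 - 1) = 3 * l ^ 2 + 4 * l + 3 := by
    rw [Nat.add_sub_cancel]
    exact Nat.sub_eq_of_eq_add (by ring)
  rw [hexp₃] at hmoment
  rw [hexp, card_pow_eq_sqrt_card_pow]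
  set t := √(Fintype.card F : ℝ)
  calc _ ≤ ∑ A : Matrix m m F with A ≠ 0,
          t ^ (2 * k * (l ^ 2 + l + 1) + 3 * (l + 1) ^ 2) * t ^ (3 * anticommRank F A) := by
        refine Finset.sum_le_sum fun A hA => ?_
        rw [← pow_add]
        have := hd (Finset.mem_filter.1 hA).2
        exact pow_le_pow_right₀ (one_le_sqrt_card F) (by nlinarith)
    _ ≤ t ^ (2 * k * (l ^ 2 + l + 1) + 3 * (l + 1) ^ 2) *
          (distanceConstant (l + 1) * t ^ (3 * l ^ 2 + 4 * l + 3)) := by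
        rw [← Finset.mul_sum]
        gcongr
    _ = _ := by ring

theorem card_le_of_forall_sqDist_ne (h2 : (2 : F) ≠ 0) (hm : 3 ≤ Fintype.card m)
    (hι : 3 ≤ Fintype.card ι) {E : Finset (ι → Matrix m m F)} {T : Matrix m m F}
    (hT : ∀ X ∈ E, ∀ Y ∈ E, sqDist X Y ≠ T) :
    (E.card : ℝ) ≤
      distanceConstant (Fintype.card m) *
        (Fintype.card F : ℝ) ^
          (Fintype.card ι * Fintype.card m ^ 2 - (Fintype.card ι - 2) * (Fintype.card m - 1)) := by
  classical
  exact (card_le_sum_of_forall_sqDist_ne E T hT).trans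
    (sum_sqrt_pow_mul_add_anticommRank_ne_zero_le h2 hm hι)

end DistanceSets

end MatrixDistance

theorem falconer_general_rank_general.{u} (n r : ℕ) (hn : 3 ≤ n) (hr : 3 ≤ r) :
    ∃ c : ℝ, 0 < c ∧
      ∀ (F : Type u) [Field F] [Fintype F],
        Odd (Fintype.card F) →
        ∀ E : Finset (Fin r → Matrix (Fin n) (Fin n) F),
          c * (Fintype.card F : ℝ) ^
              ((r : ℝ) * (n : ℝ) ^ 2 - ((r : ℝ) - 2) * ((n : ℝ) - 1)) < (E.card : ℝ) →
          {T : Matrix (Fin n) (Fin n) F |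
              ∃ X ∈ E, ∃ Y ∈ E, ∑ i, (X i - Y i) ^ 2 = T} = Set.univ := by
  refine ⟨MatrixDistance.distanceConstant n, MatrixDistance.distanceConstant_pos n,
    fun F _ _ hF E hE => ?_⟩
  have hexp : ((r * n ^ 2 - (r - 2) * (n - 1) : ℕ) : ℝ) =
      (r : ℝ) * (n : ℝ) ^ 2 - ((r : ℝ) - 2) * ((n : ℝ) - 1) := by
    have hle : (r - 2) * (n - 1) ≤ r * n ^ 2 :=
      Nat.mul_le_mul (Nat.sub_le _ _) ((Nat.sub_le _ _).trans (Nat.le_self_pow two_ne_zero n))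
    rw [Nat.cast_sub hle]
    push_cast [Nat.cast_sub (show 2 ≤ r by omega), Nat.cast_sub (show 1 ≤ n by omega)]
    rfl
  rw [← hexp, Real.rpow_natCast] at hE
  refine Set.eq_univ_of_forall fun T => by_contra fun hT => hE.not_ge ?_
  simpa only [Fintype.card_fin] using MatrixDistance.card_le_of_forall_sqDist_ne
    (MatrixDistance.two_ne_zero_of_odd_card hF) (by rwa [Fintype.card_fin])
    (by rwa [Fintype.card_fin]) fun X hX Y hY hXY => hT ⟨X, hX, Y, hY, hXY⟩

/-- Theorem 1.6 (general rank Falconer): if `E ⊆ M_n(F_q)^r`, `n ≥ 3`, `r ≥ 3`, and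
`#E > c q^{rn² - (r-2)(n-1) + ε}`, then every matrix arises as a distance of `E`. -/
theorem falconer_general_rank (n r : ℕ) (hn : 3 ≤ n) (hr : 3 ≤ r) (ε : ℝ) (hε : 0 < ε) :
    ∃ c : ℝ, 0 < c ∧
      ∀ (F : Type) [Field F] [Fintype F],
        Odd (Fintype.card F) →
        ∀ E : Finset (Fin r → Matrix (Fin n) (Fin n) F),
          c * (Fintype.card F : ℝ) ^
              ((r : ℝ) * (n : ℝ) ^ 2 - ((r : ℝ) - 2) * ((n : ℝ) - 1) + ε) < (E.card : ℝ) →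
          {T : Matrix (Fin n) (Fin n) F |
              ∃ X ∈ E, ∃ Y ∈ E, ∑ i, (X i - Y i) ^ 2 = T} = Set.univ := by
  obtain ⟨c, hc, h⟩ := falconer_general_rank_general n r hn hr
  refine ⟨c, hc, fun F _ _ hF E hE => h F hF E (hE.trans_le' ?_)⟩
  gcongr
  exacts [Nat.one_le_cast.2 Fintype.card_pos, le_add_of_nonneg_right hε.le]
end

section
/- Let r ≥ 3 be an integer. There exists a constant c > 0 such that for every odd prime power q and every T ∈ M_3(𝔽_q), the matrix sphere σ_T ⊆ (M_3(𝔽_q))^r satisfies |#σ_T − q^{9(r−1)}| ≤ c·q^{7r−5}; in particular #σ_T ∼ q^{9r−9} as q → ∞. -/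
open scoped BigOperators

/-- The additive character `ψ(X) = exp((2πi/p)·Tr_{F/F_p}(Tr X))` on `n × n` matrices
over a finite field `F` of characteristic `p`. -/
noncomputable def psi (F : Type) [Field F] [Fintype F] {n : ℕ}
    (X : Matrix (Fin n) (Fin n) F) : ℂ :=
  letI : Algebra (ZMod (ringChar F)) F := ZMod.algebra _ _
  Complex.exp (2 * Real.pi * Complex.I *
    (((Algebra.trace (ZMod (ringChar F)) F X.trace).val : ℂ) / (ringChar F : ℂ)))

/-- The radical `{X : Tr(A(XY+YX)) = 0 for all Y}` of the quadratic form
`X ↦ Tr(AX²)` on `M_n(F)`. -/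
def radical (F : Type) [Field F] [Fintype F] {n : ℕ}
    (A : Matrix (Fin n) (Fin n) F) : Submodule F (Matrix (Fin n) (Fin n) F) where
  carrier := {X : Matrix (Fin n) (Fin n) F |
    ∀ Y : Matrix (Fin n) (Fin n) F, (A * (X * Y + Y * X)).trace = 0}
  zero_mem' := by intro Y; simp
  add_mem' := by
    intro X₁ X₂ h₁ h₂ Y
    have e : A * ((X₁ + X₂) * Y + Y * (X₁ + X₂))
        = A * (X₁ * Y + Y * X₁) + A * (X₂ * Y + Y * X₂) := by noncomm_ring
    show (A * ((X₁ + X₂) * Y + Y * (X₁ + X₂))).trace = 0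
    rw [e, Matrix.trace_add, h₁ Y, h₂ Y, add_zero]
  smul_mem' := by
    intro c X h Y
    have e : A * ((c • X) * Y + Y * (c • X)) = c • (A * (X * Y + Y * X)) := by
      rw [smul_mul_assoc, Matrix.mul_smul, ← smul_add, Matrix.mul_smul]
    show (A * ((c • X) * Y + Y * (c • X))).trace = 0
    rw [e, Matrix.trace_smul, h Y, smul_zero]

/-- The radical invariant `ρ_A`: the `F`-dimension of the radical of `X ↦ Tr(AX²)`. -/
noncomputable def rho (F : Type) [Field F] [Fintype F] {n : ℕ}
    (A : Matrix (Fin n) (Fin n) F) : ℕ :=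
  Module.finrank F (radical F A)

/-- The quadratic matrix Gauss sum `G(A,B) = Σ_X ψ(AX² + BX)`. -/
noncomputable def matGaussSum (F : Type) [Field F] [Fintype F] {n : ℕ}
    (A B : Matrix (Fin n) (Fin n) F) : ℂ :=
  ∑ X : Matrix (Fin n) (Fin n) F, psi F (A * X ^ 2 + B * X)

/-- The matrix sphere `σ_T = {X ∈ M_n(F)^r : X₁² + ⋯ + X_r² = T}`. -/
def matSphere (F : Type) [Field F] [Fintype F] [DecidableEq F] {n : ℕ} (r : ℕ)
    (T : Matrix (Fin n) (Fin n) F) : Finset (Fin r → Matrix (Fin n) (Fin n) F) :=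
  Finset.univ.filter (fun X => ∑ i, (X i) ^ 2 = T)

/-- The Fourier transform `f̂(M) = q^{-rn²} Σ_A f(A) conj(ψ(M·A))` on `M_n(F)^r`. -/
noncomputable def matFourier (F : Type) [Field F] [Fintype F] {n r : ℕ}
    (f : (Fin r → Matrix (Fin n) (Fin n) F) → ℂ)
    (M : Fin r → Matrix (Fin n) (Fin n) F) : ℂ :=
  ((Fintype.card F : ℂ) ^ (r * n ^ 2))⁻¹ *
    ∑ A : Fin r → Matrix (Fin n) (Fin n) F, f A * (starRingEnd ℂ) (psi F (∑ i, M i * A i))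

/-!
Orthogonality of the characters `X ↦ ψ(AX)` writes `q⁹ · #σ_T` as the sum over `A` of
`ψ(-AT) G(A, 0)^r`. The term `A = 0` gives the main term, and squaring the Gauss sum gives
`|G(A, 0)| ≤ q^((9 + ρ_A)/2)`, where `ρ_A` is the dimension of the radical `{X | AX + XA = 0}`.
It remains to see that large values of `ρ_A` are rare.

If `A` has a cyclic vector `v`, then `X ↦ Xv` is injective on the radical, so `ρ_A ≤ 3`; equality
forces `A` and `-A` to have the same characteristic polynomial, hence `tr A = det A = 0`. Otherwise
`A = g + u vᵀ`, and `ρ_A ≤ 1` unless `g = 0` or `2g + v · u = 0`. In these exceptional cases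
`ρ_A ≤ 4`, except that `ρ_A ≤ 5` when `g = v · u = 0`.

The strata `ρ_A ≠ 0` and `tr A = det A = 0` are counted by intersecting them with translates of the
scalar matrices and of a plane containing an invertible trace-zero matrix, the exceptional ones by
their parametrization by `(u, v)` up to scaling. A stratum of `O(q^m)` matrices with `ρ_A ≤ ρ`
contributes at most a multiple of `√q^((9 + ρ) r + 2m)`, and always
`(9 + ρ) r + 2m ≤ 14r + 8`, with equality for `ρ = 5`, `m = 4`.
-/

namespace MatrixSphere

open Matrix Module Polynomial

section GaussSums

variable (F : Type) [Field F] [Fintype F] {n : ℕ}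

/-- The character `psi` bundled as an additive character of the matrix algebra. -/
noncomputable def psiAddChar (n : ℕ) : AddChar (Matrix (Fin n) (Fin n) F) ℂ :=
  letI : Algebra (ZMod (ringChar F)) F := ZMod.algebra _ _
  haveI : NeZero (ringChar F) := ⟨CharP.ringChar_ne_zero_of_finite F⟩
  ZMod.stdAddChar.compAddMonoidHom
    ((Algebra.trace (ZMod (ringChar F)) F).toAddMonoidHom.comp (traceAddMonoidHom (Fin n) F))

lemma psiAddChar_apply (X : Matrix (Fin n) (Fin n) F) : psiAddChar F n X = psi F X := by
  have : NeZero (ringChar F) := ⟨CharP.ringChar_ne_zero_of_finite F⟩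
  simp [psiAddChar, psi, ZMod.stdAddChar_apply, ZMod.toCircle_apply, mul_div_assoc]

lemma psi_add (X Y : Matrix (Fin n) (Fin n) F) : psi F (X + Y) = psi F X * psi F Y := by
  simp only [← psiAddChar_apply, AddChar.map_add_eq_mul]

lemma psi_zero : psi F (0 : Matrix (Fin n) (Fin n) F) = 1 := by
  simp only [← psiAddChar_apply, AddChar.map_zero_eq_one]

lemma psi_neg (X : Matrix (Fin n) (Fin n) F) : psi F (-X) = starRingEnd ℂ (psi F X) := by
  simp only [← psiAddChar_apply, AddChar.map_neg_eq_conj]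

lemma norm_psi (X : Matrix (Fin n) (Fin n) F) : ‖psi F X‖ = 1 := by
  simp only [← psiAddChar_apply, AddChar.norm_apply]

lemma psi_sum {ι : Type*} (s : Finset ι) (X : ι → Matrix (Fin n) (Fin n) F) :
    psi F (∑ i ∈ s, X i) = ∏ i ∈ s, psi F (X i) := by
  classical
  induction s using Finset.induction_on with
  | empty => simp [psi_zero]
  | insert a s ha ih => rw [Finset.sum_insert ha, Finset.prod_insert ha, psi_add, ih]

lemma psi_congr_trace {X Y : Matrix (Fin n) (Fin n) F} (h : X.trace = Y.trace) :
    psi F X = psi F Y := by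
  rw [psi, psi, h]

lemma exists_psi_mul_ne_one {B : Matrix (Fin n) (Fin n) F} (hB : B ≠ 0) :
    ∃ A, psi F (A * B) ≠ 1 := by
  let : Algebra (ZMod (ringChar F)) F := ZMod.algebra _ _
  have : NeZero (ringChar F) := ⟨CharP.ringChar_ne_zero_of_finite F⟩
  obtain ⟨A, hA⟩ : ∃ A, (A * B).trace ≠ 0 := by
    by_contra! h
    exact hB (ext_iff_trace_mul_left.2 fun A => by simpa using h A)
  obtain ⟨c, hc⟩ := FiniteField.trace_to_zmod_nondegenerate F hA
  refine ⟨c • A, fun h => hc ?_⟩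
  rw [smul_mul_assoc, ← psiAddChar_apply] at h
  refine ZMod.injective_stdAddChar ?_
  simpa [psiAddChar, mul_comm] using h

lemma card_matrix : Fintype.card (Matrix (Fin n) (Fin n) F) = Fintype.card F ^ n ^ 2 := by
  rw [Module.card_eq_pow_finrank (K := F), finrank_matrix, finrank_self, Fintype.card_fin, mul_one,
    sq]

lemma sum_psi_mul [DecidableEq F] (B : Matrix (Fin n) (Fin n) F) :
    ∑ A, psi F (A * B) = if B = 0 then (Fintype.card F : ℂ) ^ n ^ 2 else 0 := by
  split_ifs with hB
  · simp [hB, psi_zero, card_matrix]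
  · obtain ⟨A, hA⟩ := exists_psi_mul_ne_one F hB
    have := AddChar.sum_eq_zero_of_ne_one
      (ψ := (psiAddChar F n).compAddMonoidHom (AddMonoidHom.mulRight B))
      (AddChar.ne_one_iff.2 ⟨A, by simpa [psiAddChar_apply] using hA⟩)
    simpa [psiAddChar_apply] using this

lemma mem_radical_iff {A X : Matrix (Fin n) (Fin n) F} :
    X ∈ radical F A ↔ A * X + X * A = 0 := by
  rw [ext_iff_trace_mul_right]
  refine forall_congr' fun Y => ?_
  rw [zero_mul, trace_zero, mul_add, trace_add, ← mul_assoc, ← mul_assoc, trace_mul_cycle A Y X,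
    ← trace_add, ← add_mul]

lemma card_filter_mem_radical [DecidableEq F] (A : Matrix (Fin n) (Fin n) F) :
    (Finset.univ.filter fun X => A * X + X * A = 0).card = Fintype.card F ^ rho F A := by
  rw [← Fintype.card_subtype, ← Nat.card_eq_fintype_card, ← Nat.card_eq_fintype_card (α := F), rho,
    ← Module.natCard_eq_pow_finrank]
  exact Nat.card_congr (Equiv.subtypeEquivRight fun X => (mem_radical_iff F).symm)

variable {F} in
lemma rho_le_finrank {A : Matrix (Fin n) (Fin n) F}
    {V : Type*} [AddCommGroup V] [Module F V] [FiniteDimensional F V]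
    (f : Matrix (Fin n) (Fin n) F →ₗ[F] V) (p : Submodule F V) (hp : ∀ X ∈ radical F A, f X ∈ p)
    (hf : ∀ X ∈ radical F A, f X = 0 → X = 0) : rho F A ≤ finrank F p :=
  LinearMap.finrank_le_finrank_of_injective (f := f.restrict hp)
    ((injective_iff_map_eq_zero _).2 fun X h => Subtype.ext (hf X X.2 (congrArg Subtype.val h)))

-- Substitute `X = Y + Z`: the terms quadratic in `Y` cancel.
lemma sum_psi_mul_sq_mul_conj (A Y : Matrix (Fin n) (Fin n) F) :
    ∑ X, psi F (A * X ^ 2) * starRingEnd ℂ (psi F (A * Y ^ 2)) =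
      ∑ Z, psi F (A * Z ^ 2) * psi F (Y * (A * Z + Z * A)) := by
  rw [← Equiv.sum_comp (Equiv.addRight Y)]
  refine Finset.sum_congr rfl fun Z _ => ?_
  rw [← psi_neg, ← psi_add, ← psi_add, Equiv.coe_addRight]
  refine psi_congr_trace F ?_
  have expand : A * (Z + Y) ^ 2 + -(A * Y ^ 2) = A * Z ^ 2 + (A * Z * Y + A * (Y * Z)) := by
    noncomm_ring
  rw [expand, mul_add, trace_add, trace_add, trace_add, trace_add, trace_mul_comm (A * Z),
    trace_mul_comm A (Y * Z), mul_assoc Y Z A]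

theorem norm_matGaussSum_zero_sq_le (A : Matrix (Fin n) (Fin n) F) :
    ‖matGaussSum F A 0‖ ^ 2 ≤ (Fintype.card F : ℝ) ^ (n ^ 2 + rho F A) := by
  classical
  have key : matGaussSum F A 0 * starRingEnd ℂ (matGaussSum F A 0) =
      ∑ Z ∈ Finset.univ.filter (fun Z => A * Z + Z * A = 0),
        psi F (A * Z ^ 2) * (Fintype.card F : ℂ) ^ n ^ 2 := by
    simp only [matGaussSum, zero_mul, add_zero]
    rw [map_sum, Finset.sum_mul_sum, Finset.sum_comm]
    simp only [sum_psi_mul_sq_mul_conj]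
    rw [Finset.sum_comm, Finset.sum_filter]
    refine Finset.sum_congr rfl fun Z _ => ?_
    rw [← Finset.mul_sum, sum_psi_mul, mul_ite, mul_zero]
  calc ‖matGaussSum F A 0‖ ^ 2 = ‖matGaussSum F A 0 * starRingEnd ℂ (matGaussSum F A 0)‖ := by
        rw [norm_mul, RCLike.norm_conj, sq]
    _ ≤ ∑ Z ∈ Finset.univ.filter (fun Z => A * Z + Z * A = 0),
        ‖psi F (A * Z ^ 2) * (Fintype.card F : ℂ) ^ n ^ 2‖ := key ▸ norm_sum_le _ _
    _ = (Fintype.card F : ℝ) ^ (n ^ 2 + rho F A) := by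
        simp [norm_psi, card_filter_mem_radical, pow_add, mul_comm]

theorem norm_matGaussSum_zero_le (A : Matrix (Fin n) (Fin n) F) :
    ‖matGaussSum F A 0‖ ≤ √(Fintype.card F : ℝ) ^ (n ^ 2 + rho F A) := by
  refine (pow_le_pow_iff_left₀ (norm_nonneg _) (by positivity) two_ne_zero).1 ?_
  rw [← pow_mul, mul_comm _ 2, pow_mul, Real.sq_sqrt (Nat.cast_nonneg _)]
  exact norm_matGaussSum_zero_sq_le F A

variable [DecidableEq F]

theorem card_mul_card_matSphere (r : ℕ) (T : Matrix (Fin n) (Fin n) F) :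
    (Fintype.card F : ℂ) ^ n ^ 2 * ((matSphere F r T).card : ℂ) =
      ∑ A, psi F (-(A * T)) * matGaussSum F A 0 ^ r := by
  have expand (A : Matrix (Fin n) (Fin n) F) : psi F (-(A * T)) * matGaussSum F A 0 ^ r =
      ∑ X : Fin r → Matrix (Fin n) (Fin n) F, psi F (A * (∑ i, X i ^ 2 - T)) := by
    rw [matGaussSum, Finset.sum_pow', Finset.mul_sum]
    simp only [zero_mul, add_zero, Fintype.piFinset_univ]
    refine Finset.sum_congr rfl fun X _ => ?_
    rw [← psi_sum, ← psi_add, mul_sub, Finset.mul_sum, neg_add_eq_sub]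
  simp only [expand]
  rw [Finset.sum_comm]
  simp only [sum_psi_mul, sub_eq_zero]
  rw [← Finset.sum_filter, Finset.sum_const, nsmul_eq_mul, mul_comm, matSphere]

theorem abs_card_matSphere_sub_le {r : ℕ} (hr : r ≠ 0) (T : Matrix (Fin n) (Fin n) F) :
    (Fintype.card F : ℝ) ^ n ^ 2 *
        |((matSphere F r T).card : ℝ) - (Fintype.card F : ℝ) ^ (n ^ 2 * (r - 1))| ≤
      ∑ A ∈ Finset.univ.erase (0 : Matrix (Fin n) (Fin n) F),
        √(Fintype.card F : ℝ) ^ ((n ^ 2 + rho F A) * r) := by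
  have main_term : psi F (-(0 * T)) * matGaussSum F (0 : Matrix (Fin n) (Fin n) F) 0 ^ r =
      (Fintype.card F : ℂ) ^ n ^ 2 * (Fintype.card F : ℂ) ^ (n ^ 2 * (r - 1)) := by
    rw [← pow_add, ← mul_one_add, Nat.add_sub_cancel' (Nat.one_le_iff_ne_zero.2 hr), pow_mul]
    simp [matGaussSum, psi_zero, card_matrix]
  have error_term : (Fintype.card F : ℂ) ^ n ^ 2 *
      (((matSphere F r T).card : ℂ) - (Fintype.card F : ℂ) ^ (n ^ 2 * (r - 1))) =
      ∑ A ∈ Finset.univ.erase 0, psi F (-(A * T)) * matGaussSum F A 0 ^ r := by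
    rw [mul_sub, card_mul_card_matSphere, ← Finset.add_sum_erase _ _ (Finset.mem_univ 0),
      main_term, add_sub_cancel_left]
  calc _ = ‖(Fintype.card F : ℂ) ^ n ^ 2 *
        (((matSphere F r T).card : ℂ) - (Fintype.card F : ℂ) ^ (n ^ 2 * (r - 1)))‖ := by
        rw [norm_mul, norm_pow, Complex.norm_natCast, ← Real.norm_eq_abs, ← Complex.norm_real]
        push_cast
        rfl
    _ ≤ ∑ A ∈ Finset.univ.erase 0, ‖psi F (-(A * T)) * matGaussSum F A 0 ^ r‖ :=
        error_term ▸ norm_sum_le _ _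
    _ ≤ _ := Finset.sum_le_sum fun A _ => by
        rw [norm_mul, norm_psi, one_mul, norm_pow, pow_mul]
        exact pow_le_pow_left₀ (norm_nonneg _) (norm_matGaussSum_zero_le F A) r

end GaussSums

section CyclicVectors

lemma semiconjBy_aeval {R S : Type*} [CommRing R] [Ring S] [Algebra R S] {x a b : S}
    (h : SemiconjBy x a b) (p : R[X]) : SemiconjBy x (aeval a p) (aeval b p) := by
  induction p using Polynomial.induction_on' with
  | add p q hp hq => simpa only [map_add] using hp.add_right hq
  | monomial k c =>
    simpa only [aeval_monomial] using
      SemiconjBy.mul_right (Algebra.commutes c x).symm (h.pow_right k)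

lemma exists_aeval_apply_eq_zero_iff {K V : Type*} [Field K] [AddCommGroup V] [Module K V]
    [FiniteDimensional K V] (f : End K V) :
    ∃ v, ∀ p : K[X], aeval f p v = 0 ↔ minpoly K f ∣ p := by
  obtain ⟨v, hv⟩ := exists_ker_toSpanSingleton_eq_annihilator (R := K[X]) (M := AEval K V f)
  refine ⟨(AEval.of K V f).symm v, fun p => ?_⟩
  rw [AEval.annihilator_eq_ker_aeval, minpoly.ker_aeval_eq_span_minpoly,
    Ideal.submodule_span_eq] at hv
  rw [← Ideal.mem_span_singleton, ← hv, LinearMap.mem_ker, LinearMap.toSpanSingleton_apply,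
    ← (AEval.of K V f).symm.map_eq_zero_iff, AEval.of_symm_smul]
  rfl

theorem exists_cyclic_vector_of_natDegree_minpoly {K V : Type*} [Field K] [AddCommGroup V]
    [Module K V] [FiniteDimensional K V] {f : End K V}
    (hf : (minpoly K f).natDegree = finrank K V) :
    ∃ v, ∀ w, ∃ p : K[X], aeval f p v = w := by
  obtain ⟨v, hv⟩ := exists_aeval_apply_eq_zero_iff f
  let evalAt : degreeLT K (finrank K V) →ₗ[K] V :=
    LinearMap.applyₗ v ∘ₗ (aeval f).toLinearMap ∘ₗ Submodule.subtype _
  have inj : Function.Injective evalAt := by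
    refine (injective_iff_map_eq_zero _).2 fun ⟨p, hp⟩ h0 => Subtype.ext ?_
    refine eq_zero_of_dvd_of_degree_lt ((hv p).1 h0) ?_
    rw [degree_eq_natDegree (minpoly.ne_zero (Algebra.IsIntegral.isIntegral f)), hf]
    exact mem_degreeLT.1 hp
  have surj : Function.Surjective evalAt := by
    have := LinearEquiv.finrank_eq (degreeLTEquiv K (finrank K V))
    exact (LinearMap.injective_iff_surjective_of_finrank_eq_finrank (by simp [this])).1 inj
  exact ⟨v, fun w => (surj w).imp' Subtype.val fun _ h => h⟩

variable {K ι : Type*} [Field K] [Fintype ι] [DecidableEq ι]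

theorem exists_cyclic_mulVec {A : Matrix ι ι K} (hA : (minpoly K A).natDegree = Fintype.card ι) :
    ∃ v, ∀ w, ∃ p : K[X], aeval A p *ᵥ v = w := by
  rw [← minpoly_toLin', ← Module.finrank_pi K] at hA
  obtain ⟨v, hv⟩ := exists_cyclic_vector_of_natDegree_minpoly hA
  refine ⟨v, fun w => (hv w).imp fun p hp => ?_⟩
  rw [← hp, ← toLin'_apply]
  exact (LinearMap.congr_fun (aeval_algHom_apply toLinAlgEquiv' A p) v).symm

lemma charpoly_eq_charpoly_neg_of_aeval_neg_eq_zero {A : Matrix ι ι K}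
    (hA : (minpoly K A).natDegree = Fintype.card ι)
    (h0 : aeval (-A) A.charpoly = 0) : (-A).charpoly = A.charpoly := by
  have deg : (minpoly K (-A)).natDegree = Fintype.card ι := by
    rw [minpoly.neg, ← C_1, ← C_neg, ← C_pow, natDegree_C_mul (by simp), natDegree_comp, hA]
    simp
  have monic := minpoly.monic (Algebra.IsIntegral.isIntegral (R := K) (-A))
  have eq_of_dvd {B : Matrix ι ι K} (h : minpoly K (-A) ∣ B.charpoly) :
      minpoly K (-A) = B.charpoly :=
    (eq_of_monic_of_dvd_of_natDegree_le monic (charpoly_monic B) h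
      (by rw [deg, charpoly_natDegree_eq_dim])).symm
  rw [← eq_of_dvd (minpoly.dvd K _ h0), eq_of_dvd (minpoly_dvd_charpoly (-A))]

end CyclicVectors

section CharpolyNeg

variable {R ι : Type*} [CommRing R] [NoZeroDivisors R] [Fintype ι] [DecidableEq ι]

lemma det_eq_zero_of_charpoly_neg_eq (h2 : (2 : R) ≠ 0) {A : Matrix ι ι R}
    (hι : Odd (Fintype.card ι)) (h : (-A).charpoly = A.charpoly) : A.det = 0 := by
  have := det_eq_sign_charpoly_coeff (-A)
  rw [h, ← det_eq_sign_charpoly_coeff, det_neg, hι.neg_one_pow] at this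
  refine (mul_eq_zero.1 (?_ : 2 * A.det = 0)).resolve_left h2
  linear_combination -this

lemma trace_eq_zero_of_charpoly_neg_eq [Nonempty ι] (h2 : (2 : R) ≠ 0) {A : Matrix ι ι R}
    (h : (-A).charpoly = A.charpoly) : A.trace = 0 := by
  have := trace_eq_neg_charpoly_coeff (-A)
  rw [h, ← trace_eq_neg_charpoly_coeff, trace_neg] at this
  refine (mul_eq_zero.1 (?_ : 2 * A.trace = 0)).resolve_left h2
  linear_combination -this

end CharpolyNeg

section CyclicRadical

variable {F : Type} [Field F] [Fintype F] {n : ℕ} {A : Matrix (Fin n) (Fin n) F}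

lemma semiconjBy_neg_of_mem_radical {X : Matrix (Fin n) (Fin n) F}
    (hX : X ∈ radical F A) : SemiconjBy X A (-A) := by
  rw [SemiconjBy, neg_mul, eq_neg_iff_add_eq_zero, add_comm]
  exact (mem_radical_iff F).1 hX

-- Elements `X` of the radical satisfy `XA = -AX`, so `X` is determined by `Xv` for a cyclic vector
-- `v` of `A`, and `Xv` is killed by the characteristic polynomial of `A` evaluated at `-A`.
theorem rho_le_finrank_ker_aeval_neg_charpoly (hA : (minpoly F A).natDegree = n) :
    rho F A ≤ finrank F (LinearMap.ker (toLin' (aeval (-A) A.charpoly))) := by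
  obtain ⟨v, hv⟩ := exists_cyclic_mulVec (A := A) (by rwa [Fintype.card_fin])
  have comm {X : Matrix (Fin n) (Fin n) F} (hX : X ∈ radical F A) (p : F[X]) :
      X * aeval A p = aeval (-A) p * X :=
    semiconjBy_aeval (semiconjBy_neg_of_mem_radical hX) p
  refine rho_le_finrank ((mulVecBilin F F).flip v) _ (fun X hX => ?_) fun X hX hXv => ?_
  · have : aeval (-A) A.charpoly * X = 0 := by rw [← comm hX, aeval_self_charpoly, mul_zero]
    simp [this]
  · refine toLin'.injective (LinearMap.ext fun w => ?_)
    obtain ⟨p, rfl⟩ := hv w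
    have hXv : X *ᵥ v = 0 := hXv
    rw [toLin'_apply, mulVec_mulVec, comm hX, ← mulVec_mulVec, hXv, mulVec_zero, map_zero,
      LinearMap.zero_apply]

theorem trace_eq_zero_and_det_eq_zero_of_le_rho (h2 : (2 : F) ≠ 0) (hn : Odd n)
    (hA : (minpoly F A).natDegree = n) (hρ : n ≤ rho F A) : A.trace = 0 ∧ A.det = 0 := by
  have : Nonempty (Fin n) := Fin.pos_iff_nonempty.1 hn.pos
  have ker_eq_top : LinearMap.ker (toLin' (aeval (-A) A.charpoly)) = ⊤ :=
    Submodule.eq_top_of_finrank_eq (le_antisymm (Submodule.finrank_le _)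
      (by simpa using hρ.trans (rho_le_finrank_ker_aeval_neg_charpoly hA)))
  have charpoly_neg : (-A).charpoly = A.charpoly :=
    charpoly_eq_charpoly_neg_of_aeval_neg_eq_zero (by rwa [Fintype.card_fin])
      (toLin'.map_eq_zero_iff.1 (LinearMap.ker_eq_top.1 ker_eq_top))
  exact ⟨trace_eq_zero_of_charpoly_neg_eq h2 charpoly_neg,
    det_eq_zero_of_charpoly_neg_eq h2 (by rwa [Fintype.card_fin]) charpoly_neg⟩

theorem rho_le_of_natDegree_minpoly (hA : (minpoly F A).natDegree = n) : rho F A ≤ n :=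
  (rho_le_finrank_ker_aeval_neg_charpoly hA).trans ((Submodule.finrank_le _).trans (by simp))

end CyclicRadical

section NonCyclic

variable {K ι : Type*} [Field K] [Fintype ι]

lemma exists_eq_vecMulVec_of_rank_le_one {κ : Type*} {A : Matrix κ ι K} (hA : A.rank ≤ 1) :
    ∃ u v, A = vecMulVec u v := by
  classical
  obtain ⟨u, hu⟩ := finrank_le_one_iff.1 hA
  choose v hv using fun j => hu ⟨A *ᵥ Pi.single j 1, LinearMap.mem_range_self A.mulVecLin _⟩
  refine ⟨u, v, ext fun i j => ?_⟩
  have := congrFun (congrArg Subtype.val (hv j)) i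
  simpa [vecMulVec_apply, mul_comm] using this.symm

variable [DecidableEq ι]

lemma exists_sq_eq_of_natDegree_minpoly_le_two (h2 : (2 : K) ≠ 0) {A : Matrix ι ι K}
    (hA : (minpoly K A).natDegree ≤ 2) : ∃ s D : K, (A - s • 1) ^ 2 = D • 1 := by
  set p : K[X] := minpoly K A * X ^ (2 - (minpoly K A).natDegree) with hp
  have minpoly_monic : (minpoly K A).Monic := minpoly.monic (Algebra.IsIntegral.isIntegral A)
  have p_monic : p.Monic := minpoly_monic.mul (monic_X_pow _)
  have p_natDegree : p.natDegree = 2 := by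
    rw [hp, minpoly_monic.natDegree_mul (monic_X_pow _), natDegree_X_pow, Nat.add_sub_cancel' hA]
  have root : aeval A p = 0 := by rw [hp, map_mul, minpoly.aeval, zero_mul]
  rw [p_monic.as_sum, p_natDegree] at root
  simp only [Finset.sum_range_succ, Finset.sum_range_zero, map_add, map_mul, aeval_C, map_pow,
    aeval_X, pow_zero, pow_one, mul_one, zero_add, Algebra.algebraMap_eq_smul_one,
    smul_mul_assoc, one_mul] at root
  refine ⟨-(p.coeff 1 / 2), (p.coeff 1 / 2) ^ 2 - p.coeff 0, ?_⟩
  have expand : (A - -(p.coeff 1 / 2) • (1 : Matrix ι ι K)) ^ 2 =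
      A ^ 2 + p.coeff 1 • A + (p.coeff 1 / 2) ^ 2 • (1 : Matrix ι ι K) := by
    simp only [sq, sub_mul, mul_sub, smul_mul_assoc, mul_smul_comm, one_mul, mul_one]
    match_scalars <;> field_simp
    ring
  rw [expand]
  linear_combination (norm := module) root

lemma isSquare_of_sq_eq_smul_one (hι : Odd (Fintype.card ι)) {B : Matrix ι ι K} {D : K}
    (hB : B ^ 2 = D • 1) : IsSquare D := by
  obtain ⟨k, hk⟩ := hι
  have det_sq : B.det ^ 2 = D ^ (2 * k + 1) := by rw [← det_pow, hB, det_smul, hk, det_one, mul_one]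
  obtain rfl | hD := eq_or_ne D 0
  · exact IsSquare.zero
  refine isSquare_iff_exists_sq _ |>.2 ⟨B.det / D ^ k, ?_⟩
  rw [div_pow, det_sq]
  field_simp
  ring

theorem exists_eq_smul_one_add_vecMulVec (h2 : (2 : K) ≠ 0) {A : Matrix (Fin 3) (Fin 3) K}
    (hA : (minpoly K A).natDegree ≠ 3) :
    ∃ (g : K) (u v : Fin 3 → K), A = g • 1 + vecMulVec u v := by
  have deg_le : (minpoly K A).natDegree ≤ 3 :=
    (natDegree_le_of_dvd (minpoly_dvd_charpoly A) (charpoly_monic A).ne_zero).trans_eq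
      (charpoly_natDegree_eq_dim A)
  obtain ⟨s, D, hD⟩ := exists_sq_eq_of_natDegree_minpoly_le_two h2 (A := A) (by omega)
  obtain ⟨d, rfl⟩ := isSquare_of_sq_eq_smul_one (by rw [Fintype.card_fin]; decide) hD
  have factor : (A - (s + d) • (1 : Matrix _ _ K)) * (A - (s - d) • (1 : Matrix _ _ K)) = 0 := by
    rw [← sub_eq_zero] at hD
    rw [← hD]
    simp only [sq, sub_mul, mul_sub, smul_mul_assoc, mul_smul_comm, one_mul, mul_one]
    module
  have rank_le := rank_add_rank_le_card_of_mul_eq_zero factor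
  rw [Fintype.card_fin] at rank_le
  obtain h | h : (A - (s + d) • (1 : Matrix _ _ K)).rank ≤ 1 ∨
      (A - (s - d) • (1 : Matrix _ _ K)).rank ≤ 1 := by omega
  all_goals
    obtain ⟨u, v, huv⟩ := exists_eq_vecMulVec_of_rank_le_one h
    exact ⟨_, u, v, sub_eq_iff_eq_add'.1 huv⟩

end NonCyclic

section ScalarAddRankOne

/-- `Matrix.submatrix` as a linear map, used to delete a row and a column. -/
def submatrixLinearMap (R : Type*) [Semiring R] {k l m n : Type*} (f : k → m) (g : l → n) :
    Matrix m n R →ₗ[R] Matrix k l R where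
  toFun X := X.submatrix f g
  map_add' _ _ := rfl
  map_smul' _ _ := rfl

lemma eq_zero_of_dotProduct_eq_zero_of_comp_succAbove {R : Type*} [Ring R] [NoZeroDivisors R]
    {n : ℕ} {u w : Fin (n + 1) → R} {i : Fin (n + 1)} (hi : u i ≠ 0) (h : u ⬝ᵥ w = 0)
    (hw : w ∘ i.succAbove = 0) : w = 0 := by
  have vanish (k : Fin n) : w (i.succAbove k) = 0 := congrFun hw k
  rw [dotProduct, Fin.sum_univ_succAbove _ i] at h
  simp only [vanish, mul_zero, Finset.sum_const_zero, add_zero, mul_eq_zero, hi, false_or] at h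
  exact funext (i.forall_iff_succAbove.2 ⟨h, vanish⟩)

lemma eq_zero_of_submatrix_succAbove_eq_zero {R : Type*} [CommRing R] [NoZeroDivisors R]
    {n : ℕ} {u v : Fin (n + 1) → R} {X : Matrix (Fin (n + 1)) (Fin (n + 1)) R}
    {i j : Fin (n + 1)} (hi : u i ≠ 0) (hj : v j ≠ 0) (hu : X *ᵥ u = 0) (hv : v ᵥ* X = 0)
    (hX : X.submatrix j.succAbove i.succAbove = 0) : X = 0 := by
  have row (k : Fin n) : X (j.succAbove k) = 0 :=
    eq_zero_of_dotProduct_eq_zero_of_comp_succAbove hi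
      (by rw [dotProduct_comm]; exact congrFun hu _) (congrFun hX k)
  have col (l : Fin (n + 1)) : (fun k => X k l) = 0 :=
    eq_zero_of_dotProduct_eq_zero_of_comp_succAbove hj (congrFun hv l)
      (funext fun k => congrFun (row k) l)
  exact ext fun k l => congrFun (col l) k

section

variable {F : Type} [Field F] [Fintype F] {n : ℕ} {g : F} {u v : Fin n → F}
  {X : Matrix (Fin n) (Fin n) F}

lemma smul_add_vecMulVec_eq_zero_of_mem_radical (hX : X ∈ radical F (g • 1 + vecMulVec u v)) :
    (2 * g) • X + vecMulVec u (v ᵥ* X) + vecMulVec (X *ᵥ u) v = 0 := by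
  have := (mem_radical_iff F).1 hX
  rw [add_mul, mul_add, vecMulVec_mul, mul_vecMulVec, smul_mul_assoc, mul_smul_comm, one_mul,
    mul_one] at this
  linear_combination (norm := module) this

lemma vecMul_of_mem_radical (hX : X ∈ radical F (g • 1 + vecMulVec u v)) :
    (2 * g + v ⬝ᵥ u) • (v ᵥ* X) + (v ⬝ᵥ X *ᵥ u) • v = 0 := by
  have := congrArg (v ᵥ* ·) (smul_add_vecMulVec_eq_zero_of_mem_radical hX)
  simp only [vecMul_add, vecMul_smul, vecMul_vecMulVec, vecMul_zero] at this
  linear_combination (norm := module) this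

lemma mulVec_of_mem_radical (hX : X ∈ radical F (g • 1 + vecMulVec u v)) :
    (2 * g + v ⬝ᵥ u) • (X *ᵥ u) + (v ⬝ᵥ X *ᵥ u) • u = 0 := by
  have := congrArg (· *ᵥ u) (smul_add_vecMulVec_eq_zero_of_mem_radical hX)
  simp only [add_mulVec, smul_mulVec, vecMulVec_mulVec, zero_mulVec, op_smul_eq_smul,
    ← dotProduct_mulVec] at this
  linear_combination (norm := module) this

theorem rho_smul_one_add_vecMulVec_le_one (h2 : (2 : F) ≠ 0) (hg : g ≠ 0)
    (ht : 2 * g + v ⬝ᵥ u ≠ 0) : rho F (g • 1 + vecMulVec u v) ≤ 1 := by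
  rw [← finrank_self F, ← finrank_top F F]
  refine rho_le_finrank (dotProductBilin F F v ∘ₗ (mulVecBilin F F).flip u) ⊤
    (fun _ _ => Submodule.mem_top) fun X hX h0 => ?_
  have h0 : v ⬝ᵥ X *ᵥ u = 0 := h0
  have hvX := vecMul_of_mem_radical hX
  have hXu := mulVec_of_mem_radical hX
  rw [h0, zero_smul, add_zero, smul_eq_zero_iff_right ht] at hvX hXu
  have := smul_add_vecMulVec_eq_zero_of_mem_radical hX
  rwa [hvX, hXu, vecMulVec_zero, zero_vecMulVec, add_zero, add_zero,
    smul_eq_zero_iff_right (mul_ne_zero h2 hg)] at this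

end

variable {F : Type} [Field F] [Fintype F] {n : ℕ} {g : F} {u v : Fin (n + 1) → F}

theorem rho_smul_one_add_vecMulVec_le_two_mul (h2 : (2 : F) ≠ 0) (hg : g ≠ 0)
    (ht : 2 * g + v ⬝ᵥ u = 0) : rho F (g • 1 + vecMulVec u v) ≤ 2 * n := by
  have h2g := mul_ne_zero h2 hg
  have hu : u ≠ 0 := by rintro rfl; simp [h2g] at ht
  have hv : v ≠ 0 := by rintro rfl; simp [h2g] at ht
  obtain ⟨i, hi⟩ := Function.ne_iff.1 hu
  obtain ⟨j, hj⟩ := Function.ne_iff.1 hv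
  have target : finrank F (⊤ : Submodule F ((Fin n → F) × (Fin n → F))) = 2 * n := by
    simp [two_mul]
  rw [← target]
  refine rho_le_finrank ((LinearMap.funLeft F F i.succAbove ∘ₗ vecMulBilin F F v).prod
    (LinearMap.funLeft F F j.succAbove ∘ₗ (mulVecBilin F F).flip u)) ⊤
    (fun _ _ => Submodule.mem_top) fun X hX h0 => ?_
  have hm := vecMul_of_mem_radical hX
  rw [ht, zero_smul, zero_add, smul_eq_zero_iff_left hv] at hm
  have hvX : v ᵥ* X = 0 := eq_zero_of_dotProduct_eq_zero_of_comp_succAbove hi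
    (by rwa [dotProduct_comm, ← dotProduct_mulVec]) (congrArg Prod.fst h0)
  have hXu : X *ᵥ u = 0 := eq_zero_of_dotProduct_eq_zero_of_comp_succAbove hj hm
    (congrArg Prod.snd h0)
  have := smul_add_vecMulVec_eq_zero_of_mem_radical hX
  rwa [hvX, hXu, vecMulVec_zero, zero_vecMulVec, add_zero, add_zero,
    smul_eq_zero_iff_right h2g] at this

theorem rho_vecMulVec_le_sq (h2 : (2 : F) ≠ 0) (ht : v ⬝ᵥ u ≠ 0) :
    rho F (vecMulVec u v) ≤ n ^ 2 := by
  have hu : u ≠ 0 := by rintro rfl; simp at ht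
  have hv : v ≠ 0 := by rintro rfl; simp at ht
  obtain ⟨i, hi⟩ := Function.ne_iff.1 hu
  obtain ⟨j, hj⟩ := Function.ne_iff.1 hv
  have target : finrank F (⊤ : Submodule F (Matrix (Fin n) (Fin n) F)) = n ^ 2 := by
    simp [finrank_matrix, sq]
  rw [← target]
  refine rho_le_finrank (submatrixLinearMap F j.succAbove i.succAbove) ⊤
    (fun _ _ => Submodule.mem_top) fun X hX h0 => ?_
  have hX : X ∈ radical F ((0 : F) • 1 + vecMulVec u v) := by rwa [zero_smul, zero_add]
  have hvX := vecMul_of_mem_radical hX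
  have hXu := mulVec_of_mem_radical hX
  rw [mul_zero, zero_add] at hvX hXu
  have hm : v ⬝ᵥ X *ᵥ u = 0 := by
    have := congrArg (v ⬝ᵥ ·) hXu
    simp only [dotProduct_add, dotProduct_smul, smul_eq_mul, dotProduct_zero] at this
    have : 2 * (v ⬝ᵥ u) * (v ⬝ᵥ X *ᵥ u) = 0 := by linear_combination this
    exact (mul_eq_zero.1 this).resolve_left (mul_ne_zero h2 ht)
  rw [hm, zero_smul, add_zero, smul_eq_zero_iff_right ht] at hvX hXu
  exact eq_zero_of_submatrix_succAbove_eq_zero hi hj hXu hvX h0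

theorem rho_vecMulVec_le_sq_add_one (hu : u ≠ 0) (hv : v ≠ 0) :
    rho F (vecMulVec u v) ≤ n ^ 2 + 1 := by
  obtain ⟨i, hi⟩ := Function.ne_iff.1 hu
  obtain ⟨j, hj⟩ := Function.ne_iff.1 hv
  have target : finrank F (⊤ : Submodule F (Matrix (Fin n) (Fin n) F × F)) = n ^ 2 + 1 := by
    simp [finrank_matrix, sq]
  rw [← target]
  refine rho_le_finrank ((submatrixLinearMap F j.succAbove i.succAbove).prod
    (LinearMap.proj j ∘ₗ vecMulBilin F F v)) ⊤ (fun _ _ => Submodule.mem_top) fun X hX h0 => ?_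
  have hX : X ∈ radical F ((0 : F) • 1 + vecMulVec u v) := by rwa [zero_smul, zero_add]
  have eqn := smul_add_vecMulVec_eq_zero_of_mem_radical hX
  rw [mul_zero, zero_smul, zero_add] at eqn
  have hXu : X *ᵥ u = 0 := by
    ext k
    have hvXj : (v ᵥ* X) j = 0 := congrArg Prod.snd h0
    have := congrFun (congrFun eqn k) j
    rw [Matrix.add_apply, vecMulVec_apply, vecMulVec_apply, hvXj, mul_zero, zero_add] at this
    exact (mul_eq_zero.1 this).resolve_right hj
  rw [hXu, zero_vecMulVec, add_zero, vecMulVec_eq_zero] at eqn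
  exact eq_zero_of_submatrix_succAbove_eq_zero hi hj hXu (eqn.resolve_left hu)
    (congrArg Prod.fst h0)

end ScalarAddRankOne

/-- The matrix `t (v · u) + u vᵀ` attached to the pair `p = (u, v)`. For `t = 0` and `t = -1/2` its
radical is exceptionally large. -/
def shiftedDyad {K : Type*} [CommRing K] {ι : Type*} [Fintype ι] [DecidableEq ι] (t : K)
    (p : (ι → K) × (ι → K)) : Matrix ι ι K :=
  (t * (p.2 ⬝ᵥ p.1)) • 1 + vecMulVec p.1 p.2

theorem rho_cases_of_ne_zero {F : Type} [Field F] [Fintype F] [DecidableEq F] (h2 : (2 : F) ≠ 0)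
    {A : Matrix (Fin 3) (Fin 3) F} (hA : A ≠ 0) :
    rho F A ≤ 2 ∨
    rho F A ≤ 3 ∧ A.trace = 0 ∧ A.det = 0 ∨
    rho F A ≤ 4 ∧ (∃ t ∈ ({0, -(1 / 2)} : Finset F), ∃ p, A = shiftedDyad t p) ∨
    rho F A ≤ 5 ∧ ∃ p, p.2 ⬝ᵥ p.1 = 0 ∧ A = shiftedDyad 0 p := by
  by_cases hdeg : (minpoly F A).natDegree = 3
  · obtain h | h := Nat.lt_or_ge (rho F A) 3
    · exact .inl (Nat.le_of_lt_succ h)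
    · exact .inr (.inl ⟨rho_le_of_natDegree_minpoly hdeg,
        trace_eq_zero_and_det_eq_zero_of_le_rho h2 (by decide) hdeg h⟩)
  obtain ⟨g, u, v, rfl⟩ := exists_eq_smul_one_add_vecMulVec h2 hdeg
  obtain rfl | hg := eq_or_ne g 0
  · have eq_dyad : (0 : F) • 1 + vecMulVec u v = shiftedDyad 0 (u, v) := by simp [shiftedDyad]
    rw [zero_smul, zero_add] at hA eq_dyad ⊢
    by_cases ht : v ⬝ᵥ u = 0
    · rw [ne_eq, vecMulVec_eq_zero, not_or] at hA
      exact .inr (.inr (.inr ⟨rho_vecMulVec_le_sq_add_one hA.1 hA.2, (u, v), ht, eq_dyad⟩))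
    · exact .inr (.inr (.inl ⟨rho_vecMulVec_le_sq h2 ht, 0, by simp, (u, v), eq_dyad⟩))
  · by_cases ht : 2 * g + v ⬝ᵥ u = 0
    · have hg_eq : g = -(1 / 2) * (v ⬝ᵥ u) := by field_simp; linear_combination ht
      exact .inr (.inr (.inl ⟨rho_smul_one_add_vecMulVec_le_two_mul h2 hg ht, -(1 / 2), by simp,
        (u, v), congrArg (· • 1 + vecMulVec u v) hg_eq⟩))
    · exact .inl ((rho_smul_one_add_vecMulVec_le_one h2 hg ht).trans one_le_two)

section Counting

lemma fst_ne_zero_of_shiftedDyad_ne_zero {K ι : Type*} [CommRing K] [Fintype ι] [DecidableEq ι]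
    {t : K} {p : (ι → K) × (ι → K)} (h : shiftedDyad t p ≠ 0) : p.1 ≠ 0 :=
  fun h0 => h (by simp [shiftedDyad, h0])

-- Double counting of the pairs `(x, B)` with `B + f x ∈ S`.
lemma card_mul_card_le_of_translates {V ι : Type*} [AddGroup V] [Fintype V] [DecidableEq V]
    [Fintype ι] (S : Finset V) (f : ι → V) (m : ℕ)
    (h : ∀ B, (Finset.univ.filter fun x => B + f x ∈ S).card ≤ m) :
    Fintype.card ι * S.card ≤ Fintype.card V * m := by
  refine Finset.card_mul_le_card_mul (fun x B => B + f x ∈ S) (fun x _ => ?_) fun B _ => h B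
  refine Finset.card_le_card_of_injOn (· - f x) (fun B hB => ?_) (sub_left_injective.injOn)
  simpa [Finset.bipartiteAbove] using hB

lemma card_mul_card_image_le {ι α β : Type*} [Fintype ι] [DecidableEq β] (s : Finset α)
    (φ : α → β) (act : ι → α → α) (mem : ∀ i, ∀ a ∈ s, act i a ∈ s)
    (inj : ∀ a ∈ s, Function.Injective (act · a)) (inv : ∀ i, ∀ a ∈ s, φ (act i a) = φ a) :
    Fintype.card ι * (s.image φ).card ≤ s.card := by
  refine Finset.mul_card_image_le_card _ _ fun b hb => ?_
  obtain ⟨a, ha, rfl⟩ := Finset.mem_image.1 hb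
  exact Finset.card_le_card_of_injOn (act · a)
    (fun i _ => Finset.mem_filter.2 ⟨mem i a ha, inv i a ha⟩) (inj a ha).injOn

variable {F : Type*} [Field F] [Fintype F]

lemma card_mul_card_image_le_of_smul_invariant {V W β : Type*} [AddCommGroup V] [Module F V]
    [AddCommGroup W] [Module F W] [DecidableEq β] (s : Finset (V × W)) (φ : V × W → β)
    (ne_zero : ∀ p ∈ s, p.1 ≠ 0) (mem : ∀ c : Fˣ, ∀ p ∈ s, (c • p.1, c⁻¹ • p.2) ∈ s)
    (inv : ∀ c : Fˣ, ∀ p ∈ s, φ (c • p.1, c⁻¹ • p.2) = φ p) :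
    Fintype.card F * (s.image φ).card ≤ 2 * s.card := by
  classical
  have units_le := card_mul_card_image_le s φ (fun (c : Fˣ) p => (c • p.1, c⁻¹ • p.2)) mem
    (fun p hp c c' h => Units.ext (smul_left_injective F (ne_zero p hp) (congrArg Prod.fst h))) inv
  have card_le : Fintype.card F ≤ 2 * Fintype.card Fˣ := by
    have := Fintype.one_lt_card (α := F)
    rw [Fintype.card_units]
    omega
  calc _ ≤ 2 * Fintype.card Fˣ * (s.image φ).card := Nat.mul_le_mul_right _ card_le
    _ ≤ 2 * s.card := by rw [mul_assoc]; exact Nat.mul_le_mul_left _ units_le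

variable [DecidableEq F]

lemma card_filter_dotProduct_eq_zero_le {n : ℕ} {u : Fin (n + 1) → F} (hu : u ≠ 0) :
    (Finset.univ.filter fun v => v ⬝ᵥ u = 0).card ≤ Fintype.card F ^ n := by
  obtain ⟨i, hi⟩ := Function.ne_iff.1 hu
  calc _ ≤ (Finset.univ : Finset (Fin n → F)).card := by
        refine Finset.card_le_card_of_injOn (· ∘ i.succAbove) (by simp) fun v hv w hw hvw => ?_
        rw [Finset.mem_coe, Finset.mem_filter_univ, dotProduct_comm] at hv hw
        refine sub_eq_zero.1 (eq_zero_of_dotProduct_eq_zero_of_comp_succAbove hi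
          (by rw [dotProduct_sub, hv, hw, sub_zero]) ?_)
        exact sub_eq_zero.2 hvw
    _ = Fintype.card F ^ n := by simp

lemma card_filter_ne_zero_and_dotProduct_eq_zero_le (n : ℕ) :
    (Finset.univ.filter fun p : (Fin (n + 1) → F) × (Fin (n + 1) → F) =>
      p.1 ≠ 0 ∧ p.2 ⬝ᵥ p.1 = 0).card ≤ Fintype.card F ^ (2 * n + 1) := by
  calc _ ≤ ∑ _ : Fin (n + 1) → F, Fintype.card F ^ n := by
        rw [Finset.card_eq_sum_card_fiberwise (f := Prod.fst) (t := Finset.univ) (by simp)]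
        refine Finset.sum_le_sum fun u _ => ?_
        obtain rfl | hu := eq_or_ne u 0
        · rw [Finset.filter_filter, Finset.filter_false_of_mem (by simp_all)]
          exact Nat.zero_le _
        refine le_trans (Finset.card_le_card_of_injOn Prod.snd ?_ ?_)
          (card_filter_dotProduct_eq_zero_le hu)
        · rintro ⟨u', v⟩ hp
          simp only [Finset.coe_filter, Finset.mem_filter, Finset.mem_univ, true_and,
            Set.mem_ofPred_eq] at hp ⊢
          exact hp.2 ▸ hp.1.2
        · rintro ⟨_, v⟩ hp ⟨_, w⟩ hq h
          simp_all
    _ = Fintype.card F ^ (2 * n + 1) := by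
        rw [Finset.sum_const, Finset.card_univ, Fintype.card_fun, Fintype.card_fin, smul_eq_mul]
        ring

lemma card_mul_card_image_shiftedDyad_le {n : ℕ} (t : F)
    (s : Finset ((Fin n → F) × (Fin n → F))) (ne_zero : ∀ p ∈ s, p.1 ≠ 0)
    (mem : ∀ c : Fˣ, ∀ p ∈ s, (c • p.1, c⁻¹ • p.2) ∈ s) :
    Fintype.card F * (s.image (shiftedDyad t)).card ≤ 2 * s.card :=
  card_mul_card_image_le_of_smul_invariant s _ ne_zero mem fun c p _ => by
    simp [shiftedDyad, smul_vecMulVec, vecMulVec_smul]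

theorem card_filter_shiftedDyad_le (n : ℕ) (T : Finset F) :
    (Finset.univ.filter fun A : Matrix (Fin (n + 1)) (Fin (n + 1)) F =>
      A ≠ 0 ∧ ∃ t ∈ T, ∃ p, A = shiftedDyad t p).card ≤
        T.card * (2 * Fintype.card F ^ (2 * n + 1)) := by
  set s := Finset.univ.filter fun p : (Fin (n + 1) → F) × (Fin (n + 1) → F) => p.1 ≠ 0 with hs
  have card_image_le (t : F) :
      (s.image (shiftedDyad t)).card ≤ 2 * Fintype.card F ^ (2 * n + 1) := by
    refine Nat.le_of_mul_le_mul_left ?_ (Fintype.card_pos (α := F))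
    calc _ ≤ 2 * s.card := card_mul_card_image_shiftedDyad_le t s (by simp [hs])
          (by simp [hs, smul_ne_zero_iff_ne])
      _ ≤ 2 * Fintype.card ((Fin (n + 1) → F) × (Fin (n + 1) → F)) :=
          Nat.mul_le_mul_left 2 (Finset.card_le_univ s)
      _ = _ := by
          rw [Fintype.card_prod, Fintype.card_fun, Fintype.card_fin]
          ring
  refine le_trans (Finset.card_le_card fun A hA => ?_)
    (Finset.card_biUnion_le_card_mul T (fun t => s.image (shiftedDyad t)) _
      fun t _ => card_image_le t)
  obtain ⟨hA, t, ht, p, rfl⟩ := (Finset.mem_filter_univ _).1 hA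
  exact Finset.mem_biUnion.2 ⟨t, ht, Finset.mem_image_of_mem _
    ((Finset.mem_filter_univ _).2 (fst_ne_zero_of_shiftedDyad_ne_zero hA))⟩

theorem card_filter_shiftedDyad_of_dotProduct_eq_zero_le (n : ℕ) (t : F) :
    (Finset.univ.filter fun A : Matrix (Fin (n + 1)) (Fin (n + 1)) F =>
      A ≠ 0 ∧ ∃ p, p.2 ⬝ᵥ p.1 = 0 ∧ A = shiftedDyad t p).card ≤ 2 * Fintype.card F ^ (2 * n) := by
  set s := Finset.univ.filter fun p : (Fin (n + 1) → F) × (Fin (n + 1) → F) =>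
    p.1 ≠ 0 ∧ p.2 ⬝ᵥ p.1 = 0 with hs
  refine Nat.le_of_mul_le_mul_left ?_ (Fintype.card_pos (α := F))
  calc _ ≤ Fintype.card F * (s.image (shiftedDyad t)).card := by
        refine Nat.mul_le_mul_left _ (Finset.card_le_card fun A hA => ?_)
        obtain ⟨hA, p, hp, rfl⟩ := (Finset.mem_filter_univ _).1 hA
        exact Finset.mem_image_of_mem _
          ((Finset.mem_filter_univ _).2 ⟨fst_ne_zero_of_shiftedDyad_ne_zero hA, hp⟩)
    _ ≤ 2 * s.card := card_mul_card_image_shiftedDyad_le t s (by simp +contextual [hs])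
        (by simp +contextual [hs, smul_ne_zero_iff_ne])
    _ ≤ _ := by
        rw [mul_left_comm, ← pow_succ']
        exact Nat.mul_le_mul_left 2 (card_filter_ne_zero_and_dotProduct_eq_zero_le n)

end Counting

lemma sum_pow_le_sum_card_mul_pow {α κ : Type*} [Fintype κ] {s : Finset α}
    {S : κ → Finset α} {w : α → ℕ} {a : κ → ℕ} {x : ℝ} (hx : 1 ≤ x)
    (h : ∀ A ∈ s, ∃ k, A ∈ S k ∧ w A ≤ a k) :
    ∑ A ∈ s, x ^ w A ≤ ∑ k, (S k).card * x ^ a k := by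
  classical
  have indicator_nonneg (A : α) (k : κ) : 0 ≤ if A ∈ S k then x ^ a k else 0 := by positivity
  calc ∑ A ∈ s, x ^ w A ≤ ∑ A ∈ s, ∑ k, if A ∈ S k then x ^ a k else 0 := by
        refine Finset.sum_le_sum fun A hA => ?_
        obtain ⟨k, hk, hw⟩ := h A hA
        refine le_trans ?_
          (Finset.single_le_sum (fun k _ => indicator_nonneg A k) (Finset.mem_univ k))
        rw [if_pos hk]
        exact pow_le_pow_right₀ hx hw
    _ = ∑ k, ∑ A ∈ s, if A ∈ S k then x ^ a k else 0 := Finset.sum_comm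
    _ ≤ ∑ k, (S k).card * x ^ a k := by
        refine Finset.sum_le_sum fun k _ => ?_
        rw [← Finset.sum_filter, Finset.sum_const, nsmul_eq_mul]
        gcongr
        exact fun A hA => (Finset.mem_filter.1 hA).2

lemma natCast_mul_sqrt_pow_le {q N C m a b : ℕ} (hq : 1 ≤ q) (hN : N ≤ C * q ^ m)
    (hab : a + 2 * m ≤ b) : (N : ℝ) * √(q : ℝ) ^ a ≤ C * √(q : ℝ) ^ b := by
  have one_le_sqrt : 1 ≤ √(q : ℝ) := Real.one_le_sqrt.2 (by exact_mod_cast hq)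
  calc (N : ℝ) * √(q : ℝ) ^ a ≤ (C * q ^ m : ℕ) * √(q : ℝ) ^ a := by gcongr
    _ = C * √(q : ℝ) ^ (a + 2 * m) := by
        rw [pow_add, pow_mul, Real.sq_sqrt q.cast_nonneg]
        push_cast
        ring
    _ ≤ C * √(q : ℝ) ^ b := by gcongr

section Strata

variable {F : Type} [Field F] [Fintype F]

-- A nonzero `X` in the radical of `B + x` satisfies `BX + XB = -2xX`.
lemma neg_two_mul_isRoot_charpoly_of_rho_ne_zero {n : ℕ} {B : Matrix (Fin n) (Fin n) F} {x : F}
    (h : rho F (B + x • 1) ≠ 0) :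
    (LinearMap.mulLeft F B + LinearMap.mulRight F B).charpoly.IsRoot (-(2 * x)) := by
  have radical_ne_bot : radical F (B + x • 1) ≠ ⊥ := fun hbot =>
    h (by rw [rho, hbot, finrank_bot])
  obtain ⟨X, hX, hX0⟩ := Submodule.exists_mem_ne_zero_of_ne_bot radical_ne_bot
  rw [← Module.End.hasEigenvalue_iff_isRoot_charpoly]
  refine Module.End.hasEigenvalue_of_hasEigenvector ⟨Module.End.mem_eigenspace_iff.2 ?_, hX0⟩
  rw [mem_radical_iff, add_mul, mul_add, smul_one_mul, mul_smul_one] at hX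
  simp only [LinearMap.add_apply, LinearMap.mulLeft_apply, LinearMap.mulRight_apply, neg_smul,
    two_mul, add_smul]
  exact eq_neg_of_add_eq_zero_left (by rw [← hX]; abel)

theorem card_mul_card_filter_rho_ne_zero_le (n : ℕ) (h2 : (2 : F) ≠ 0) :
    Fintype.card F * (Finset.univ.filter fun A : Matrix (Fin n) (Fin n) F => rho F A ≠ 0).card ≤
      Fintype.card F ^ n ^ 2 * n ^ 2 := by
  classical
  rw [← card_matrix F]
  refine card_mul_card_le_of_translates _ (fun x : F => x • 1) _ fun B => ?_
  set P := (LinearMap.mulLeft F B + LinearMap.mulRight F B).charpoly with hP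
  calc _ ≤ P.roots.toFinset.card := by
        refine Finset.card_le_card_of_injOn (fun x => -(2 * x)) (fun x hx => ?_)
          (neg_injective.comp (mul_right_injective₀ h2)).injOn
        rw [Finset.mem_coe, Finset.mem_filter_univ, Finset.mem_filter_univ] at hx
        simpa [LinearMap.charpoly_monic _ |>.ne_zero, hP] using
          neg_two_mul_isRoot_charpoly_of_rho_ne_zero hx
    _ ≤ P.natDegree := (Multiset.toFinset_card_le _).trans P.card_roots'
    _ = n ^ 2 := by simp [hP, LinearMap.charpoly_natDegree, finrank_matrix, sq]

lemma card_filter_rho_ne_zero_le (h2 : (2 : F) ≠ 0) :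
    (Finset.univ.filter fun A : Matrix (Fin 3) (Fin 3) F => rho F A ≠ 0).card ≤
      9 * Fintype.card F ^ 8 := by
  refine Nat.le_of_mul_le_mul_left ?_ (Fintype.card_pos (α := F))
  exact (card_mul_card_filter_rho_ne_zero_le 3 h2).trans_eq (by ring)

variable [DecidableEq F]

theorem card_sq_mul_card_filter_trace_eq_zero_and_det_eq_zero_le {n : ℕ}
    {D E : Matrix (Fin n) (Fin n) F} (hD : D.trace = 0) (hD' : IsUnit D.det) (hE : E.trace ≠ 0) :
    Fintype.card F ^ 2 * (Finset.univ.filter fun A : Matrix (Fin n) (Fin n) F =>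
      A.trace = 0 ∧ A.det = 0).card ≤ Fintype.card F ^ n ^ 2 * n := by
  rw [← card_matrix F, sq, ← Fintype.card_prod]
  refine card_mul_card_le_of_translates _ (fun p : F × F => p.1 • D + p.2 • E) _ fun B => ?_
  set y := -B.trace / E.trace with hy
  set P := (-(D⁻¹ * (B + y • E))).charpoly with hP
  have snd_eq {p : F × F} (hp : (B + (p.1 • D + p.2 • E)).trace = 0) : p.2 = y := by
    rw [trace_add, trace_add, trace_smul, trace_smul, hD, smul_zero, zero_add, smul_eq_mul] at hp
    rw [hy, eq_div_iff hE]
    linear_combination hp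
  have isRoot {x : F} (hx : (B + (x • D + y • E)).det = 0) : P.IsRoot x := by
    have : D * (scalar (Fin n) x - -(D⁻¹ * (B + y • E))) = B + (x • D + y • E) := by
      rw [sub_neg_eq_add, mul_add, mul_nonsing_inv_cancel_left _ _ hD', scalar_apply,
        ← smul_one_eq_diagonal, mul_smul_one]
      abel
    rw [IsRoot, hP, eval_charpoly]
    refine (mul_eq_zero_iff_left hD'.ne_zero).1 ?_
    rw [← det_mul, this, hx]
  calc _ ≤ P.roots.toFinset.card := by
        refine Finset.card_le_card_of_injOn Prod.fst (fun p hp => ?_) fun p hp p' hp' h => ?_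
        · rw [Finset.mem_coe, Finset.mem_filter_univ, Finset.mem_filter_univ] at hp
          obtain ⟨x, z⟩ := p
          obtain rfl := snd_eq hp.1
          simpa [(charpoly_monic _).ne_zero, hP] using isRoot hp.2
        · rw [Finset.mem_coe, Finset.mem_filter_univ, Finset.mem_filter_univ] at hp hp'
          exact Prod.ext h ((snd_eq hp.1).trans (snd_eq hp'.1).symm)
    _ ≤ P.natDegree := (Multiset.toFinset_card_le _).trans P.card_roots'
    _ = n := by rw [hP, charpoly_natDegree_eq_dim, Fintype.card_fin]

lemma card_filter_trace_eq_zero_and_det_eq_zero_le :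
    (Finset.univ.filter fun A : Matrix (Fin 3) (Fin 3) F => A.trace = 0 ∧ A.det = 0).card ≤
      3 * Fintype.card F ^ 7 := by
  refine Nat.le_of_mul_le_mul_left ?_ (pow_pos (Fintype.card_pos (α := F)) 2)
  exact (card_sq_mul_card_filter_trace_eq_zero_and_det_eq_zero_le
    (D := !![0, 1, 0; 0, 0, 1; 1, 0, 0]) (E := single 0 0 1) (by simp [trace_fin_three])
    (by simp [det_fin_three]) (by simp)).trans_eq (by ring)

variable (F) in
/-- A cover of the nonzero `3 × 3` matrices adapted to the size of their radicals: `ρ_A` is at most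
`0`, `2`, `3`, `4` and `5` on suitable parts of the successive members. The members overlap, which
only enlarges the upper bounds. -/
noncomputable def stratum : Fin 5 → Finset (Matrix (Fin 3) (Fin 3) F) := ![
  Finset.univ,
  Finset.univ.filter fun A => rho F A ≠ 0,
  Finset.univ.filter fun A => A.trace = 0 ∧ A.det = 0,
  Finset.univ.filter fun A =>
    A ≠ 0 ∧ ∃ t ∈ ({0, -(1 / 2)} : Finset F), ∃ p, A = shiftedDyad t p,
  Finset.univ.filter fun A => A ≠ 0 ∧ ∃ p, p.2 ⬝ᵥ p.1 = 0 ∧ A = shiftedDyad 0 p]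

lemma exists_mem_stratum_and_rho_le (h2 : (2 : F) ≠ 0) {A : Matrix (Fin 3) (Fin 3) F}
    (hA : A ≠ 0) : ∃ k, A ∈ stratum F k ∧ rho F A ≤ ![0, 2, 3, 4, 5] k := by
  obtain h | ⟨h, hS⟩ | ⟨h, hS⟩ | ⟨h, hS⟩ := rho_cases_of_ne_zero h2 hA
  · obtain h0 | h0 := eq_or_ne (rho F A) 0
    · exact ⟨0, Finset.mem_univ A, h0.le⟩
    · exact ⟨1, (Finset.mem_filter_univ A).2 h0, h⟩
  · exact ⟨2, (Finset.mem_filter_univ A).2 hS, h⟩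
  · exact ⟨3, (Finset.mem_filter_univ A).2 ⟨hA, hS⟩, h⟩
  · exact ⟨4, (Finset.mem_filter_univ A).2 ⟨hA, hS⟩, h⟩

lemma card_stratum_le (h2 : (2 : F) ≠ 0) (k : Fin 5) :
    (stratum F k).card ≤ ![1, 9, 3, 4, 2] k * Fintype.card F ^ ![9, 8, 7, 5, 4] k := by
  fin_cases k
  · exact (card_matrix F).le.trans_eq (one_mul _).symm
  · exact card_filter_rho_ne_zero_le h2
  · exact card_filter_trace_eq_zero_and_det_eq_zero_le
  · calc _ ≤ 2 * (2 * Fintype.card F ^ 5) := (card_filter_shiftedDyad_le 2 _).trans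
          (Nat.mul_le_mul_right _ Finset.card_le_two)
      _ = 4 * Fintype.card F ^ 5 := by ring
  · exact card_filter_shiftedDyad_of_dotProduct_eq_zero_le 2 0

theorem sum_sqrt_pow_rho_le (h2 : (2 : F) ≠ 0) {r : ℕ} (hr : 3 ≤ r) :
    ∑ A ∈ Finset.univ.erase (0 : Matrix (Fin 3) (Fin 3) F),
      √(Fintype.card F : ℝ) ^ ((9 + rho F A) * r) ≤ 19 * √(Fintype.card F : ℝ) ^ (14 * r + 8) := by
  have hq : 1 ≤ Fintype.card F := Fintype.card_pos
  calc _ ≤ ∑ k, (stratum F k).card *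
          √(Fintype.card F : ℝ) ^ ((9 + ![0, 2, 3, 4, 5] k) * r) := by
        refine sum_pow_le_sum_card_mul_pow (Real.one_le_sqrt.2 (by exact_mod_cast hq))
          fun A hA => ?_
        obtain ⟨k, hk, hρ⟩ := exists_mem_stratum_and_rho_le h2 (Finset.ne_of_mem_erase hA)
        exact ⟨k, hk, Nat.mul_le_mul_right r (Nat.add_le_add_left hρ 9)⟩
    _ ≤ ∑ k, (![1, 9, 3, 4, 2] k : ℕ) * √(Fintype.card F : ℝ) ^ (14 * r + 8) :=
        Finset.sum_le_sum fun k _ => natCast_mul_sqrt_pow_le hq (card_stratum_le h2 k)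
          (by fin_cases k <;> simp <;> omega)
    _ = 19 * √(Fintype.card F : ℝ) ^ (14 * r + 8) := by
        rw [← Finset.sum_mul]
        norm_num [Fin.sum_univ_succ]

end Strata

end MatrixSphere

/-- Proposition 4.2, size part: for `r ≥ 3`, `|#σ_T - q^{9(r-1)}| ≤ c q^{7r-5}`
uniformly over odd `q` and `T ∈ M_3(F_q)`. -/
theorem matSphere_card_rank_three (r : ℕ) (hr : 3 ≤ r) :
    ∃ c : ℝ, 0 < c ∧
      ∀ (F : Type) [Field F] [Fintype F] [DecidableEq F],
        Odd (Fintype.card F) →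
        ∀ T : Matrix (Fin 3) (Fin 3) F,
          |((matSphere F r T).card : ℝ) - (Fintype.card F : ℝ) ^ (9 * (r - 1))| ≤
            c * (Fintype.card F : ℝ) ^ (7 * r - 5) := by
  refine ⟨19, by norm_num, fun F _ _ _ hodd T => ?_⟩
  have h2 : (2 : F) ≠ 0 := Ring.two_ne_zero fun hchar =>
    Nat.not_even_iff_odd.2 hodd (Nat.even_iff.2 (FiniteField.even_card_of_char_two hchar))
  have hq : (0 : ℝ) < Fintype.card F := Nat.cast_pos.2 Fintype.card_pos
  refine le_of_mul_le_mul_left ?_ (pow_pos hq 9)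
  calc _ ≤ ∑ A ∈ Finset.univ.erase (0 : Matrix (Fin 3) (Fin 3) F),
          √(Fintype.card F : ℝ) ^ ((9 + rho F A) * r) :=
        MatrixSphere.abs_card_matSphere_sub_le F (by omega) T
    _ ≤ 19 * √(Fintype.card F : ℝ) ^ (2 * (9 + (7 * r - 5))) := by
        rw [show 2 * (9 + (7 * r - 5)) = 14 * r + 8 by omega]
        exact MatrixSphere.sum_sqrt_pow_rho_le h2 hr
    _ = (Fintype.card F : ℝ) ^ 9 * (19 * (Fintype.card F : ℝ) ^ (7 * r - 5)) := by
        rw [pow_mul, Real.sq_sqrt hq.le, pow_add]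
        ring
end
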